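/- Let M be a quantum channel from ℂ^{d_{A'}} ⊗ ℂ^{d_{B'}} to ℂ^{d_C} given by Kraus operators. Let ρ₁, ρ₂ be density operators on ℂ^{d_{A'}} and ℂ^{d_{B'}} with purifications |φ₁⟩ ∈ ℂ^{d_{A'}} ⊗ ℂ^{d_{A'}} and |φ₂⟩ ∈ ℂ^{d_{B'}} ⊗ ℂ^{d_{B'}} (unit vectors whose partial traces over the first factor equal ρ₁ resp. ρ₂), and set θ^{ABC} = (id_{AB} ⊗ M)(|φ₁⟩⟨φ₁| ⊗ |φ₂⟩⟨φ₂|), where A and B are the purifying factors and M acts on the two channel-input factors. Suppose R₁, R₂ ≥ 0 satisfy R₁ ≤ I(A;C|B)_θ, R₂ ≤ I(B;C|A)_θ, and R₁ + R₂ ≤ I(AB;C)_θ. Then for every ε > 0 and δ > 0 there exists n₀ such that for all n ≥ n₀ there exist completely positive trace-preserving maps E¹_k (k ∈ {1,…,⌊2^{n(R₁−δ)}⌋}) on matrices over (ℂ^{d_{A'}})^{⊗n}, completely positive trace-preserving maps E²_l (l ∈ {1,…,⌊2^{n(R₂−δ)}⌋}) on matrices over (ℂ^{d_{B'}})^{⊗n},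 and positive semidefinite matrices Λ_{k,l} on (ℂ^{d_C})^{⊗n} ⊗ (ℂ^{d_{A'}})^{⊗n} ⊗ (ℂ^{d_{B'}})^{⊗n} with ∑_{k,l} Λ_{k,l} ≤ I, such that for all k, l: Tr[Λ_{k,l} · ((M^{⊗n} ∘ (E¹_k ⊗ E²_l)) ⊗ id)(|φ₁⟩⟨φ₁|^{⊗n} ⊗ |φ₂⟩⟨φ₂|^{⊗n})] ≥ 1 − ε, where the encoders act on the channel-input factors and the identity on the purifying factors (up to the natural reordering of tensor factors). -/

import Mathlib

/-!
Random coding with unitary encoders and a square-root measurement, made uniform over all message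
pairs at the end.

Write the purifications as matrices `M₁`, `M₂` whose rows belong to the purifying systems `A`, `B`.
By the transpose trick (`exists_transpose_unitary`), a unitary on the rows of `M₁^{⊗n}` that permutes
the product eigenbasis with signs and preserves the eigenvalues equals a unitary on its columns, the
channel inputs. So encoding amounts to acting on the `A` and `B` parts of `θ^{⊗n}` (`output_state`),
and everything can be done with that one tripartite state. Averaging over these signed permutations
dephases and then spreads uniformly over each eigenspace. As there are polynomially many eigenvalues,
almost all the weight sits on eigenspaces of dimension at least about `2^{nH}`, where averaging is
dominated by `2^{-nH}` times the identity tensored with the marginal on the remaining systems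
(`twirl_basis`, `twirl_typ`).

The decoder is the square-root measurement built from rotated copies of one test `T`, a typical
projection of `ABC` sandwiched between typical projections of `B`, `AC`, `A` and `C`. The
Hayashi–Nagaoka inequality bounds its error by the probability that `T` fails, small by
typicality and gentle measurement, plus the probability of accepting a wrong codeword pair
(`packing`). If only the first, only the second, or both codewords are wrong, the twirling
inequalities bound the collision probability by about `2^{-n(H(A)+H(BC)-H(ABC))}`,
`2^{-n(H(B)+H(AC)-H(ABC))}` and `2^{-n(H(A)+H(B)+H(C)-H(ABC))}` (`tripartite_code`). Since `θ^{AB}`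
is a product state, these exponents are `I(A;C|B)`, `I(B;C|A)` and `I(AB;C)`, so a margin `δ` in the
rates makes all three terms vanish (`asymptotic`).

This controls the error averaged over codeword pairs. With two senders, bad pairs cannot simply be
discarded. Instead half of the first sender's words are dropped, after which each remaining word is
good on average over the second sender, and the second sender encodes each message by a random
choice among `(n + 1)²` codewords. An exponential-moment bound shows that some assignment of
codewords to messages makes the averaged error small for every pair simultaneously (`binning`). The
second encoder is therefore a mixture of unitaries, while the first is a unitary.
-/

open Matrix Kronecker ComplexOrder

noncomputable section

/-- outer product `|v⟩⟨v|`. -/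
def proj {ι : Type*} (v : ι → ℂ) : Matrix ι ι ℂ :=
  Matrix.of fun i j => v i * star (v j)

/-- partial trace over the first tensor factor. -/
def ptraceLeft {ι κ : Type*} [Fintype ι] (M : Matrix (ι × κ) (ι × κ) ℂ) : Matrix κ κ ℂ :=
  Matrix.of fun j j' => ∑ i, M (i, j) (i, j')

/-- von Neumann entropy (base 2), via the eigenvalues of a Hermitian matrix. -/
def vnEntropy {ι : Type*} [Fintype ι] [DecidableEq ι] (A : Matrix ι ι ℂ) : ℝ :=
  if h : A.IsHermitian then -∑ i, h.eigenvalues i * Real.logb 2 (h.eigenvalues i) else 0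

set_option linter.unusedSectionVars false

/-! ### Operator inequalities and the Hayashi–Nagaoka inequality -/

section HN
open scoped MatrixOrder Matrix.Norms.L2Operator

variable {ι : Type*} [Fintype ι] [DecidableEq ι]

/-- Real part of the trace. -/
def rtr {ι : Type*} [Fintype ι] (X : Matrix ι ι ℂ) : ℝ := X.trace.re

lemma rtr_add (X Y : Matrix ι ι ℂ) : rtr (X + Y) = rtr X + rtr Y := by simp [rtr]
lemma rtr_sub (X Y : Matrix ι ι ℂ) : rtr (X - Y) = rtr X - rtr Y := by simp [rtr]
lemma rtr_smul (c : ℝ) (X : Matrix ι ι ℂ) : rtr (c • X) = c * rtr X := by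
  simp [rtr, Matrix.trace_smul]
lemma rtr_sum {κ : Type*} (s : Finset κ) (f : κ → Matrix ι ι ℂ) :
    rtr (∑ k ∈ s, f k) = ∑ k ∈ s, rtr (f k) := by simp [rtr, Matrix.trace_sum]
lemma rtr_mul_comm {κ : Type*} [Fintype κ] (X : Matrix ι κ ℂ) (Y : Matrix κ ι ℂ) :
    rtr (X * Y) = rtr (Y * X) := by
  simp [rtr, Matrix.trace_mul_comm X Y]

lemma rtr_nonneg {X : Matrix ι ι ℂ} (h : 0 ≤ X) : 0 ≤ rtr X := by
  have := h.posSemidef.trace_nonneg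
  exact (Complex.nonneg_iff.mp this).1

/-- Conjugation by any rectangular matrix preserves the Loewner order; here the inequality `0 ≤ X`. -/
lemma conj_nonneg {κ : Type*} [Fintype κ] {X : Matrix ι ι ℂ} (h : 0 ≤ X) (Z : Matrix κ ι ℂ) :
    0 ≤ Z * X * Zᴴ := (h.posSemidef.mul_mul_conjTranspose_same Z).nonneg

lemma conj_mono {κ : Type*} [Fintype κ] {X Y : Matrix ι ι ℂ} (h : X ≤ Y) (Z : Matrix κ ι ℂ) :
    Z * X * Zᴴ ≤ Z * Y * Zᴴ := by
  have := conj_nonneg (sub_nonneg.mpr h) Z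
  rw [Matrix.mul_sub, Matrix.sub_mul] at this
  exact sub_nonneg.mp this

lemma rtr_mul_nonneg {X Y : Matrix ι ι ℂ} (hX : 0 ≤ X) (hY : 0 ≤ Y) : 0 ≤ rtr (X * Y) := by
  obtain ⟨B, rfl⟩ := CStarAlgebra.nonneg_iff_eq_star_mul_self.mp hY
  rw [← mul_assoc, rtr_mul_comm, ← mul_assoc]
  exact rtr_nonneg (conj_nonneg hX B)

lemma rtr_mul_mono_right {X Y Z : Matrix ι ι ℂ} (hX : 0 ≤ X) (h : Y ≤ Z) :
    rtr (X * Y) ≤ rtr (X * Z) := by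
  have := rtr_mul_nonneg hX (sub_nonneg.mpr h)
  rw [mul_sub, rtr_sub] at this; linarith

lemma rtr_mul_mono_left {X Y Z : Matrix ι ι ℂ} (hX : 0 ≤ X) (h : Y ≤ Z) :
    rtr (Y * X) ≤ rtr (Z * X) := by
  rw [rtr_mul_comm Y, rtr_mul_comm Z]; exact rtr_mul_mono_right hX h

lemma smul_nonneg_mat {c : ℝ} (hc : 0 ≤ c) {X : Matrix ι ι ℂ} (h : 0 ≤ X) : 0 ≤ c • X :=
  smul_nonneg hc h

lemma smul_mono_mat {c : ℝ} (hc : 0 ≤ c) {X Y : Matrix ι ι ℂ} (h : X ≤ Y) : c • X ≤ c • Y :=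
  smul_le_smul_of_nonneg_left h hc

/-- Operator form of `|a + b|² ≤ 2|a|² + 2|b|²`, weighted by `Z`: the difference of the two sides is
`(A - B) Z (A - B)ᴴ`. -/
lemma conj_add_le {κ : Type*} [Fintype κ] {Z : Matrix ι ι ℂ} (hZ : 0 ≤ Z) (A B : Matrix κ ι ℂ) :
    (A + B) * Z * (A + B)ᴴ ≤ (2 : ℝ) • (A * Z * Aᴴ) + (2 : ℝ) • (B * Z * Bᴴ) := by
  have h := conj_nonneg hZ (A - B)
  rw [← sub_nonneg]
  convert h using 1
  simp only [conjTranspose_add, conjTranspose_sub, Matrix.add_mul, Matrix.mul_add, Matrix.sub_mul,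
    Matrix.mul_sub, two_smul]
  abel

/-- The Hayashi–Nagaoka inequality `1 - S^{-1/2} T S^{-1/2} ≤ 2(1 - T) + 4(S - T)` for an invertible
`S ≥ T`; `R` is `S^{1/2}` and `Ri` its inverse. -/
lemma hayashi_nagaoka {S T : Matrix ι ι ℂ} (hT0 : 0 ≤ T) (hT1 : T ≤ 1) (hTS : T ≤ S)
    (R Ri : Matrix ι ι ℂ) (hR : R = CFC.sqrt S) (hRi : Ri * R = 1) (hRi' : R * Ri = 1)
    (hRiH : Riᴴ = Ri) :
    1 - Ri * T * Ri ≤ (2 : ℝ) • (1 - T) + (4 : ℝ) • (S - T) := by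
  have hS0 : 0 ≤ S := hT0.trans hTS
  have hRR : R * R = S := by rw [hR]; exact CFC.sqrt_mul_sqrt_self S
  have hRH : Rᴴ = R := by
    rw [hR]; exact (CFC.sqrt_nonneg S).posSemidef.isHermitian
  have hZ : 0 ≤ S - T := sub_nonneg.mpr hTS
  have h1 : 1 - Ri * T * Ri = ((Ri - 1) + 1) * (S - T) * ((Ri - 1) + 1)ᴴ := by
    have : Ri * S * Ri = 1 := by
      rw [← hRR, ← mul_assoc, hRi, one_mul, hRi']
    rw [sub_add_cancel, hRiH, mul_sub, sub_mul, this]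
  -- split `S^{-1/2} = (S^{-1/2} - 1) + 1` and expand
  have h2 := conj_add_le hZ (Ri - 1) 1
  rw [← h1] at h2
  have h3 : (Ri - 1) * (S - T) * (Ri - 1)ᴴ ≤ (Ri - 1) * S * (Ri - 1)ᴴ :=
    conj_mono (sub_le_self S hT0) _
  have h4 : (Ri - 1) * S * (Ri - 1)ᴴ = 1 + S - (2:ℝ) • R := by
    rw [conjTranspose_sub, hRiH, conjTranspose_one, ← hRR]
    have e1 : Ri * (R * R) = R := by rw [← mul_assoc, hRi, one_mul]
    have e2 : (R * R) * Ri = R := by rw [mul_assoc, hRi', mul_one]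
    rw [sub_mul, one_mul, e1, mul_sub, mul_one, sub_mul, hRi', e2, two_smul]
    abel
  -- `T ≤ T^{1/2}` since `T ≤ 1`, and the square root is operator monotone
  have h5 : T ≤ R := by
    have : T ≤ CFC.sqrt T := by
      have a1 : CFC.sqrt T ≤ 1 := by
        have := CFC.sqrt_le_sqrt T 1 hT1
        simpa using this
      have e : CFC.sqrt T * CFC.sqrt T = T := CFC.sqrt_mul_sqrt_self T
      have a0 := CFC.sqrt_nonneg T
      set Q := CFC.sqrt T
      obtain ⟨B, hB⟩ : ∃ B : Matrix ι ι ℂ, B = CFC.sqrt Q := ⟨_, rfl⟩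
      have hBB : B * B = Q := by rw [hB]; exact CFC.sqrt_mul_sqrt_self Q
      have hBH : Bᴴ = B := by
        rw [hB]; exact (CFC.sqrt_nonneg Q).posSemidef.isHermitian
      have := conj_mono a1 B
      rw [hBH, mul_one, hBB, ← hBB] at this
      calc T = Q * Q := e.symm
        _ = B * (B * B) * B := by rw [← hBB]; simp only [mul_assoc]
        _ ≤ B * B := this
        _ = Q := hBB
    exact this.trans (by rw [hR]; exact CFC.sqrt_le_sqrt T S hTS)
  have h6 : 1 + S - (2:ℝ) • R ≤ (1 - T) + (S - T) := by
    have := smul_mono_mat (by norm_num : (0:ℝ) ≤ 2) h5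
    calc 1 + S - (2:ℝ) • R ≤ 1 + S - (2:ℝ) • T := sub_le_sub_left this _
      _ = _ := by rw [two_smul]; abel
  refine h2.trans ?_
  have h7 := smul_mono_mat (by norm_num : (0:ℝ) ≤ 2) ((h3.trans h4.le).trans h6)
  refine (add_le_add_left h7 _).trans (le_of_eq ?_)
  simp only [one_mul, conjTranspose_one, mul_one]
  module

/-- The square-root measurement `S^{-1/2} T_k S^{-1/2}`, with the Hayashi–Nagaoka bound on its error
operators. The term `η • 1` is added to `∑ T_k` to make `S` invertible. -/
lemma exists_povm {κ : Type*} [Fintype κ] [DecidableEq κ] (T : κ → Matrix ι ι ℂ)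
    (hT0 : ∀ k, 0 ≤ T k)
    (hT1 : ∀ k, T k ≤ 1) {η : ℝ} (hη : 0 < η) :
    ∃ Λ : κ → Matrix ι ι ℂ, (∀ k, 0 ≤ Λ k) ∧ (∑ k, Λ k ≤ 1) ∧
      ∀ k, 1 - Λ k ≤ (2 : ℝ) • (1 - T k) +
        (4 : ℝ) • (∑ k' ∈ Finset.univ.erase k, T k' + η • (1 : Matrix ι ι ℂ)) := by
  set S : Matrix ι ι ℂ := ∑ k, T k + η • 1 with hS
  have hsum : 0 ≤ ∑ k, T k := Finset.sum_nonneg fun k _ => hT0 k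
  have hη1 : 0 ≤ η • (1 : Matrix ι ι ℂ) := smul_nonneg_mat hη.le zero_le_one
  have hS0 : 0 ≤ S := add_nonneg hsum hη1
  have hSpd : S.PosDef := by
    refine Matrix.PosDef.posSemidef_add hsum.posSemidef ?_
    exact Matrix.PosDef.one.smul hη
  obtain ⟨R, hR⟩ : ∃ R : Matrix ι ι ℂ, R = CFC.sqrt S := ⟨_, rfl⟩
  have hRR : R * R = S := by rw [hR]; exact CFC.sqrt_mul_sqrt_self S
  have hRH : Rᴴ = R := by
    rw [hR]; exact (CFC.sqrt_nonneg S).posSemidef.isHermitian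
  have hRu : IsUnit R := by
    have hSu := hSpd.isUnit
    rw [Matrix.isUnit_iff_isUnit_det] at hSu ⊢
    rw [← hRR, det_mul] at hSu
    exact isUnit_of_mul_isUnit_left hSu
  have hdet := (Matrix.isUnit_iff_isUnit_det _).mp hRu
  have hRi : R⁻¹ * R = 1 := Matrix.nonsing_inv_mul _ hdet
  have hRi' : R * R⁻¹ = 1 := Matrix.mul_nonsing_inv _ hdet
  have hRiH : (R⁻¹)ᴴ = R⁻¹ := by rw [Matrix.conjTranspose_nonsing_inv, hRH]
  refine ⟨fun k => R⁻¹ * T k * R⁻¹, fun k => ?_, ?_, fun k => ?_⟩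
  · have := conj_nonneg (hT0 k) R⁻¹
    rwa [hRiH] at this
  · rw [← Finset.sum_mul, ← Finset.mul_sum]
    have h := conj_mono (le_add_of_nonneg_right hη1 : ∑ k, T k ≤ S) R⁻¹
    rw [hRiH] at h
    refine h.trans (le_of_eq ?_)
    rw [← hS, ← hRR, ← mul_assoc, hRi, one_mul, hRi']
  · have hk : T k ≤ S := by
      have : T k ≤ ∑ k, T k := Finset.single_le_sum (fun k _ => hT0 k) (Finset.mem_univ k)
      exact this.trans (le_add_of_nonneg_right hη1)
    have := hayashi_nagaoka (hT0 k) (hT1 k) hk R R⁻¹ hR hRi hRi' hRiH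
    refine this.trans (le_of_eq ?_)
    rw [hS, ← Finset.add_sum_erase _ _ (Finset.mem_univ k)]
    congr 2
    abel
end HN

/-! ### Packing for a finite ensemble of encodings -/

section Packing
open scoped MatrixOrder

variable {ι : Type*} [Fintype ι] [DecidableEq ι]

/-- Averaging a function of a random codebook `c` can start with resampling the single codeword
`c k`: a bound valid for every choice of the other codewords passes to the total average. -/
lemma sum_le_of_update {κ G : Type*} [Fintype κ] [DecidableEq κ] [Fintype G] [Nonempty G]
    (F : (κ → G) → ℝ) (k : κ) (b : ℝ)
    (h : ∀ c, ∑ g, F (Function.update c k g) ≤ Fintype.card G * b) :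
    ∑ c, F c ≤ Fintype.card (κ → G) * b := by
  let e : (κ → G) × G ≃ (κ → G) × G :=
    { toFun := fun p => (Function.update p.1 k p.2, p.1 k)
      invFun := fun p => (Function.update p.1 k p.2, p.1 k)
      left_inv := fun p => by simp
      right_inv := fun p => by simp }
  have h1 : ∑ p : (κ → G) × G, F (e p).1 = ∑ p : (κ → G) × G, F p.1 :=
    Equiv.sum_comp e (fun p => F p.1)
  rw [Fintype.sum_prod_type, Fintype.sum_prod_type] at h1
  have h2 : ∑ c : κ → G, ∑ g, F (e (c, g)).1 ≤ ∑ c : κ → G, (Fintype.card G * b : ℝ) :=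
    Finset.sum_le_sum fun c _ => h c
  rw [h1] at h2
  simp only [Finset.sum_const, Finset.card_univ, nsmul_eq_mul] at h2
  rw [← Finset.mul_sum] at h2
  have hG : (0 : ℝ) < Fintype.card G := by exact_mod_cast Fintype.card_pos
  refine le_of_mul_le_mul_left ?_ hG
  linarith

/-- A pinching-type inequality: up to a factor `2`, `Θ` is dominated by its two diagonal blocks. -/
lemma pinch_le {Θ q : Matrix ι ι ℂ} (hΘ : 0 ≤ Θ) (hq : qᴴ = q) :
    Θ ≤ (2 : ℝ) • (q * Θ * q) + (2 : ℝ) • ((1 - q) * Θ * (1 - q)) := by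
  have := conj_add_le hΘ q (1 - q)
  simpa [hq] using this

lemma rtr_conj_unitary {W : Matrix ι ι ℂ} (hW : Wᴴ * W = 1) (X : Matrix ι ι ℂ) :
    rtr (W * X * Wᴴ) = rtr X := by
  rw [rtr_mul_comm, ← mul_assoc, hW, one_mul]

/-- One-shot random coding. Codewords are unitaries drawn independently from the commuting families
`W₁` and `W₂` and applied to the fixed state `Θ`; the decoder is the square-root measurement of the
rotated tests `T`. The hypotheses `h1`, `h2`, `h3` bound the averages of the state or of the test over
the codewords that are independent of the sent pair, so the average error over all codebooks is
small, and some codebook attains this average. The projection `q` cuts `Θ` down to its typical part,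
which is what makes `h1` possible. -/
lemma packing {κ₁ κ₂ G H : Type*} [Fintype κ₁] [DecidableEq κ₁] [Fintype κ₂] [DecidableEq κ₂]
    [Fintype G] [Nonempty G] [Fintype H] [Nonempty H]
    (W₁ : G → Matrix ι ι ℂ) (W₂ : H → Matrix ι ι ℂ)
    (hW₁ : ∀ g, (W₁ g)ᴴ * W₁ g = 1) (hW₂ : ∀ h, (W₂ h)ᴴ * W₂ h = 1)
    (hc : ∀ g h, W₁ g * W₂ h = W₂ h * W₁ g)
    (T Θ q : Matrix ι ι ℂ) (hT0 : 0 ≤ T) (hT1 : T ≤ 1) (hΘ : 0 ≤ Θ) (hΘ1 : rtr Θ = 1)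
    (hq : qᴴ = q) (hqq : q * q = q)
    {α₁ α₂ α₃ τ η : ℝ} (hα₁ : 0 ≤ α₁) (hα₂ : 0 ≤ α₂) (hα₃ : 0 ≤ α₃) (hη : 0 < η)
    (h1 : ∑ g, W₁ g * (q * Θ * q) * (W₁ g)ᴴ ≤ (Fintype.card G * α₁ : ℝ) • 1)
    (h2 : ∑ h, W₂ h * T * (W₂ h)ᴴ ≤ (Fintype.card H * α₂ : ℝ) • 1)
    (h3 : ∑ g, W₁ g * (∑ h, W₂ h * T * (W₂ h)ᴴ) * (W₁ g)ᴴ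
      ≤ (Fintype.card G * Fintype.card H * α₃ : ℝ) • 1)
    (hτ : rtr T ≤ τ) :
    ∃ (c : κ₁ → G) (d : κ₂ → H) (Λ : κ₁ × κ₂ → Matrix ι ι ℂ), (∀ k, 0 ≤ Λ k) ∧ (∑ k, Λ k ≤ 1) ∧
      ∑ k : κ₁ × κ₂, rtr ((1 - Λ k) * ((W₁ (c k.1) * W₂ (d k.2)) * Θ *
        (W₁ (c k.1) * W₂ (d k.2))ᴴ)) ≤ (Fintype.card κ₁ * Fintype.card κ₂ : ℝ) *
        (4 * rtr ((1 - T) * (q * Θ * q)) + 2 * rtr ((1 - q) * Θ) + 8 * η +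
          8 * (Fintype.card κ₁ * (α₁ * τ) + Fintype.card κ₂ * α₂ +
            Fintype.card κ₁ * Fintype.card κ₂ * α₃)) := by
  classical
  set S := q * Θ * q with hS
  have hS0 : 0 ≤ S := by
    have := conj_nonneg hΘ q
    rwa [hq] at this
  have h1q : 0 ≤ 1 - q := by
    have : 1 - q = (1 - q) * (1 - q)ᴴ := by
      simp [hq, mul_sub, sub_mul, hqq]
    rw [this]
    exact (posSemidef_self_mul_conjTranspose _).nonneg
  have hτ0 : 0 ≤ τ := (rtr_nonneg hT0).trans hτ
  have hS1 : rtr S ≤ 1 := by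
    rw [hS, rtr_mul_comm, ← mul_assoc, hqq]
    have := rtr_mul_nonneg h1q hΘ
    rw [sub_mul, one_mul, rtr_sub, hΘ1] at this
    linarith
  let W : G → H → Matrix ι ι ℂ := fun g h => W₁ g * W₂ h
  have hW : ∀ g h, (W g h)ᴴ * W g h = 1 := fun g h => by
    simp only [W, conjTranspose_mul]
    rw [mul_assoc, ← mul_assoc (W₁ g)ᴴ, hW₁, one_mul, hW₂]
  have hW' : ∀ g h, W g h * (W g h)ᴴ = 1 := fun g h => mul_eq_one_comm.mp (hW g h)
  have hW₂' : ∀ h, W₂ h * (W₂ h)ᴴ = 1 := fun h => mul_eq_one_comm.mp (hW₂ h)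
  have hW₁' : ∀ h, W₁ h * (W₁ h)ᴴ = 1 := fun h => mul_eq_one_comm.mp (hW₁ h)
  let Tc : G → H → Matrix ι ι ℂ := fun g h => W g h * T * (W g h)ᴴ
  let Sc : G → H → Matrix ι ι ℂ := fun g h => W g h * S * (W g h)ᴴ
  have hTc0 : ∀ g h, 0 ≤ Tc g h := fun g h => conj_nonneg hT0 _
  have hTc1 : ∀ g h, Tc g h ≤ 1 := fun g h => by
    have := conj_mono hT1 (W g h)
    rwa [mul_one, hW'] at this
  have hSc0 : ∀ g h, 0 ≤ Sc g h := fun g h => conj_nonneg hS0 _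
  have hScτ : ∀ g h, rtr (Sc g h) ≤ 1 := fun g h => by
    rw [rtr_conj_unitary (hW g h)]; exact hS1
  let f : G → H → G → H → ℝ := fun g' h' g h => rtr (Tc g' h' * Sc g h)
  have hf0 : ∀ g' h' g h, 0 ≤ f g' h' g h := fun g' h' g h => rtr_mul_nonneg (hTc0 _ _) (hSc0 _ _)
  -- wrong first message, right second one: average the state over `W₁`
  have F1 : ∀ g' h' h, ∑ g, f g' h' g h ≤ Fintype.card G * (α₁ * τ) := by
    intro g' h' h
    have e : ∑ g, Sc g h = W₂ h * (∑ g, W₁ g * S * (W₁ g)ᴴ) * (W₂ h)ᴴ := by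
      rw [Finset.mul_sum, Finset.sum_mul]
      refine Finset.sum_congr rfl fun g _ => ?_
      simp only [Sc, W]
      rw [hc, conjTranspose_mul]
      simp only [mul_assoc]
    have e2 : ∑ g, Sc g h ≤ (Fintype.card G * α₁ : ℝ) • 1 := by
      rw [e]
      refine (conj_mono h1 (W₂ h)).trans (le_of_eq ?_)
      rw [mul_smul_comm, smul_mul_assoc, mul_one, hW₂']
    have e3 := rtr_mul_mono_right (hTc0 g' h') e2
    rw [Finset.mul_sum, rtr_sum, mul_smul_comm, mul_one, rtr_smul,
      rtr_conj_unitary (hW g' h')] at e3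
    refine e3.trans ?_
    have : (0:ℝ) ≤ Fintype.card G * α₁ := by positivity
    nlinarith
  -- wrong second message: average the test over `W₂`
  have F2 : ∀ g' g h, ∑ h', f g' h' g h ≤ Fintype.card H * α₂ := by
    intro g' g h
    have e : ∑ h', Tc g' h' = W₁ g' * (∑ h, W₂ h * T * (W₂ h)ᴴ) * (W₁ g')ᴴ := by
      rw [Finset.mul_sum, Finset.sum_mul]
      refine Finset.sum_congr rfl fun g _ => ?_
      simp only [Tc, W]
      rw [conjTranspose_mul]
      simp only [mul_assoc]
    have e2 : ∑ h', Tc g' h' ≤ (Fintype.card H * α₂ : ℝ) • 1 := by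
      rw [e]
      refine (conj_mono h2 (W₁ g')).trans (le_of_eq ?_)
      rw [mul_smul_comm, smul_mul_assoc, mul_one, hW₁']
    have e3 := rtr_mul_mono_left (hSc0 g h) e2
    rw [Finset.sum_mul, rtr_sum, smul_mul_assoc, one_mul, rtr_smul] at e3
    refine e3.trans ?_
    have : (0:ℝ) ≤ Fintype.card H * α₂ := by positivity
    nlinarith [hScτ g h]
  -- both messages wrong: average the test over `W₁` and `W₂`
  have F3 : ∀ g h, ∑ g', ∑ h', f g' h' g h ≤ Fintype.card G * (Fintype.card H * α₃) := by
    intro g h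
    have e : ∑ g', ∑ h', Tc g' h' ≤ (Fintype.card G * Fintype.card H * α₃ : ℝ) • 1 := by
      refine (le_of_eq ?_).trans h3
      refine Finset.sum_congr rfl fun g' _ => ?_
      rw [Finset.mul_sum, Finset.sum_mul]
      refine Finset.sum_congr rfl fun g _ => ?_
      simp only [Tc, W]
      rw [conjTranspose_mul]
      simp only [mul_assoc]
    have e3 := rtr_mul_mono_left (hSc0 g h) e
    simp_rw [Finset.sum_mul, rtr_sum, smul_mul_assoc, one_mul, rtr_smul] at e3
    refine e3.trans ?_
    have : (0:ℝ) ≤ Fintype.card G * Fintype.card H * α₃ := by positivity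
    nlinarith [hScτ g h]
  -- the measurement attached to each code
  have hex := fun (c : κ₁ → G) (d : κ₂ → H) =>
    exists_povm (fun k : κ₁ × κ₂ => Tc (c k.1) (d k.2)) (fun k => hTc0 _ _) (fun k => hTc1 _ _) hη
  choose Λ hΛ0 hΛs hΛb using hex
  let err : (κ₁ → G) → (κ₂ → H) → κ₁ × κ₂ → ℝ := fun c d k =>
    rtr ((1 - Λ c d k) * (W (c k.1) (d k.2) * Θ * (W (c k.1) (d k.2))ᴴ))
  have hΛ1 : ∀ c d k, Λ c d k ≤ 1 := fun c d k =>
    (Finset.single_le_sum (fun k _ => hΛ0 c d k) (Finset.mem_univ k)).trans (hΛs c d)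
  -- error of one message pair: the off-`q` part of the state, plus the Hayashi–Nagaoka bound on `S`
  have herr : ∀ c d k, err c d k ≤ 4 * rtr ((1 - T) * S) + 2 * rtr ((1 - q) * Θ) + 8 * η +
      8 * ∑ k' ∈ Finset.univ.erase k, f (c k'.1) (d k'.2) (c k.1) (d k.2) := by
    intro c d k
    set w := W (c k.1) (d k.2) with hw
    have hw1 : wᴴ * w = 1 := hW _ _
    have a1 := conj_mono (pinch_le hΘ hq) w
    have hL : 0 ≤ 1 - Λ c d k := sub_nonneg.mpr (hΛ1 c d k)
    have a2 := rtr_mul_mono_right hL a1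
    have a3 : rtr ((1 - Λ c d k) * (w * ((1 - q) * Θ * (1 - q)) * wᴴ)) ≤ rtr ((1 - q) * Θ) := by
      have p0 : 0 ≤ w * ((1 - q) * Θ * (1 - q)) * wᴴ := by
        refine conj_nonneg ?_ w
        have := conj_nonneg hΘ (1 - q)
        simpa [hq] using this
      have := rtr_mul_mono_left p0 (sub_le_self 1 (hΛ0 c d k))
      refine this.trans (le_of_eq ?_)
      rw [one_mul, rtr_conj_unitary hw1, rtr_mul_comm, ← mul_assoc]
      simp [mul_sub, sub_mul, hqq]
    have a4 := rtr_mul_mono_left (hSc0 (c k.1) (d k.2)) (hΛb c d k)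
    have a5 : rtr ((1 - Tc (c k.1) (d k.2)) * Sc (c k.1) (d k.2)) = rtr ((1 - T) * S) := by
      have hw' : w * wᴴ = 1 := hW' _ _
      have : (1 - Tc (c k.1) (d k.2)) * Sc (c k.1) (d k.2) = w * ((1 - T) * S) * wᴴ := by
        simp only [Tc, Sc, ← hw]
        have : 1 - w * T * wᴴ = w * (1 - T) * wᴴ := by
          rw [mul_sub, sub_mul, mul_one, hw']
        rw [this]
        calc w * (1 - T) * wᴴ * (w * S * wᴴ) = w * (1 - T) * (wᴴ * w) * S * wᴴ := by
              simp only [mul_assoc]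
          _ = _ := by rw [hw1]; simp only [mul_assoc, one_mul]
      rw [this, rtr_conj_unitary hw1]
    simp only [add_mul, smul_mul_assoc, rtr_add, rtr_smul, a5, Finset.sum_mul, rtr_sum,
      one_mul] at a4
    simp only [mul_add, add_mul, mul_smul_comm, smul_mul_assoc, rtr_add, rtr_smul] at a2
    have a6 := hScτ (c k.1) (d k.2)
    have a7 : η * rtr (Sc (c k.1) (d k.2)) ≤ η := by nlinarith
    have a8 : rtr ((1 - Λ c d k) * (w * S * wᴴ)) = rtr ((1 - Λ c d k) * Sc (c k.1) (d k.2)) := rfl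
    have a9 : err c d k = rtr ((1 - Λ c d k) * (w * Θ * wᴴ)) := rfl
    rw [a9]
    simp only [f]
    linarith
  set B := 4 * rtr ((1 - T) * S) + 2 * rtr ((1 - q) * Θ) + 8 * η with hB
  have hsum : ∀ k : κ₁ × κ₂, ∑ c : κ₁ → G, ∑ d : κ₂ → H, ∑ k' ∈ Finset.univ.erase k,
      f (c k'.1) (d k'.2) (c k.1) (d k.2) ≤
      (Fintype.card (κ₁ → G) * Fintype.card (κ₂ → H) : ℝ) *
       (Fintype.card κ₁ * (α₁ * τ) + Fintype.card κ₂ * α₂ +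
            Fintype.card κ₁ * Fintype.card κ₂ * α₃) := by
    intro k
    have e : ∑ c : κ₁ → G, ∑ d : κ₂ → H, ∑ k' ∈ Finset.univ.erase k,
      f (c k'.1) (d k'.2) (c k.1) (d k.2) = ∑ k' ∈ Finset.univ.erase k,
       ∑ c : κ₁ → G, ∑ d : κ₂ → H, f (c k'.1) (d k'.2) (c k.1) (d k.2) := by
      rw [Finset.sum_comm]
      simp_rw [Finset.sum_comm (s := Finset.univ.erase k)]
      rw [Finset.sum_comm]
    rw [e]
    have hb : ∀ k' ∈ Finset.univ.erase k,
       ∑ c : κ₁ → G, ∑ d : κ₂ → H, f (c k'.1) (d k'.2) (c k.1) (d k.2) ≤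
       (Fintype.card (κ₁ → G) * Fintype.card (κ₂ → H) : ℝ) *
        ((if k'.2 = k.2 then α₁ * τ else 0) + (if k'.1 = k.1 then α₂ else 0) + α₃) := by
      intro k' hk'
      have hne : k' ≠ k := (Finset.mem_erase.mp hk').1
      have hα1τ : 0 ≤ α₁ * τ := mul_nonneg hα₁ hτ0
      -- the independent codewords of `k'` and `k` decide which of the three averages applies
      by_cases e2 : k'.2 = k.2
      · have e1 : k'.1 ≠ k.1 := fun h => hne (Prod.ext h e2)
        rw [Finset.sum_comm]
        have : ∀ d : κ₂ → H, ∑ c : κ₁ → G, f (c k'.1) (d k'.2) (c k.1) (d k.2) ≤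
          Fintype.card (κ₁ → G) * (α₁ * τ) := by
          intro d
          refine sum_le_of_update _ k.1 _ fun c => ?_
          simp only [Function.update_self, Function.update_of_ne e1]
          exact F1 _ _ _
        refine (Finset.sum_le_sum fun d _ => this d).trans ?_
        rw [Finset.sum_const, Finset.card_univ, nsmul_eq_mul, if_pos e2, if_neg e1]
        have : (0:ℝ) ≤ (Fintype.card (κ₁ → G) * Fintype.card (κ₂ → H) : ℝ) * α₃ := by positivity
        nlinarith
      · by_cases e1 : k'.1 = k.1
        · have : ∀ c : κ₁ → G, ∑ d : κ₂ → H, f (c k'.1) (d k'.2) (c k.1) (d k.2) ≤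
            Fintype.card (κ₂ → H) * α₂ := by
            intro d
            refine sum_le_of_update _ k'.2 _ fun c => ?_
            simp only [Function.update_self, Function.update_of_ne (Ne.symm e2)]
            exact F2 _ _ _
          refine (Finset.sum_le_sum fun d _ => this d).trans ?_
          rw [Finset.sum_const, Finset.card_univ, nsmul_eq_mul, if_pos e1, if_neg e2]
          have : (0:ℝ) ≤ (Fintype.card (κ₁ → G) * Fintype.card (κ₂ → H) : ℝ) * α₃ := by positivity
          nlinarith
        · have : ∑ c : κ₁ → G, ∑ d : κ₂ → H, f (c k'.1) (d k'.2) (c k.1) (d k.2) ≤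
            Fintype.card (κ₁ → G) * (Fintype.card (κ₂ → H) * α₃) := by
            refine sum_le_of_update _ k'.1 _ fun c => ?_
            rw [Finset.sum_comm]
            have : ∑ d : κ₂ → H, ∑ g, f (Function.update c k'.1 g k'.1) (d k'.2)
               (Function.update c k'.1 g k.1) (d k.2) ≤
               Fintype.card (κ₂ → H) * (Fintype.card G * α₃) := by
              refine sum_le_of_update _ k'.2 _ fun d => ?_
              simp only [Function.update_self, Function.update_of_ne (Ne.symm e2),
                Function.update_of_ne (Ne.symm e1)]
              rw [Finset.sum_comm]
              refine (F3 _ _).trans (le_of_eq ?_)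
              ring
            refine this.trans (le_of_eq ?_)
            ring
          refine this.trans (le_of_eq ?_)
          rw [if_neg e1, if_neg e2]; ring
    refine (Finset.sum_le_sum hb).trans ?_
    rw [← Finset.mul_sum]
    refine mul_le_mul_of_nonneg_left ?_ (by positivity)
    have hα1τ : 0 ≤ α₁ * τ := mul_nonneg hα₁ hτ0
    refine (Finset.sum_le_sum_of_subset_of_nonneg (Finset.erase_subset _ _)
      (fun k' _ _ => ?_)).trans ?_
    · have : ∀ (p : Prop) [Decidable p] (x : ℝ), 0 ≤ x → 0 ≤ if p then x else 0 := by
        intro p _ x hx; split_ifs <;> simp [hx]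
      exact add_nonneg (add_nonneg (this _ _ hα1τ) (this _ _ hα₂)) hα₃
    · rw [Finset.sum_add_distrib, Finset.sum_add_distrib]
      refine le_of_eq ?_
      congr 1
      · congr 1
        · rw [Fintype.sum_prod_type]; simp
        · rw [Fintype.sum_prod_type, Finset.sum_comm]; simp
      · simp [Fintype.card_prod]
  have htot : ∑ p : (κ₁ → G) × (κ₂ → H), ∑ k, err p.1 p.2 k ≤
     ∑ p : (κ₁ → G) × (κ₂ → H), (Fintype.card κ₁ * Fintype.card κ₂ : ℝ) *
      (B + 8 * (Fintype.card κ₁ * (α₁ * τ) + Fintype.card κ₂ * α₂ +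
            Fintype.card κ₁ * Fintype.card κ₂ * α₃)) := by
    rw [Finset.sum_comm]
    have : ∀ k, ∑ p : (κ₁ → G) × (κ₂ → H), err p.1 p.2 k ≤
      (Fintype.card (κ₁ → G) * Fintype.card (κ₂ → H) : ℝ) *
       (B + 8 * (Fintype.card κ₁ * (α₁ * τ) + Fintype.card κ₂ * α₂ +
            Fintype.card κ₁ * Fintype.card κ₂ * α₃)) := by
      intro k
      refine (Finset.sum_le_sum fun p _ => herr p.1 p.2 k).trans ?_
      rw [Finset.sum_add_distrib, ← Finset.mul_sum, Fintype.sum_prod_type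
        (f := fun p : (κ₁ → G) × (κ₂ → H) => ∑ k' ∈ Finset.univ.erase k,
          f (p.1 k'.1) (p.2 k'.2) (p.1 k.1) (p.2 k.2))]
      have := hsum k
      simp only [Finset.sum_const, Finset.card_univ, nsmul_eq_mul, Fintype.card_prod, Nat.cast_mul]
      linarith
    refine (Finset.sum_le_sum fun k _ => this k).trans (le_of_eq ?_)
    simp only [Finset.sum_const, Finset.card_univ, nsmul_eq_mul, Fintype.card_prod, Nat.cast_mul]
    ring
  -- some codebook is at least as good as the average
  obtain ⟨p, -, hp⟩ := Finset.exists_le_of_sum_le Finset.univ_nonempty htot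
  exact ⟨p.1, p.2, Λ p.1 p.2, hΛ0 _ _, hΛs _ _, hp⟩
end Packing

/-! ### Derandomization by expurgation and binning -/

section Binning

/-- The chord bound for `exp` on `[0, 1]`. -/
lemma exp_le_one_add_two_mul {x : ℝ} (h0 : 0 ≤ x) (h1 : x ≤ 1) : Real.exp x ≤ 1 + 2 * x := by
  have := convexOn_exp.2 (Set.mem_univ (0:ℝ)) (Set.mem_univ (1:ℝ)) (sub_nonneg.mpr h1) h0 (by ring)
  simp only [smul_eq_mul, mul_zero, mul_one, zero_add, Real.exp_zero] at this
  have := Real.exp_one_lt_three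
  nlinarith

/-- From an average error to a uniform one. Given errors `e k j s` averaging to at most `β / 2` over
`2M × J × L` codewords, keep `M` first words whose own average is at most `β` (Markov), and permute
the second index independently for every `s` by a cyclic shift. For a fixed pair `(k, j)` the errors
`e k (π s j) s` are then independent over `s` with total mean at most `L β`, so their sum exceeds
`3 L β` with probability at most `exp (-L β)`; when `log (M J) < L β` a union bound over all pairs
leaves a choice of shifts that serves every pair at once. -/
lemma binning {κ : Type*} [Fintype κ] [DecidableEq κ] (M J L : ℕ) (hJ : 0 < J)
    (hM : 0 < M) (hκ : Fintype.card κ = 2 * M) (e : κ → Fin J → Fin L → ℝ)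
    (he0 : ∀ k j s, 0 ≤ e k j s) (he1 : ∀ k j s, e k j s ≤ 1) {β : ℝ} (hβ : 0 < β)
    (havg : ∑ k, ∑ j, ∑ s, e k j s ≤ M * J * L * β)
    (hlog : Real.log (M * J) < L * β) :
    ∃ (r : Fin M ↪ κ) (π : Fin L → Equiv.Perm (Fin J)),
      ∀ k j, ∑ s, e (r k) (π s j) s ≤ L * (3 * β) := by
  classical
  have hL : 0 < L := by
    rcases Nat.eq_zero_or_pos L with rfl | h
    · have : (1:ℝ) ≤ M * J := by exact_mod_cast Nat.mul_pos hM hJ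
      have := Real.log_nonneg this
      simp at hlog; linarith
    · exact h
  have : NeZero J := ⟨hJ.ne'⟩
  let good : Finset κ := Finset.univ.filter fun k => ∑ j, ∑ s, e k j s ≤ J * L * β
  have hJL : (0:ℝ) < J * L * β := by positivity
  -- Markov: fewer than `M + 1` of the `2M` indices can exceed twice the average
  have hgood : M ≤ good.card := by
    by_contra! hlt
    have hbad : M < (Finset.univ.filter fun k => ¬ (∑ j, ∑ s, e k j s ≤ J * L * β)).card := by
      have := Finset.card_filter_add_card_filter_not (s := (Finset.univ : Finset κ))
        (fun k => ∑ j, ∑ s, e k j s ≤ J * L * β)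
      rw [Finset.card_univ, hκ] at this
      simp only [good] at hlt
      omega
    have h1 : ((Finset.univ.filter fun k => ¬ (∑ j, ∑ s, e k j s ≤ J * L * β)).card : ℝ) *
        (J * L * β) ≤ ∑ k, ∑ j, ∑ s, e k j s := by
      rw [← nsmul_eq_mul]
      refine (Finset.card_nsmul_le_sum _ _ _ ?_).trans
        (Finset.sum_le_sum_of_subset_of_nonneg (Finset.filter_subset _ _) ?_)
      · intro k hk
        exact (not_le.mp (Finset.mem_filter.mp hk).2).le
      · intro k _ _
        exact Finset.sum_nonneg fun j _ => Finset.sum_nonneg fun s _ => he0 k j s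
    have h2 : (M:ℝ) < (Finset.univ.filter fun k => ¬ (∑ j, ∑ s, e k j s ≤ J * L * β)).card := by
      exact_mod_cast hbad
    nlinarith
  obtain ⟨t, ht, htc⟩ := Finset.exists_subset_card_eq hgood
  let r : Fin M ↪ κ := (t.equivFinOfCardEq htc).symm.toEmbedding.trans (Function.Embedding.subtype _)
  have hr : ∀ k, ∑ j, ∑ s, e (r k) j s ≤ J * L * β := fun k =>
    (Finset.mem_filter.mp (ht ((t.equivFinOfCardEq htc).symm k).2)).2
  -- exponential moments over independent uniform shifts
  have hmom : ∀ k j, ∑ τ : Fin L → Fin J, Real.exp (∑ s, e (r k) (τ s + j) s) ≤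
      (J : ℝ) ^ L * Real.exp (2 * (L * β)) := by
    intro k j
    have e1 : ∑ τ : Fin L → Fin J, Real.exp (∑ s, e (r k) (τ s + j) s) =
        ∏ s, ∑ t, Real.exp (e (r k) t s) := by
      simp_rw [Real.exp_sum]
      rw [← Fintype.piFinset_univ, ← Finset.prod_univ_sum (fun _ => Finset.univ)
        (fun s t => Real.exp (e (r k) (t + j) s))]
      refine Finset.prod_congr rfl fun s _ => ?_
      exact Equiv.sum_comp (Equiv.addRight j) (fun t => Real.exp (e (r k) t s))
    have e2 : ∀ s, ∑ t, Real.exp (e (r k) t s) ≤ J * Real.exp (2 / J * ∑ t, e (r k) t s) := by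
      intro s
      have : ∑ t, Real.exp (e (r k) t s) ≤ ∑ t, (1 + 2 * e (r k) t s) :=
        Finset.sum_le_sum fun t _ => exp_le_one_add_two_mul (he0 _ _ _) (he1 _ _ _)
      refine this.trans ?_
      rw [Finset.sum_add_distrib, ← Finset.mul_sum]
      have h3 := Real.add_one_le_exp (2 / J * ∑ t, e (r k) t s)
      have hJ' : (0:ℝ) < J := by exact_mod_cast hJ
      have h4 := mul_le_mul_of_nonneg_left h3 hJ'.le
      refine le_trans (le_of_eq ?_) h4
      simp
      field_simp
      ring
    rw [e1]
    refine (Finset.prod_le_prod (fun s _ => Finset.sum_nonneg fun t _ => (Real.exp_pos _).le)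
      (fun s _ => e2 s)).trans ?_
    rw [Finset.prod_mul_distrib, ← Real.exp_sum, ← Finset.mul_sum]
    simp only [Finset.prod_const, Finset.card_univ, Fintype.card_fin]
    refine mul_le_mul_of_nonneg_left (Real.exp_le_exp.mpr ?_) (by positivity)
    have h5 := hr k
    rw [Finset.sum_comm] at h5
    have hJ' : (0:ℝ) < J := by exact_mod_cast hJ
    calc 2 / J * ∑ s, ∑ t, e (r k) t s ≤ 2 / J * (J * L * β) :=
          mul_le_mul_of_nonneg_left h5 (by positivity)
      _ = 2 * (L * β) := by field_simp
  -- union bound over the pairs `(k, j)`, carried out on the exponential moments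
  have hex : ∃ τ : Fin L → Fin J, ∀ k j, ∑ s, e (r k) (τ s + j) s ≤ L * (3 * β) := by
    by_contra! hcon
    have h1 : ∀ τ : Fin L → Fin J, Real.exp (L * (3 * β)) ≤
        ∑ k, ∑ j, Real.exp (∑ s, e (r k) (τ s + j) s) := by
      intro τ
      obtain ⟨k, j, hkj⟩ := hcon τ
      refine (Real.exp_le_exp.mpr hkj.le).trans ?_
      refine (Finset.single_le_sum (f := fun j => Real.exp (∑ s, e (r k) (τ s + j) s))
        (fun _ _ => (Real.exp_pos _).le) (Finset.mem_univ j)).trans ?_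
      exact (Finset.single_le_sum (f := fun k => ∑ j, Real.exp (∑ s, e (r k) (τ s + j) s))
        (fun _ _ => Finset.sum_nonneg fun _ _ => (Real.exp_pos _).le) (Finset.mem_univ k))
    have h2 := Finset.sum_le_sum fun τ (_ : τ ∈ (Finset.univ : Finset (Fin L → Fin J))) => h1 τ
    rw [Finset.sum_comm] at h2
    simp_rw [Finset.sum_comm (s := (Finset.univ : Finset (Fin L → Fin J)))
      (t := (Finset.univ : Finset (Fin J)))] at h2
    have h3 : ∑ k : Fin M, ∑ j : Fin J, ∑ τ : Fin L → Fin J,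
        Real.exp (∑ s, e (r k) (τ s + j) s) ≤
        ∑ k : Fin M, ∑ j : Fin J, (J : ℝ) ^ L * Real.exp (2 * (L * β)) :=
      Finset.sum_le_sum fun k _ => Finset.sum_le_sum fun j _ => hmom k j
    have h4 := h2.trans h3
    simp only [Finset.sum_const, Finset.card_univ, nsmul_eq_mul, Fintype.card_fin,
      Fintype.card_fun, Nat.cast_pow] at h4
    have hJL' : (0:ℝ) < (J:ℝ) ^ L := by
      have : (0:ℝ) < J := by exact_mod_cast hJ
      positivity
    have h5 : Real.exp (L * (3 * β)) ≤ M * J * Real.exp (2 * (L * β)) := by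
      refine le_of_mul_le_mul_left ?_ hJL'
      linarith
    have hMJ : (0:ℝ) < M * J := by exact_mod_cast Nat.mul_pos hM hJ
    have h6 : (M * J : ℝ) < Real.exp (L * β) := (Real.log_lt_iff_lt_exp hMJ).mp hlog
    have h7 : Real.exp (L * (3 * β)) = Real.exp (L * β) * Real.exp (2 * (L * β)) := by
      rw [← Real.exp_add]; ring_nf
    rw [h7] at h5
    have := mul_lt_mul_of_pos_right h6 (Real.exp_pos (2 * (L * β)))
    linarith
  obtain ⟨τ, hτ⟩ := hex
  exact ⟨r, fun s => Equiv.addLeft (τ s), fun k j => by simpa using hτ k j⟩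

end Binning

/-! ### The one-shot code with small error for every message -/

section OneShot
open scoped MatrixOrder

/-- One-shot code with small error for every message pair. `packing` is applied to `2M` first words
and `J × L` second words, and `binning` selects among them. Message `j` of the second sender is
encoded by drawing `s` uniformly and applying `W₂ (d j s)`; the decoder does not identify `s`, hence
the sum of effects over `s`. The success probability is the displayed sum divided by `L`. -/
lemma one_shot_code {ι : Type*} [Fintype ι] [DecidableEq ι] {G H : Type*}
    [Fintype G] [Nonempty G] [Fintype H] [Nonempty H]
    (W₁ : G → Matrix ι ι ℂ) (W₂ : H → Matrix ι ι ℂ)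
    (hW₁ : ∀ g, (W₁ g)ᴴ * W₁ g = 1) (hW₂ : ∀ h, (W₂ h)ᴴ * W₂ h = 1)
    (hc : ∀ g h, W₁ g * W₂ h = W₂ h * W₁ g)
    (T Θ q : Matrix ι ι ℂ) (hT0 : 0 ≤ T) (hT1 : T ≤ 1) (hΘ : 0 ≤ Θ) (hΘ1 : rtr Θ = 1)
    (hq : qᴴ = q) (hqq : q * q = q)
    {α₁ α₂ α₃ τ η : ℝ} (hα₁ : 0 ≤ α₁) (hα₂ : 0 ≤ α₂) (hα₃ : 0 ≤ α₃) (hη : 0 < η)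
    (h1 : ∑ g, W₁ g * (q * Θ * q) * (W₁ g)ᴴ ≤ (Fintype.card G * α₁ : ℝ) • 1)
    (h2 : ∑ h, W₂ h * T * (W₂ h)ᴴ ≤ (Fintype.card H * α₂ : ℝ) • 1)
    (h3 : ∑ g, W₁ g * (∑ h, W₂ h * T * (W₂ h)ᴴ) * (W₁ g)ᴴ
      ≤ (Fintype.card G * Fintype.card H * α₃ : ℝ) • 1)
    (hτ : rtr T ≤ τ) (M J L : ℕ) (hJ : 0 < J) (hM : 0 < M) {β : ℝ} (hβ : 0 < β)
    (hlog : Real.log (M * J) < L * β)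
    (hE : 4 * rtr ((1 - T) * (q * Θ * q)) + 2 * rtr ((1 - q) * Θ) + 8 * η +
          8 * ((2 * M : ℝ) * (α₁ * τ) + (J * L : ℝ) * α₂ + (2 * M : ℝ) * (J * L) * α₃) ≤ β / 2) :
    ∃ (c : Fin M → G) (d : Fin J → Fin L → H) (Λ : Fin M → Fin J → Matrix ι ι ℂ),
      (∀ k j, 0 ≤ Λ k j) ∧ (∑ k, ∑ j, Λ k j ≤ 1) ∧
      ∀ k j, L * (1 - 3 * β) ≤ ∑ s, rtr (Λ k j * ((W₁ (c k) * W₂ (d j s)) * Θ *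
        (W₁ (c k) * W₂ (d j s))ᴴ)) := by
  classical
  obtain ⟨c, d, Λ, hΛ0, hΛ1, hsum⟩ := packing (κ₁ := Fin (2 * M)) (κ₂ := Fin J × Fin L) W₁ W₂ hW₁ hW₂
    hc T Θ q hT0 hT1 hΘ hΘ1 hq hqq hα₁ hα₂ hα₃ hη h1 h2 h3 hτ
  let σ : Fin (2 * M) → Fin J → Fin L → Matrix ι ι ℂ := fun k j s =>
    (W₁ (c k) * W₂ (d (j, s))) * Θ * (W₁ (c k) * W₂ (d (j, s)))ᴴ
  have hσ0 : ∀ k j s, 0 ≤ σ k j s := fun k j s => conj_nonneg hΘ _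
  have hσ1 : ∀ k j s, rtr (σ k j s) = 1 := fun k j s => by
    simp only [σ]
    rw [rtr_conj_unitary _ Θ, hΘ1]
    rw [conjTranspose_mul, mul_assoc, ← mul_assoc (W₁ _)ᴴ, hW₁, one_mul, hW₂]
  let e : Fin (2 * M) → Fin J → Fin L → ℝ := fun k j s => rtr ((1 - Λ (k, (j, s))) * σ k j s)
  have hΛle : ∀ k, Λ k ≤ 1 := fun k =>
    (Finset.single_le_sum (fun k _ => hΛ0 k) (Finset.mem_univ k)).trans hΛ1
  have he : ∀ k j s, e k j s = 1 - rtr (Λ (k, (j, s)) * σ k j s) := fun k j s => by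
    simp only [e, sub_mul, one_mul, rtr_sub, hσ1]
  have he0 : ∀ k j s, 0 ≤ e k j s := fun k j s =>
    rtr_mul_nonneg (sub_nonneg.mpr (hΛle _)) (hσ0 _ _ _)
  have he1 : ∀ k j s, e k j s ≤ 1 := fun k j s => by
    rw [he]; linarith [rtr_mul_nonneg (hΛ0 (k, (j, s))) (hσ0 k j s)]
  have havg : ∑ k, ∑ j, ∑ s, e k j s ≤ M * J * L * β := by
    simp only [Fintype.sum_prod_type, Fintype.card_fin, Fintype.card_prod] at hsum
    push_cast at hsum
    refine hsum.trans ?_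
    refine (mul_le_mul_of_nonneg_left hE (by positivity)).trans (le_of_eq ?_)
    ring
  obtain ⟨r, π, hr⟩ := binning M J L hJ hM (by simp) e he0 he1 hβ havg hlog
  refine ⟨fun k => c (r k), fun j s => d (π s j, s), fun k j => ∑ s, Λ (r k, (π s j, s)),
    fun k j => Finset.sum_nonneg fun s _ => hΛ0 _, ?_, fun k j => ?_⟩
  -- the retained triples are pairwise distinct, so their effects are part of the original measurement
  · refine le_trans ?_ hΛ1
    let emb : (Fin M × Fin J × Fin L) ↪ (Fin (2 * M) × Fin J × Fin L) :=
      ⟨fun p => (r p.1, (π p.2.2 p.2.1, p.2.2)), by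
        rintro ⟨k, j, s⟩ ⟨k', j', s'⟩ h
        simp only [Prod.mk.injEq] at h
        obtain ⟨h1, h2, rfl⟩ := h
        rw [r.injective h1, (π s).injective h2]⟩
    have : ∑ k, ∑ j, ∑ s, Λ (r k, (π s j, s)) = ∑ p ∈ Finset.univ.map emb, Λ p := by
      rw [Finset.sum_map]
      simp only [Fintype.sum_prod_type]
      rfl
    rw [this]
    exact Finset.sum_le_sum_of_subset_of_nonneg (Finset.subset_univ _) fun p _ _ => hΛ0 p
  · have h4 := hr k j
    simp only [he] at h4
    rw [Finset.sum_sub_distrib] at h4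
    simp only [Finset.sum_const, Finset.card_univ, nsmul_eq_mul, Fintype.card_fin, mul_one] at h4
    have h5 : ∑ s, rtr (Λ (r k, (π s j, s)) * σ (r k) (π s j) s) ≤
        ∑ s, rtr ((∑ s', Λ (r k, (π s' j, s'))) * σ (r k) (π s j) s) := by
      refine Finset.sum_le_sum fun s _ => rtr_mul_mono_left (hσ0 _ _ _) ?_
      exact Finset.single_le_sum (f := fun s => Λ (r k, (π s j, s))) (fun s _ => hΛ0 _)
        (Finset.mem_univ s)
    simp only [σ] at h4 h5
    linarith

/-- Sandwiching a test `T` between projections `q` costs at most the errors of `T` and of `q`: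
write `q = 1 + (q - 1)` and use `|a + b|² ≤ 2|a|² + 2|b|²`. -/
lemma gentle {ι : Type*} [Fintype ι] [DecidableEq ι] {q T : Matrix ι ι ℂ} (hq : qᴴ = q)
    (hqq : q * q = q) (hT0 : 0 ≤ T) (hT1 : T ≤ 1) :
    1 - q * T * q ≤ (2 : ℝ) • (1 - T) + (3 : ℝ) • (1 - q) := by
  have h := conj_add_le (sub_nonneg.mpr hT1) 1 (q - 1)
  have h' := conj_mono (sub_le_self 1 hT0) (q - 1)
  have e1 : (1 + (q - 1)) = q := by abel
  have e2 : (q - 1) * 1 * (q - 1)ᴴ = 1 - q := by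
    simp [hq, mul_sub, sub_mul, hqq]
  rw [e1, hq] at h
  rw [e2] at h'
  have e3 : 1 - q * T * q = (1 - q) + q * (1 - T) * q := by
    simp [mul_sub, sub_mul, hqq]
  rw [e3]
  have h'' := smul_mono_mat (by norm_num : (0:ℝ) ≤ 2) h'
  refine (add_le_add_right (h.trans (add_le_add_right h'' _)) _).trans (le_of_eq ?_)
  simp only [one_mul, conjTranspose_one, mul_one]
  module

lemma proj_nonneg {ι : Type*} [Fintype ι] [DecidableEq ι] {q : Matrix ι ι ℂ} (hq : qᴴ = q)
    (hqq : q * q = q) : 0 ≤ q := by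
  have := conj_nonneg (zero_le_one (α := Matrix ι ι ℂ)) q
  rwa [mul_one, hq, hqq] at this

lemma proj_le_one {ι : Type*} [Fintype ι] [DecidableEq ι] {q : Matrix ι ι ℂ} (hq : qᴴ = q)
    (hqq : q * q = q) : q ≤ 1 := by
  have : 0 ≤ 1 - q := proj_nonneg (by simp [hq]) (by simp [mul_sub, sub_mul, hqq])
  exact sub_nonneg.mp this

lemma conj_proj_le_one {ι : Type*} [Fintype ι] [DecidableEq ι] {q T : Matrix ι ι ℂ} (hq : qᴴ = q)
    (hqq : q * q = q) (hT1 : T ≤ 1) : q * T * q ≤ 1 := by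
  have := conj_mono hT1 q
  rw [hq, mul_one, hqq] at this
  exact this.trans (proj_le_one hq hqq)

lemma gentle_err {ι : Type*} [Fintype ι] [DecidableEq ι] {q T Θ : Matrix ι ι ℂ} (hq : qᴴ = q)
    (hqq : q * q = q) (hT0 : 0 ≤ T) (hT1 : T ≤ 1) (hΘ : 0 ≤ Θ) :
    rtr ((1 - q * T * q) * Θ) ≤ 2 * rtr ((1 - T) * Θ) + 3 * rtr ((1 - q) * Θ) := by
  have := rtr_mul_mono_left hΘ (gentle hq hqq hT0 hT1)
  simpa only [add_mul, smul_mul_assoc, rtr_add, rtr_smul] using this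

end OneShot

/-! ### Twirling inequalities on a tripartite system -/

section Tri
open scoped MatrixOrder

variable {ι κ R : Type} [Fintype ι] [DecidableEq ι] [Fintype κ] [DecidableEq κ]
  [Fintype R] [DecidableEq R]

/-- Ampliation `M ⊗ 1` of an operator on the first factor, along an identification `e`. -/
def lft (e : ι ≃ κ × R) (M : Matrix κ κ ℂ) : Matrix ι ι ℂ := (M ⊗ₖ (1 : Matrix R R ℂ)).submatrix e e

/-- Ampliation `1 ⊗ Y` of an operator on the second factor, along an identification `e`. -/
def rgt (e : ι ≃ κ × R) (Y : Matrix R R ℂ) : Matrix ι ι ℂ := ((1 : Matrix κ κ ℂ) ⊗ₖ Y).submatrix e e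

/-- Marginal on the second factor, along an identification `e`. -/
def marg (e : ι ≃ κ × R) (X : Matrix ι ι ℂ) : Matrix R R ℂ := ptraceLeft (X.submatrix e.symm e.symm)

lemma lft_mul (e : ι ≃ κ × R) (M N : Matrix κ κ ℂ) : lft e (M * N) = lft e M * lft e N := by
  simp only [lft, submatrix_mul_equiv, ← mul_kronecker_mul, one_mul]
lemma rgt_mul (e : ι ≃ κ × R) (M N : Matrix R R ℂ) : rgt e (M * N) = rgt e M * rgt e N := by
  simp only [rgt, submatrix_mul_equiv, ← mul_kronecker_mul, one_mul]
lemma lft_one (e : ι ≃ κ × R) : lft e 1 = 1 := by simp [lft]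
lemma rgt_one (e : ι ≃ κ × R) : rgt e 1 = 1 := by simp [rgt]
lemma lft_star (e : ι ≃ κ × R) (M : Matrix κ κ ℂ) : (lft e M)ᴴ = lft e Mᴴ := by
  simp [lft, conjTranspose_submatrix, conjTranspose_kronecker]
lemma rgt_star (e : ι ≃ κ × R) (M : Matrix R R ℂ) : (rgt e M)ᴴ = rgt e Mᴴ := by
  simp [rgt, conjTranspose_submatrix, conjTranspose_kronecker]
lemma lft_rgt (e : ι ≃ κ × R) (M : Matrix κ κ ℂ) (Y : Matrix R R ℂ) :
    lft e M * rgt e Y = rgt e Y * lft e M := by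
  simp only [lft, rgt, submatrix_mul_equiv, ← mul_kronecker_mul, one_mul, mul_one]
lemma rgt_sub (e : ι ≃ κ × R) (M N : Matrix R R ℂ) : rgt e (M - N) = rgt e M - rgt e N := by
  ext i j; simp [rgt, mul_sub]
lemma rgt_smul (e : ι ≃ κ × R) (c : ℝ) (M : Matrix R R ℂ) : rgt e (c • M) = c • rgt e M := by
  ext i j; simp [rgt]; ring
lemma submatrix_nonneg {X : Matrix ι ι ℂ} (h : 0 ≤ X) (f : κ → ι) : 0 ≤ X.submatrix f f :=
  (h.posSemidef.submatrix f).nonneg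
lemma rgt_nonneg (e : ι ≃ κ × R) {M : Matrix R R ℂ} (h : 0 ≤ M) : 0 ≤ rgt e M := by
  refine submatrix_nonneg ?_ _
  exact (Matrix.PosSemidef.one.kronecker h.posSemidef).nonneg
lemma rgt_mono (e : ι ≃ κ × R) {M N : Matrix R R ℂ} (h : M ≤ N) : rgt e M ≤ rgt e N := by
  rw [← sub_nonneg, ← rgt_sub]; exact rgt_nonneg e (sub_nonneg.mpr h)
lemma ptraceLeft_eq (X : Matrix (κ × R) (κ × R) ℂ) :
    ptraceLeft X = ∑ i, X.submatrix (fun k => (i, k)) (fun k => (i, k)) := by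
  ext; simp [ptraceLeft, Matrix.sum_apply]
lemma marg_nonneg (e : ι ≃ κ × R) {X : Matrix ι ι ℂ} (h : 0 ≤ X) : 0 ≤ marg e X := by
  rw [marg, ptraceLeft_eq]
  exact Finset.sum_nonneg fun i _ => submatrix_nonneg (submatrix_nonneg h _) _
lemma marg_sub (e : ι ≃ κ × R) (X Y : Matrix ι ι ℂ) : marg e (X - Y) = marg e X - marg e Y := by
  ext; simp [marg, ptraceLeft]
lemma marg_smul (e : ι ≃ κ × R) (c : ℝ) (X : Matrix ι ι ℂ) : marg e (c • X) = c • marg e X := by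
  ext; simp [marg, ptraceLeft, Finset.mul_sum]
lemma marg_mono (e : ι ≃ κ × R) {X Y : Matrix ι ι ℂ} (h : X ≤ Y) : marg e X ≤ marg e Y := by
  rw [← sub_nonneg, ← marg_sub]; exact marg_nonneg e (sub_nonneg.mpr h)
/-- Conjugating by an operator on the kept factor commutes with the partial trace. -/
lemma marg_conj (e : ι ≃ κ × R) (Y : Matrix R R ℂ) (X : Matrix ι ι ℂ) :
    marg e (rgt e Y * X * (rgt e Y)ᴴ) = Y * marg e X * Yᴴ := by
  have h : ∀ X : Matrix (κ × R) (κ × R) ℂ,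
      ptraceLeft (((1 : Matrix κ κ ℂ) ⊗ₖ Y) * X * ((1 : Matrix κ κ ℂ) ⊗ₖ Y)ᴴ) =
      Y * ptraceLeft X * Yᴴ := by
    intro X
    ext a b
    simp only [ptraceLeft, of_apply, mul_apply, kroneckerMap_apply, conjTranspose_apply,
      Fintype.sum_prod_type, one_apply, ite_mul, one_mul, zero_mul, Finset.sum_ite_irrel,
      Finset.sum_const_zero, Finset.sum_ite_eq, Finset.mem_univ, if_true,
      apply_ite star, star_zero, mul_ite, mul_zero]
    rw [Finset.sum_comm]
    refine Finset.sum_congr rfl fun c _ => ?_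
    rw [← Finset.sum_mul, Finset.sum_comm]
    simp only [Finset.mul_sum]
  have h2 : (rgt e Y * X * (rgt e Y)ᴴ).submatrix e.symm e.symm =
      ((1 : Matrix κ κ ℂ) ⊗ₖ Y) * X.submatrix e.symm e.symm * ((1 : Matrix κ κ ℂ) ⊗ₖ Y)ᴴ := by
    obtain ⟨X', rfl⟩ : ∃ X', X = X'.submatrix e e := ⟨X.submatrix e.symm e.symm, by simp⟩
    simp only [rgt, conjTranspose_submatrix, submatrix_mul_equiv, submatrix_submatrix]
    simp
  rw [marg, h2, h, marg]

/-- A family `U` of operators twirls the range of `Q` with constant `δ`: the sum of the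
conjugates of any positive operator on a bipartite system is dominated by `|G| δ` times the
maximally mixed operator tensored with the marginal. -/
def Twirls {A G : Type} [Fintype A] [DecidableEq A] [Fintype G] (U : G → Matrix A A ℂ)
    (Q : Matrix A A ℂ) (δ : ℝ) : Prop :=
  ∀ (R : Type) [Fintype R] [DecidableEq R] (X : Matrix (A × R) (A × R) ℂ), 0 ≤ X →
    ∑ g, ((U g * Q) ⊗ₖ (1 : Matrix R R ℂ)) * X * ((U g * Q) ⊗ₖ (1 : Matrix R R ℂ))ᴴ ≤
      (Fintype.card G * δ : ℝ) • ((1 : Matrix A A ℂ) ⊗ₖ ptraceLeft X)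

lemma submatrix_mono {X Y : Matrix ι ι ℂ} (h : X ≤ Y) (f : κ → ι) :
    X.submatrix f f ≤ Y.submatrix f f := by
  rw [← sub_nonneg]; exact submatrix_nonneg (sub_nonneg.mpr h) f

/-- The twirling inequality along an identification `e`. -/
lemma Twirls.apply {G : Type} [Fintype G] {U : G → Matrix κ κ ℂ} {Q : Matrix κ κ ℂ} {δ : ℝ}
    (h : Twirls U Q δ) (e : ι ≃ κ × R) {X : Matrix ι ι ℂ} (hX : 0 ≤ X) :
    ∑ g, (lft e (U g)) * (lft e Q * X * (lft e Q)ᴴ) * (lft e (U g))ᴴ ≤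
      (Fintype.card G * δ : ℝ) • rgt e (marg e X) := by
  have h1 := submatrix_mono (h R (X.submatrix e.symm e.symm) (submatrix_nonneg hX _)) e
  have e2 : ∀ g, (lft e (U g)) * (lft e Q * X * (lft e Q)ᴴ) * (lft e (U g))ᴴ =
     (((U g * Q) ⊗ₖ (1 : Matrix R R ℂ)) * X.submatrix e.symm e.symm *
      ((U g * Q) ⊗ₖ (1 : Matrix R R ℂ))ᴴ).submatrix e e := by
    intro g
    have hx : X = (X.submatrix e.symm e.symm).submatrix e e := by simp
    have : (lft e (U g)) * (lft e Q * X * (lft e Q)ᴴ) * (lft e (U g))ᴴ =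
      lft e (U g * Q) * X * (lft e (U g * Q))ᴴ := by
      rw [lft_mul, conjTranspose_mul]; simp only [mul_assoc]
    rw [this]
    conv_lhs => rw [hx]
    simp only [lft, conjTranspose_submatrix, submatrix_mul_equiv]
  simp only [e2]
  convert h1 using 1
  · ext i j; simp [Matrix.sum_apply]
  · rfl

variable {A B C : Type} [Fintype A] [DecidableEq A] [Fintype B] [DecidableEq B]
  [Fintype C] [DecidableEq C]

/-- `(A × C) × B ≃ A × (C × B)`. -/
abbrev eA : (A × C) × B ≃ A × (C × B) := Equiv.prodAssoc A C B
/-- `(A × C) × B ≃ B × (A × C)`. -/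
abbrev eB : (A × C) × B ≃ B × (A × C) := Equiv.prodComm (A × C) B

/-- An operator on `A` may also be seen as an operator on `A × C`, tensored with the identity of `B`. -/
lemma lft_eA (M : Matrix A A ℂ) : lft (eA : (A × C) × B ≃ _) M =
    rgt eB (lft (Equiv.refl (A × C)) M) := by
  ext ⟨⟨a, c⟩, b⟩ ⟨⟨a', c'⟩, b'⟩
  simp only [lft, rgt, submatrix_apply, kroneckerMap_apply, one_apply, eA, eB,
    Equiv.prodAssoc_apply, Equiv.prodComm_apply, Prod.swap_prod_mk, Equiv.refl_apply,
    Prod.mk.injEq]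
  by_cases h1 : c = c' <;> by_cases h2 : b = b' <;> simp [h1, h2]

/-- The projected state averaged over the first family: twirling `A` leaves the marginal on `CB`,
whose projection by `QBC` has eigenvalues at most `aBC`. -/
lemma tri_h1 {G : Type} [Fintype G] {U : G → Matrix A A ℂ} {QA : Matrix A A ℂ}
    {δA aBC : ℝ} (hδA : 0 ≤ δA) (hU : Twirls U QA δA) (hQA : QAᴴ = QA)
    {Θ : Matrix ((A × C) × B) ((A × C) × B) ℂ} (hΘ : 0 ≤ Θ)
    {QBC : Matrix (C × B) (C × B) ℂ} (hQBC : QBCᴴ = QBC)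
    (hBC : QBC * marg eA Θ * QBC ≤ aBC • 1) :
    ∑ g, lft eA (U g) * ((lft eA QA * rgt eA QBC) * Θ * (lft eA QA * rgt eA QBC)) *
      (lft eA (U g))ᴴ ≤ (Fintype.card G * (δA * aBC) : ℝ) • 1 := by
  have h := hU.apply eA (conj_nonneg hΘ (rgt eA QBC))
  rw [marg_conj, hQBC] at h
  have h2 := smul_mono_mat (by positivity : 0 ≤ (Fintype.card G * δA : ℝ))
    (rgt_mono (eA : (A × C) × B ≃ _) hBC)
  rw [rgt_smul, rgt_one, smul_smul] at h2
  refine le_trans (le_of_eq ?_) (h.trans (h2.trans (le_of_eq (by rw [mul_assoc]))))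
  refine Finset.sum_congr rfl fun g _ => ?_
  rw [rgt_star, lft_star eA QA, hQBC, hQA]
  congr 2
  rw [show lft eA QA * rgt eA QBC * Θ * (lft eA QA * rgt eA QBC) =
    lft eA QA * rgt eA QBC * Θ * (rgt eA QBC * lft eA QA) by rw [lft_rgt]]
  simp only [mul_assoc]

/-- The test averaged over the second family: `P ≤ Dp Θ` replaces the projection by the state, and
twirling `B` leaves the marginal of `Θ` on `AC`, still conjugated by `Z`. -/
lemma tri_W2 {H : Type} [Fintype H] {V : H → Matrix B B ℂ} {QB : Matrix B B ℂ}
    {δB Dp : ℝ} (hδB : 0 ≤ δB) (hV : Twirls V QB δB) (hQB : QBᴴ = QB)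
    {P Θ : Matrix ((A × C) × B) ((A × C) × B) ℂ} (hP0 : 0 ≤ P) (hP : P ≤ Dp • Θ)
    (Z : Matrix (A × C) (A × C) ℂ) :
    ∑ h, lft eB (V h) * (rgt eB Z * (lft eB QB * P * lft eB QB) * (rgt eB Z)ᴴ) *
      (lft eB (V h))ᴴ ≤ (Fintype.card H * (δB * Dp) : ℝ) • rgt eB (Z * marg eB Θ * Zᴴ) := by
  have h := hV.apply eB hP0
  have h' := h.trans (smul_mono_mat (by positivity) (rgt_mono eB (marg_mono eB hP)))
  have h2 := conj_mono h' (rgt eB Z)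
  refine le_trans (le_of_eq ?_) (h2.trans (le_of_eq ?_))
  · rw [Finset.mul_sum, Finset.sum_mul]
    refine Finset.sum_congr rfl fun g _ => ?_
    simp only [rgt_star, lft_star, hQB]
    have := lft_rgt (eB : (A × C) × B ≃ _) (V g) Z
    have h3 := lft_rgt (eB : (A × C) × B ≃ _) (V g)ᴴ Zᴴ
    simp only [← mul_assoc]
    rw [this]
    simp only [mul_assoc]
    rw [h3]
  · simp only [rgt_star, marg_smul, rgt_smul, rgt_mul, mul_smul_comm, smul_mul_assoc, smul_smul]
    rw [mul_assoc]

/-- The operator left by `tri_W2` averaged over the first family: `QAC` is removed by `hAC`, and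
twirling `A` leaves the marginal on `C`, whose projection by `QC` has eigenvalues at most `aC`. -/
lemma tri_h3 {G : Type} [Fintype G] {U : G → Matrix A A ℂ} {QA : Matrix A A ℂ}
    {δA aC : ℝ} (hδA : 0 ≤ δA) (hU : Twirls U QA δA) (hQA : QAᴴ = QA)
    {Θ : Matrix (A × C) (A × C) ℂ} (hΘ : 0 ≤ Θ) {QAC : Matrix (A × C) (A × C) ℂ}
    (hQAC : QACᴴ = QAC)
    {QC : Matrix C C ℂ} (hQC : QCᴴ = QC) (hAC : QAC * Θ * QAC ≤ Θ)
    (hC : QC * marg (Equiv.refl (A × C)) Θ * QC ≤ aC • 1) (Z : Matrix (A × C) (A × C) ℂ)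
    (hZ : Z = rgt (Equiv.refl _) QC * lft (Equiv.refl _) QA * QAC) :
    ∑ g, lft (Equiv.refl (A × C)) (U g) * (Z * Θ * Zᴴ) * (lft (Equiv.refl (A × C)) (U g))ᴴ
      ≤ (Fintype.card G * (δA * aC) : ℝ) • 1 := by
  set e := Equiv.refl (A × C)
  have h := hU.apply e (conj_nonneg hΘ (rgt e QC))
  rw [marg_conj, hQC] at h
  have h2 := smul_mono_mat (by positivity : 0 ≤ (Fintype.card G * δA : ℝ)) (rgt_mono e hC)
  rw [rgt_smul, rgt_one, smul_smul] at h2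
  refine le_trans ?_ (h.trans (h2.trans (le_of_eq (by rw [mul_assoc]))))
  refine Finset.sum_le_sum fun g _ => conj_mono ?_ _
  have h3 := conj_mono hAC (rgt e QC * lft e QA)
  refine le_trans (le_of_eq ?_) (h3.trans (le_of_eq ?_))
  · rw [hZ]; simp only [conjTranspose_mul, hQAC, mul_assoc]
  · rw [← lft_rgt]; simp only [← lft_rgt, conjTranspose_mul, rgt_star, lft_star, hQC, hQA, mul_assoc]

end Tri

/-! ### The tripartite one-shot code -/

section Tri2
open scoped MatrixOrder

lemma rtr_conj_proj_le {ι : Type*} [Fintype ι] [DecidableEq ι] {q T : Matrix ι ι ℂ}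
    (hq : qᴴ = q) (hqq : q * q = q) (hT : 0 ≤ T) : rtr (q * T * q) ≤ rtr T := by
  rw [rtr_mul_comm, ← mul_assoc, hqq]
  have := rtr_mul_mono_left hT (proj_le_one hq hqq)
  rwa [one_mul] at this

/-- The error of the test `T` on the subnormalized state `q Θ q`. -/
lemma err_conj_proj {ι : Type*} [Fintype ι] [DecidableEq ι] {q T Θ : Matrix ι ι ℂ}
    (hqq : q * q = q) : rtr ((1 - T) * (q * Θ * q)) = rtr ((q - q * T * q) * Θ) := by
  have h2 : (q - q * T * q) * Θ = q * ((1 - T) * (q * Θ)) := by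
    rw [← mul_assoc, ← mul_assoc, mul_sub, mul_one, sub_mul q (q * T) q, hqq]
  rw [h2, rtr_mul_comm q]; simp only [mul_assoc]

lemma proj_conj_nonneg {ι : Type*} [Fintype ι] [DecidableEq ι] {q T : Matrix ι ι ℂ}
    (hq : qᴴ = q) (hT : 0 ≤ T) : 0 ≤ q * T * q := by
  have := conj_nonneg hT q; rwa [hq] at this

variable {A B C : Type} [Fintype A] [DecidableEq A] [Fintype B] [DecidableEq B]
  [Fintype C] [DecidableEq C]

/-- The one-shot code for a tripartite state `Θ`. The test sandwiches the projection `P` successively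
between projections on `B`, `AC`, `A` and `C`, and `one_shot_code` is applied to it with the state
projected by `QA ⊗ QBC`. Since `P ≤ Dp Θ`, the trace of the test is at most `Dp`, and the three
collision terms of `hE` come from `tri_h1`, `tri_W2` and `tri_h3`. If each projection fails on `Θ`
with probability at most `ε₀`, then `gentle_err` gives the test an error of at most `61 ε₀` and
`QA ⊗ QBC` one of at most `5 ε₀`, so sandwiching once more costs at most `137 ε₀`; the total in
`hE` is `4 · 137 + 2 · 5 = 558`. -/
lemma tripartite_code {G H : Type} [Fintype G] [Nonempty G] [Fintype H] [Nonempty H]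
    {U : G → Matrix A A ℂ} {V : H → Matrix B B ℂ}
    (hU1 : ∀ g, (U g)ᴴ * U g = 1) (hV1 : ∀ h, (V h)ᴴ * V h = 1)
    {QA : Matrix A A ℂ} {QB : Matrix B B ℂ} {QC : Matrix C C ℂ}
    {QAC : Matrix (A × C) (A × C) ℂ} {QBC : Matrix (C × B) (C × B) ℂ}
    {P Θ : Matrix ((A × C) × B) ((A × C) × B) ℂ}
    (hQA : QAᴴ = QA ∧ QA * QA = QA) (hQB : QBᴴ = QB ∧ QB * QB = QB)
    (hQC : QCᴴ = QC ∧ QC * QC = QC) (hQAC : QACᴴ = QAC ∧ QAC * QAC = QAC)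
    (hQBC : QBCᴴ = QBC ∧ QBC * QBC = QBC) (hP : Pᴴ = P ∧ P * P = P)
    (hΘ : 0 ≤ Θ) (hΘ1 : rtr Θ = 1)
    {δA δB Dp aC aAC aBC ε₀ β η : ℝ} (hδA : 0 ≤ δA) (hδB : 0 ≤ δB) (hDp : 0 ≤ Dp)
    (haC0 : 0 ≤ aC) (haAC0 : 0 ≤ aAC) (haBC0 : 0 ≤ aBC)
    (hU : Twirls U QA δA) (hV : Twirls V QB δB)
    (hPΘ : P ≤ Dp • Θ)
    (hBC : QBC * marg eA Θ * QBC ≤ aBC • 1)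
    (hAC : QAC * marg eB Θ * QAC ≤ aAC • 1) (hAC' : QAC * marg eB Θ * QAC ≤ marg eB Θ)
    (hC : QC * marg (Equiv.refl _) (marg eB Θ) * QC ≤ aC • 1)
    (eP : rtr ((1 - P) * Θ) ≤ ε₀) (eQA : rtr ((1 - lft eA QA) * Θ) ≤ ε₀)
    (eQB : rtr ((1 - lft eB QB) * Θ) ≤ ε₀) (eQAC : rtr ((1 - rgt eB QAC) * Θ) ≤ ε₀)
    (eQBC : rtr ((1 - rgt eA QBC) * Θ) ≤ ε₀)
    (eQC : rtr ((1 - rgt eB (rgt (Equiv.refl _) QC)) * Θ) ≤ ε₀)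
    (M J L : ℕ) (hJ : 0 < J) (hM : 0 < M) (hβ : 0 < β) (hη : 0 < η)
    (hlog : Real.log (M * J) < L * β)
    (hE : 558 * ε₀ + 8 * η + 8 * ((2 * M : ℝ) * (δA * aBC * Dp) + (J * L : ℝ) * (δB * Dp * aAC) +
      (2 * M : ℝ) * (J * L) * (δB * Dp * (δA * aC))) ≤ β / 2) :
    ∃ (c : Fin M → G) (d : Fin J → Fin L → H)
      (Λ : Fin M → Fin J → Matrix ((A × C) × B) ((A × C) × B) ℂ),
      (∀ k j, 0 ≤ Λ k j) ∧ (∑ k, ∑ j, Λ k j ≤ 1) ∧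
      ∀ k j, L * (1 - 3 * β) ≤ ∑ s, rtr (Λ k j * ((lft eA (U (c k)) * lft eB (V (d j s))) * Θ *
        (lft eA (U (c k)) * lft eB (V (d j s)))ᴴ)) := by
  have star_l : ∀ {X Y : Type} [Fintype X] [DecidableEq X] [Fintype Y] [DecidableEq Y]
      {ι : Type} [Fintype ι] [DecidableEq ι] (e : ι ≃ X × Y) (q : Matrix X X ℂ), (qᴴ = q ∧ q * q = q) →
      ((lft e q)ᴴ = lft e q ∧ lft e q * lft e q = lft e q) := fun e q h =>
    ⟨by rw [lft_star, h.1], by rw [← lft_mul, h.2]⟩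
  have star_r : ∀ {X Y : Type} [Fintype X] [DecidableEq X] [Fintype Y] [DecidableEq Y]
      {ι : Type} [Fintype ι] [DecidableEq ι] (e : ι ≃ X × Y) (q : Matrix Y Y ℂ), (qᴴ = q ∧ q * q = q) →
      ((rgt e q)ᴴ = rgt e q ∧ rgt e q * rgt e q = rgt e q) := fun e q h =>
    ⟨by rw [rgt_star, h.1], by rw [← rgt_mul, h.2]⟩
  set qA := lft (eA : (A × C) × B ≃ _) QA with hqA
  set qB := lft (eB : (A × C) × B ≃ _) QB with hqB
  set qAC := rgt (eB : (A × C) × B ≃ _) QAC with hqAC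
  set qBC := rgt (eA : (A × C) × B ≃ _) QBC with hqBC
  set qC := rgt (eB : (A × C) × B ≃ _) (rgt (Equiv.refl _) QC) with hqC
  have sA : qAᴴ = qA ∧ qA * qA = qA := star_l _ _ hQA
  have sB : qBᴴ = qB ∧ qB * qB = qB := star_l _ _ hQB
  have sC : qCᴴ = qC ∧ qC * qC = qC := star_r _ _ (star_r _ _ hQC)
  have sAC : qACᴴ = qAC ∧ qAC * qAC = qAC := star_r _ _ hQAC
  have sBC : qBCᴴ = qBC ∧ qBC * qBC = qBC := star_r _ _ hQBC
  have hP0 := proj_nonneg hP.1 hP.2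
  have hP1 := proj_le_one hP.1 hP.2
  set Z : Matrix (A × C) (A × C) ℂ := rgt (Equiv.refl _) QC * lft (Equiv.refl _) QA * QAC with hZ
  have hrZ : rgt eB Z = qC * qA * qAC := by
    rw [hZ, rgt_mul, rgt_mul, ← lft_eA]
  have hZs : (rgt eB Z)ᴴ = qAC * qA * qC := by
    rw [hrZ, conjTranspose_mul, conjTranspose_mul, sA.1, sAC.1, sC.1, mul_assoc]
  -- the nested tests
  set T1 := qB * P * qB with hT1
  set T2 := qAC * T1 * qAC with hT2
  set T3 := qA * T2 * qA with hT3
  set T := qC * T3 * qC with hT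
  have b1 : 0 ≤ T1 ∧ T1 ≤ 1 := ⟨proj_conj_nonneg sB.1 hP0, conj_proj_le_one sB.1 sB.2 hP1⟩
  have b2 : 0 ≤ T2 ∧ T2 ≤ 1 := ⟨proj_conj_nonneg sAC.1 b1.1, conj_proj_le_one sAC.1 sAC.2 b1.2⟩
  have b3 : 0 ≤ T3 ∧ T3 ≤ 1 := ⟨proj_conj_nonneg sA.1 b2.1, conj_proj_le_one sA.1 sA.2 b2.2⟩
  have b4 : 0 ≤ T ∧ T ≤ 1 := ⟨proj_conj_nonneg sC.1 b3.1, conj_proj_le_one sC.1 sC.2 b3.2⟩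
  have g1 := gentle_err sB.1 sB.2 hP0 hP1 hΘ
  have g2 := gentle_err sAC.1 sAC.2 b1.1 b1.2 hΘ
  have g3 := gentle_err sA.1 sA.2 b2.1 b2.2 hΘ
  have g4 := gentle_err sC.1 sC.2 b3.1 b3.2 hΘ
  rw [← hT1] at g1
  rw [← hT2] at g2
  rw [← hT3] at g3
  rw [← hT] at g4
  have hTZ : T = rgt eB Z * (qB * P * qB) * (rgt eB Z)ᴴ := by
    rw [hZs, hrZ, hT, hT3, hT2, hT1]; simp only [mul_assoc]
  have hcomm : qA * qBC = qBC * qA := lft_rgt _ _ _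
  have sq : (qA * qBC)ᴴ = qA * qBC ∧ qA * qBC * (qA * qBC) = qA * qBC := by
    refine ⟨by rw [conjTranspose_mul, sA.1, sBC.1, hcomm], ?_⟩
    calc qA * qBC * (qA * qBC) = qA * (qBC * qA) * qBC := by simp only [mul_assoc]
      _ = (qA * qA) * (qBC * qBC) := by rw [← hcomm]; simp only [mul_assoc]
      _ = _ := by rw [sA.2, sBC.2]
  have g5 := gentle_err sA.1 sA.2 (proj_nonneg sBC.1 sBC.2) (proj_le_one sBC.1 sBC.2) hΘ
  have : qA * qBC * qA = qA * qBC := by rw [mul_assoc, ← hcomm, ← mul_assoc, sA.2]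
  rw [this] at g5
  have g6 := gentle_err sq.1 sq.2 b4.1 b4.2 hΘ
  set q := qA * qBC with hq
  have g7 : rtr ((1 - T) * (q * Θ * q)) ≤ rtr ((1 - q * T * q) * Θ) := by
    have h1 := err_conj_proj (T := T) (Θ := Θ) sq.2
    rw [h1]
    exact rtr_mul_mono_left hΘ (sub_le_sub_right (proj_le_one sq.1 sq.2) _)
  have hc : ∀ g h, lft (eA : (A × C) × B ≃ _) (U g) * lft eB (V h) =
      lft eB (V h) * lft eA (U g) := fun g h => by
    rw [lft_eA, lft_rgt]
  have hW2 := tri_W2 hδB hV hQB.1 hP0 hPΘ Z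
  rw [← hTZ] at hW2
  have hΘAC : 0 ≤ marg eB Θ := marg_nonneg _ hΘ
  have hZAC : Z * marg eB Θ * Zᴴ ≤ aAC • 1 := by
    have s1 := star_l (Equiv.refl (A × C)) _ hQA
    have s2 := star_r (Equiv.refl (A × C)) _ hQC
    have h1 := conj_mono hAC (rgt (Equiv.refl _) QC * lft (Equiv.refl _) QA)
    refine le_trans (le_of_eq ?_) (h1.trans ?_)
    · rw [hZ]; simp only [conjTranspose_mul, hQAC.1, mul_assoc]
    · rw [mul_smul_comm, smul_mul_assoc]
      refine smul_mono_mat haAC0 ?_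
      rw [mul_one, conjTranspose_mul, s1.1, s2.1, ← mul_assoc, mul_assoc (rgt _ QC), s1.2]
      have := conj_proj_le_one s2.1 s2.2 (proj_le_one s1.1 s1.2)
      exact this
  refine one_shot_code (fun g => lft eA (U g)) (fun h => lft eB (V h))
    (fun g => by rw [lft_star, ← lft_mul, hU1, lft_one])
    (fun g => by rw [lft_star, ← lft_mul, hV1, lft_one]) hc T Θ q b4.1 b4.2 hΘ hΘ1 sq.1 sq.2
    (α₁ := δA * aBC) (α₂ := δB * Dp * aAC) (α₃ := δB * Dp * (δA * aC)) (τ := Dp) (η := η)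
    (by positivity) (by positivity) (by positivity) hη
    (tri_h1 hδA hU hQA.1 hΘ hQBC.1 hBC) ?_ ?_ ?_ M J L hJ hM hβ hlog ?_
  · refine hW2.trans ((smul_mono_mat (by positivity) (rgt_mono eB hZAC)).trans (le_of_eq ?_))
    rw [rgt_smul, rgt_one, smul_smul]; ring_nf
  · have h3 := tri_h3 hδA hU hQA.1 hΘAC hQAC.1 hQC.1 hAC' hC Z hZ
    have h4 := (smul_mono_mat (c := Fintype.card H * (δB * Dp)) (by positivity)
      (rgt_mono (eB : (A × C) × B ≃ _) h3))
    refine (Finset.sum_le_sum fun g _ => conj_mono hW2 (lft eA (U g))).trans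
      (le_trans (le_of_eq ?_) (h4.trans (le_of_eq ?_)))
    · have : ∀ X : G → Matrix (A × C) (A × C) ℂ, rgt (eB : (A × C) × B ≃ _) (∑ g, X g) =
          ∑ g, rgt eB (X g) := by
        intro X; ext i j; simp [rgt, Matrix.sum_apply, Finset.mul_sum]
      rw [this, Finset.smul_sum]
      refine Finset.sum_congr rfl fun g _ => ?_
      rw [lft_eA, rgt_star, mul_smul_comm, smul_mul_assoc, ← rgt_mul, ← rgt_mul]
    · rw [rgt_smul, rgt_one, smul_smul]; ring_nf
  · have h1 := rtr_conj_proj_le sC.1 sC.2 b3.1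
    have h2 := rtr_conj_proj_le sA.1 sA.2 b2.1
    have h3 := rtr_conj_proj_le sAC.1 sAC.2 b1.1
    have h4 := rtr_conj_proj_le sB.1 sB.2 hP0
    have h5 := rtr_nonneg (sub_nonneg.mpr hPΘ)
    rw [rtr_sub, rtr_smul, hΘ1] at h5
    linarith
  · have e1 : (2 * M : ℝ) * (δA * aBC * Dp) = (2 * M : ℝ) * (δA * aBC) * Dp := by ring
    have : 4 * rtr ((1 - T) * (q * Θ * q)) + 2 * rtr ((1 - q) * Θ) ≤ 558 * ε₀ := by linarith
    refine le_trans ?_ hE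
    nlinarith [this]

end Tri2

/-! ### Signed level-preserving permutations -/

section Twirl
open scoped MatrixOrder

variable {A : Type} [Fintype A] [DecidableEq A]

/-- Permutations preserving the level sets of `p`. -/
def levelPerms (p : A → ℝ) : Subgroup (Equiv.Perm A) where
  carrier := {e | ∀ x, p (e x) = p x}
  mul_mem' := fun {a b} ha hb x => by
    simp only [Set.mem_ofPred_eq] at ha hb
    rw [Equiv.Perm.mul_apply, ha, hb]
  one_mem' := fun x => rfl
  inv_mem' := fun {a} ha x => by
    simp only [Set.mem_ofPred_eq] at ha
    rw [← ha (a⁻¹ x)]; simp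

instance (p : A → ℝ) : Fintype (levelPerms p) := Fintype.ofFinite _

/-- The level set of `p` through `x`. -/
def lev (p : A → ℝ) (x : A) : Finset A := Finset.univ.filter fun y => p y = p x

lemma mem_lev {p : A → ℝ} {x y : A} : y ∈ lev p x ↔ p y = p x := by simp [lev]

/-- Averaging over level-preserving permutations is averaging over the level set. -/
lemma sum_levelPerms (p : A → ℝ) (x : A) (f : A → ℂ) :
    ((lev p x).card : ℂ) * ∑ e : levelPerms p, f (e.1 x) =
      Fintype.card (levelPerms p) * ∑ y ∈ lev p x, f y := by
  have h1 : ∀ y ∈ lev p x, ∑ e : levelPerms p, f (e.1 x) = ∑ e : levelPerms p, f (e.1 y) := by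
    intro y hy
    rw [mem_lev] at hy
    have hs : Equiv.swap x y ∈ levelPerms p := by
      intro z
      rw [Equiv.swap_apply_def]
      split_ifs with h1 h2
      · rw [h1, hy]
      · rw [h2, hy]
      · rfl
    rw [← Equiv.sum_comp (Equiv.mulRight (⟨Equiv.swap x y, hs⟩ : levelPerms p))]
    refine Finset.sum_congr rfl fun e _ => ?_
    simp
  have h2 : ∀ e : levelPerms p, ∑ y ∈ lev p x, f (e.1 y) = ∑ y ∈ lev p x, f y := by
    intro e
    refine Finset.sum_equiv e.1 (fun y => ?_) (fun y _ => rfl)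
    rw [mem_lev, mem_lev, e.2 y]
  rw [← nsmul_eq_mul, ← Finset.sum_const, Finset.sum_congr rfl h1, Finset.sum_comm,
    Finset.sum_congr rfl fun e _ => h2 e]
  simp

/-- Signed level-preserving permutations. -/
abbrev SPerm (p : A → ℝ) := (A → ℤˣ) × levelPerms p

/-- The matrix of a signed permutation. -/
def sgnPerm {p : A → ℝ} (g : SPerm p) : Matrix A A ℂ :=
  Matrix.of fun x y => if y = g.2.1 x then (((g.1 x : ℤˣ) : ℤ) : ℂ) else 0

lemma unit_sq (u : ℤˣ) : (((u : ℤˣ) : ℤ) : ℂ) * ((u : ℤ) : ℂ) = 1 := by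
  rcases Int.units_eq_one_or u with h | h <;> simp [h]

lemma star_unit (u : ℤˣ) : star (((u : ℤˣ) : ℤ) : ℂ) = ((u : ℤ) : ℂ) := by
  rcases Int.units_eq_one_or u with h | h <;> simp [h]

lemma sgnPerm_mul_star {p : A → ℝ} (g : SPerm p) : sgnPerm g * (sgnPerm g)ᴴ = 1 := by
  ext x y
  simp only [mul_apply, sgnPerm, of_apply, conjTranspose_apply, apply_ite star, star_unit, star_zero,
    ite_mul, zero_mul, Finset.sum_ite_eq', Finset.mem_univ, if_true, one_apply,
    EmbeddingLike.apply_eq_iff_eq]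
  by_cases h : x = y
  · subst h; simp [unit_sq]
  · simp [h]

lemma sgnPerm_star_mul {p : A → ℝ} (g : SPerm p) : (sgnPerm g)ᴴ * sgnPerm g = 1 :=
  mul_eq_one_comm.mp (sgnPerm_mul_star g)

/-- Signed level-preserving permutations commute with functions of `p`. -/
lemma sgnPerm_comm {p : A → ℝ} (g : SPerm p) (f : ℝ → ℂ) :
    sgnPerm g * diagonal (fun x => f (p x)) = diagonal (fun x => f (p x)) * sgnPerm g := by
  ext x y
  simp only [mul_diagonal, diagonal_mul, sgnPerm, of_apply]
  by_cases h : y = g.2.1 x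
  · subst h; rw [g.2.2 x, mul_comm]
  · simp [h]

/-- Two distinct uniformly random signs are uncorrelated: flipping the sign at `x` negates the sum. -/
lemma sum_sign (x x' : A) (h : x ≠ x') :
    ∑ s : A → ℤˣ, (((s x : ℤˣ) : ℤ) : ℂ) * ((s x' : ℤ) : ℂ) = 0 := by
  have h1 := Equiv.sum_comp (Equiv.mulLeft (Function.update (1 : A → ℤˣ) x (-1)))
    (fun s : A → ℤˣ => (((s x : ℤˣ) : ℤ) : ℂ) * ((s x' : ℤ) : ℂ))
  simp only [Equiv.coe_mulLeft, Pi.mul_apply, Function.update_self, Function.update_of_ne h.symm,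
    Pi.one_apply, one_mul, neg_mul, Units.val_neg, Int.cast_neg, Finset.sum_neg_distrib] at h1
  exact CharZero.eq_neg_self_iff.mp h1.symm

/-- The set of basis vectors whose level has at least `D` elements. -/
def bigLev (p : A → ℝ) (D : ℝ) : Finset A := Finset.univ.filter fun x => D ≤ (lev p x).card

lemma mem_bigLev_iff {p : A → ℝ} {D : ℝ} {x y : A} (h : p y = p x) :
    y ∈ bigLev p D ↔ x ∈ bigLev p D := by
  have : lev p y = lev p x := by unfold lev; rw [h]
  rw [bigLev, Finset.mem_filter, Finset.mem_filter, this]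
  simp

/-- The 0/1 diagonal projection onto a set of basis vectors. -/
def dproj (T : Finset A) : Matrix A A ℂ := diagonal fun x => if x ∈ T then 1 else 0

lemma dproj_star (T : Finset A) : (dproj T)ᴴ = dproj T := by
  rw [dproj, diagonal_conjTranspose]; congr 1; ext x; simp [apply_ite star]
lemma dproj_mul (T : Finset A) : dproj T * dproj T = dproj T := by
  rw [dproj, diagonal_mul_diagonal]; congr 1; ext x; simp

/-- A block-diagonal matrix with positive semidefinite blocks is positive semidefinite. -/
lemma blockdiag_nonneg {R : Type} [Fintype R] [DecidableEq R] (Y : A → Matrix R R ℂ)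
    (h : ∀ x, 0 ≤ Y x) :
    0 ≤ (Matrix.of fun u v : A × R => if u.1 = v.1 then Y u.1 u.2 v.2 else 0) := by
  have : (Matrix.of fun u v : A × R => if u.1 = v.1 then Y u.1 u.2 v.2 else 0) =
      ∑ x, (single x x (1 : ℂ)) ⊗ₖ Y x := by
    ext ⟨x, r⟩ ⟨x', r'⟩
    simp only [of_apply, Matrix.sum_apply, kroneckerMap_apply, single_apply]
    by_cases h : x = x'
    · subst h; simp
    · rw [if_neg h, Finset.sum_eq_zero]
      rintro y -
      rw [if_neg (by rintro ⟨rfl, rfl⟩; exact h rfl), zero_mul]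
  rw [this]
  refine Finset.sum_nonneg fun x _ => ?_
  have h1 : (single x x (1:ℂ) : Matrix A A ℂ).PosSemidef := by
    have : single x x (1:ℂ) = (dproj {x} : Matrix A A ℂ) := by
      ext a b; simp only [single_apply, dproj, diagonal_apply, Finset.mem_singleton]
      by_cases hab : a = b <;> by_cases hx : x = a <;> simp_all [eq_comm]
    rw [this]
    exact (proj_nonneg (dproj_star _) (dproj_mul _)).posSemidef
  exact (h1.kronecker (h x).posSemidef).nonneg

/-- Signed level-preserving permutations twirl the basis vectors whose level has at least `D`
elements: the signs kill the off-diagonal blocks, and the permutations replace each diagonal block by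
its average over a level, which is at most `D⁻¹` times the sum of all blocks. -/
lemma twirl_basis (p : A → ℝ) {D : ℝ} (hD : 0 < D) :
    Twirls (sgnPerm (p := p)) (dproj (bigLev p D)) D⁻¹ := by
  obtain ⟨T, hT⟩ : ∃ T, T = bigLev p D := ⟨_, rfl⟩
  rw [← hT]
  intro R _ _ X hX
  let Xb : A → Matrix R R ℂ := fun y => X.submatrix (fun r => (y, r)) (fun r => (y, r))
  have hXb : ∀ y, 0 ≤ Xb y := fun y => submatrix_nonneg hX _
  let κ : A → ℝ := fun x => if x ∈ T then ((lev p x).card : ℝ)⁻¹ else 0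
  have hκ : ∀ x, κ x ≤ D⁻¹ := fun x => by
    simp only [κ]; split_ifs with h
    · exact inv_anti₀ hD (by rw [hT, bigLev, Finset.mem_filter] at h; exact h.2)
    · positivity
  have hκ0 : ∀ x, 0 ≤ κ x := fun x => by simp only [κ]; split_ifs <;> positivity
  set N : ℝ := (Fintype.card (SPerm p) : ℝ) with hN
  let Y : A → Matrix R R ℂ := fun x => N • (D⁻¹ • ∑ y, Xb y - κ x • ∑ y ∈ lev p x, Xb y)
  have hY : ∀ x, 0 ≤ Y x := fun x => by
    refine smul_nonneg_mat (by positivity) (sub_nonneg.mpr ?_)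
    refine (smul_mono_mat (hκ0 x) (Finset.sum_le_sum_of_subset_of_nonneg (Finset.subset_univ _)
      fun y _ _ => hXb y)).trans ?_
    have : 0 ≤ (D⁻¹ - κ x) • ∑ y, Xb y :=
      smul_nonneg_mat (sub_nonneg.mpr (hκ x)) (Finset.sum_nonneg fun y _ => hXb y)
    rw [sub_smul] at this
    exact sub_nonneg.mp this
  have h := blockdiag_nonneg Y hY
  rw [← sub_nonneg]
  convert h using 1
  ext ⟨x, r⟩ ⟨x', r'⟩
  -- one entry of the conjugated operator: a product of two signs times a permuted entry of `X`
  have key : ∀ g : SPerm p, (((sgnPerm g * dproj T) ⊗ₖ (1 : Matrix R R ℂ)) * X *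
      ((sgnPerm g * dproj T) ⊗ₖ (1 : Matrix R R ℂ))ᴴ) (x, r) (x', r') =
      ((((g.1 x : ℤˣ) : ℤ) : ℂ) * ((g.1 x' : ℤ) : ℂ)) *
        ((if x ∈ T then 1 else 0) * (if x' ∈ T then 1 else 0) *
          X (g.2.1 x, r) (g.2.1 x', r')) := by
    intro g
    have m : ∀ x, g.2.1 x ∈ T ↔ x ∈ T := fun x => by rw [hT]; exact mem_bigLev_iff (g.2.2 x)
    have hent : ∀ x y, (sgnPerm g * dproj T) x y =
        if y = g.2.1 x then (((g.1 x : ℤˣ) : ℤ) : ℂ) * (if x ∈ T then 1 else 0) else 0 := by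
      intro x y
      simp only [dproj, mul_diagonal, sgnPerm, of_apply]
      by_cases hy : y = g.2.1 x
      · subst hy; simp only [if_true, m]
      · simp only [if_neg hy, zero_mul]
    generalize sgnPerm g * dproj T = Z at hent
    simp only [mul_apply, Fintype.sum_prod_type, kroneckerMap_apply, conjTranspose_apply, one_apply,
      hent]
    simp only [ite_mul, mul_ite, mul_one, mul_zero, zero_mul, one_mul, Finset.sum_ite_eq,
      Finset.sum_ite_eq', Finset.mem_univ, if_true, apply_ite star, star_zero, star_unit]
    split_ifs <;> ring
  rw [Matrix.sub_apply, Matrix.sum_apply, Finset.sum_congr rfl fun g _ => key g]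
  simp only [of_apply]
  rw [Fintype.sum_prod_type_right]
  simp only [← Finset.sum_mul]
  by_cases hx : x = x'
  · subst hx
    simp only [unit_sq, if_true, Matrix.smul_apply, kroneckerMap_apply, one_apply_eq, one_mul,
      Finset.sum_const, Finset.card_univ, Y, Matrix.sub_apply, Matrix.sum_apply, nsmul_eq_mul, mul_one,
      Complex.real_smul]
    simp only [← Finset.mul_sum]
    simp only [ptraceLeft, of_apply, Xb, submatrix_apply, κ]
    have hc : ((lev p x).card : ℂ) ≠ 0 := by
      have : x ∈ lev p x := by simp [mem_lev]
      exact_mod_cast (Finset.card_pos.mpr ⟨x, this⟩).ne'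
    have h3 := sum_levelPerms p x (fun y => X (y, r) (y, r'))
    have h4 : ∑ e : levelPerms p, X (e.1 x, r) (e.1 x, r') =
        ((lev p x).card : ℂ)⁻¹ * (Fintype.card (levelPerms p) * ∑ y ∈ lev p x, X (y, r) (y, r')) := by
      rw [← h3, ← mul_assoc, inv_mul_cancel₀ hc, one_mul]
    rw [h4, hN, Fintype.card_prod]
    by_cases hxT : x ∈ T
    · simp only [hxT, if_true]; push_cast; ring
    · simp only [hxT, if_false]; push_cast; ring
  · rw [if_neg hx]
    simp only [sum_sign x x' hx, zero_mul, Finset.sum_const_zero, Matrix.smul_apply, kroneckerMap_apply,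
      one_apply_ne hx, smul_zero, sub_zero]

/-- A unitary on the traced-out factor does not change the marginal. -/
lemma ptraceLeft_unitary {R : Type} [Fintype R] [DecidableEq R] (W : Matrix A A ℂ)
    (hW : Wᴴ * W = 1) (X : Matrix (A × R) (A × R) ℂ) :
    ptraceLeft ((W ⊗ₖ (1 : Matrix R R ℂ)) * X * (W ⊗ₖ (1 : Matrix R R ℂ))ᴴ) = ptraceLeft X := by
  ext r r'
  simp only [ptraceLeft, of_apply, mul_apply, Fintype.sum_prod_type, kroneckerMap_apply,
    conjTranspose_apply, one_apply]
  simp only [ite_mul, mul_ite, mul_one, mul_zero, zero_mul, Finset.sum_ite_eq,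
    Finset.mem_univ, if_true, apply_ite star, star_zero]
  have hW' : ∀ a b, ∑ i, star (W i a) * W i b = if a = b then 1 else 0 := fun a b => by
    have := congrFun (congrFun hW a) b
    simpa [mul_apply, one_apply] using this
  have : ∀ i, (∑ b, (∑ a, W i a * X (a, r) (b, r')) * star (W i b)) =
      ∑ b, ∑ a, X (a, r) (b, r') * (star (W i b) * W i a) := fun i => by
    refine Finset.sum_congr rfl fun b _ => ?_
    rw [Finset.sum_mul]
    exact Finset.sum_congr rfl fun a _ => by ring
  simp only [this]
  rw [Finset.sum_comm]
  refine Finset.sum_congr rfl fun b _ => ?_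
  rw [Finset.sum_comm]
  simp only [← Finset.mul_sum, hW']
  simp

/-- Twirling is covariant under a change of basis. -/
lemma Twirls.conj {G : Type} [Fintype G] {U : G → Matrix A A ℂ} {Q : Matrix A A ℂ} {δ : ℝ}
    (h : Twirls U Q δ) {F : Matrix A A ℂ} (hF : Fᴴ * F = 1) :
    Twirls (fun g => F * U g * Fᴴ) (F * Q * Fᴴ) δ := by
  intro R _ _ X hX
  have hF' : F * Fᴴ = 1 := mul_eq_one_comm.mp hF
  have h1 := h R _ (conj_nonneg hX (Fᴴ ⊗ₖ (1 : Matrix R R ℂ)))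
  rw [ptraceLeft_unitary _ (by simpa using hF')] at h1
  have h2 := conj_mono h1 (F ⊗ₖ (1 : Matrix R R ℂ))
  refine le_trans (le_of_eq ?_) (h2.trans (le_of_eq ?_))
  · rw [Finset.mul_sum, Finset.sum_mul]
    refine Finset.sum_congr rfl fun g _ => ?_
    have : (F * U g * Fᴴ * (F * Q * Fᴴ)) ⊗ₖ (1 : Matrix R R ℂ) =
        (F ⊗ₖ (1 : Matrix R R ℂ)) * ((U g * Q) ⊗ₖ 1) * (Fᴴ ⊗ₖ 1) := by
      rw [← mul_kronecker_mul, ← mul_kronecker_mul]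
      simp only [mul_one]
      congr 1
      calc F * U g * Fᴴ * (F * Q * Fᴴ) = F * U g * (Fᴴ * F) * Q * Fᴴ := by simp only [mul_assoc]
        _ = _ := by rw [hF, mul_one]; simp only [mul_assoc]
    rw [this]
    simp only [conjTranspose_mul, mul_assoc]
  · rw [mul_smul_comm, smul_mul_assoc, conjTranspose_kronecker, ← mul_kronecker_mul,
      ← mul_kronecker_mul]
    simp [hF']

end Twirl

/-! ### Product distributions and typicality -/

section Typical

variable {A : Type} [Fintype A] [DecidableEq A]

/-- The product distribution `p^{⊗n}`. -/
def pn (p : A → ℝ) (n : ℕ) (x : Fin n → A) : ℝ := ∏ i, p (x i)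

/-- Shannon entropy in bits; `logb 2 0 = 0` gives the convention `0 log 0 = 0`. -/
def ent (p : A → ℝ) : ℝ := -∑ x, p x * Real.logb 2 (p x)

lemma pn_nonneg {p : A → ℝ} (hp : ∀ x, 0 ≤ p x) (n : ℕ) (x : Fin n → A) : 0 ≤ pn p n x :=
  Finset.prod_nonneg fun _ _ => hp _

lemma sum_pn (p : A → ℝ) (n : ℕ) : ∑ x, pn p n x = (∑ a, p a) ^ n := by
  simp only [pn]
  rw [← Fintype.prod_sum]; simp

/-- Chernoff bound: the mean of `f` exceeds a value above its expectation with exponentially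
small probability. -/
lemma chernoff {p : A → ℝ} (hp : ∀ x, 0 ≤ p x) (hp1 : ∑ x, p x = 1) (f : A → ℝ) {m : ℝ}
    (hm : ∑ x, p x * f x < m) :
    ∃ r : ℝ, 0 ≤ r ∧ r < 1 ∧ ∀ n : ℕ,
      ∑ x ∈ Finset.univ.filter (fun x : Fin n → A => n * m ≤ ∑ i, f (x i)), pn p n x ≤ r ^ n := by
  set g : ℝ → ℝ := fun s => ∑ x, p x * Real.exp (s * (f x - m)) with hg
  have hg0 : g 0 = 1 := by simp [hg, hp1]
  have hd : HasDerivAt g (∑ x, p x * (f x - m)) 0 := by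
    have : ∀ x ∈ (Finset.univ : Finset A),
        HasDerivAt (fun s => p x * Real.exp (s * (f x - m))) (p x * (f x - m)) 0 := by
      intro x _
      have h1 : HasDerivAt (fun s : ℝ => s * (f x - m)) (1 * (f x - m)) 0 :=
        (hasDerivAt_id (0:ℝ)).mul_const _
      have := (h1.exp.const_mul (p x))
      simpa using this
    exact (HasDerivAt.fun_sum this)
  have hneg : ∑ x, p x * (f x - m) < 0 := by
    simp only [mul_sub, Finset.sum_sub_distrib, ← Finset.sum_mul, hp1]; linarith
  -- the moment generating function has value `1` and negative slope at `0`
  have hs : ∃ s > 0, g s < 1 := by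
    have h := (hasDerivAt_iff_tendsto_slope.mp hd)
    have h2 := (h.eventually (gt_mem_nhds hneg))
    have h3 : ∀ᶠ s in nhdsWithin (0:ℝ) (Set.Ioi 0), slope g 0 s < 0 :=
      h2.filter_mono (nhdsWithin_mono _ (fun x hx => ne_of_gt hx))
    obtain ⟨s, h4, h5⟩ := (h3.and self_mem_nhdsWithin).exists
    refine ⟨s, h5, ?_⟩
    rw [slope_def_field, hg0, sub_zero] at h4
    have h5 : 0 < s := h5
    have := (div_neg_iff.mp h4)
    rcases this with h | h <;> linarith [h.1, h.2]
  obtain ⟨s, hs0, hs1⟩ := hs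
  refine ⟨g s, Finset.sum_nonneg fun x _ => mul_nonneg (hp x) (Real.exp_nonneg _), hs1, fun n => ?_⟩
  calc ∑ x ∈ Finset.univ.filter (fun x : Fin n → A => n * m ≤ ∑ i, f (x i)), pn p n x
      ≤ ∑ x ∈ Finset.univ.filter (fun x : Fin n → A => n * m ≤ ∑ i, f (x i)),
          pn (fun x => p x * Real.exp (s * (f x - m))) n x := by
        refine Finset.sum_le_sum fun x hx => ?_
        have hx := (Finset.mem_filter.mp hx).2
        simp only [pn, Finset.prod_mul_distrib]
        refine le_mul_of_one_le_right (Finset.prod_nonneg fun _ _ => hp _) ?_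
        rw [← Real.exp_sum, ← Finset.mul_sum]
        refine Real.one_le_exp (mul_nonneg hs0.le ?_)
        simp [Finset.sum_sub_distrib]; linarith
    _ ≤ ∑ x, pn (fun x => p x * Real.exp (s * (f x - m))) n x :=
        Finset.sum_le_sum_of_subset_of_nonneg (Finset.filter_subset _ _) fun x _ _ =>
          pn_nonneg (fun x => mul_nonneg (hp x) (Real.exp_nonneg _)) _ _
    _ = g s ^ n := sum_pn _ _

lemma logb_pn {p : A → ℝ} {n : ℕ} {x : Fin n → A} (h : 0 < pn p n x) :
    Real.logb 2 (pn p n x) = ∑ i, Real.logb 2 (p (x i)) := by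
  rw [pn, Real.logb_prod]
  intro i _ h0
  exact h.ne' (Finset.prod_eq_zero (Finset.mem_univ i) h0)

/-- Sequences more likely than `2^{-n(H - d)}` have exponentially small total mass. -/
lemma tail_hi {p : A → ℝ} (hp : ∀ x, 0 ≤ p x) (hp1 : ∑ x, p x = 1) {d : ℝ} (hd : 0 < d) :
    ∃ r : ℝ, 0 ≤ r ∧ r < 1 ∧ ∀ n : ℕ,
      ∑ x ∈ Finset.univ.filter (fun x : Fin n → A => (2:ℝ) ^ (-(n * (ent p - d))) < pn p n x),
        pn p n x ≤ r ^ n := by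
  obtain ⟨r, h0, h1, h⟩ := chernoff hp hp1 (fun x => Real.logb 2 (p x)) (m := -ent p + d)
    (by simp only [ent]; linarith)
  refine ⟨r, h0, h1, fun n => le_trans (Finset.sum_le_sum_of_subset_of_nonneg ?_
    fun x _ _ => pn_nonneg hp _ _) (h n)⟩
  intro x hx
  simp only [Finset.mem_filter, Finset.mem_univ, true_and] at hx ⊢
  have hpos : 0 < pn p n x := lt_trans (Real.rpow_pos_of_pos (by norm_num) _) hx
  rw [← logb_pn hpos]
  rw [← Real.lt_logb_iff_rpow_lt (by norm_num) hpos] at hx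
  linarith

/-- Sequences less likely than `2^{-n(H + d)}` have exponentially small total mass. -/
lemma tail_lo {p : A → ℝ} (hp : ∀ x, 0 ≤ p x) (hp1 : ∑ x, p x = 1) {d : ℝ} (hd : 0 < d) :
    ∃ r : ℝ, 0 ≤ r ∧ r < 1 ∧ ∀ n : ℕ,
      ∑ x ∈ Finset.univ.filter (fun x : Fin n → A => pn p n x < (2:ℝ) ^ (-(n * (ent p + d)))),
        pn p n x ≤ r ^ n := by
  obtain ⟨r, h0, h1, h⟩ := chernoff hp hp1 (fun x => -Real.logb 2 (p x)) (m := ent p + d)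
    (by simp only [ent, mul_neg, Finset.sum_neg_distrib]; linarith)
  refine ⟨r, h0, h1, fun n => le_trans ?_ (h n)⟩
  rw [Finset.sum_filter, Finset.sum_filter]
  refine Finset.sum_le_sum fun x _ => ?_
  rcases (pn_nonneg hp n x).eq_or_lt with h0 | hpos
  · simp [← h0]
  · by_cases hx : pn p n x < (2:ℝ) ^ (-(n * (ent p + d)))
    · rw [if_pos hx, if_pos]
      rw [Finset.sum_neg_distrib, ← logb_pn hpos]
      rw [← Real.logb_lt_iff_lt_rpow (by norm_num) hpos] at hx
      linarith
    · rw [if_neg hx]; split_ifs <;> linarith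

/-- A product distribution takes only polynomially many values. -/
lemma card_values (p : A → ℝ) (n : ℕ) :
    (Finset.univ.image (pn p n)).card ≤ (n + 1) ^ Fintype.card A := by
  -- the probability of a sequence depends only on its type, the vector of symbol counts
  let cnt : (Fin n → A) → (A → Fin (n + 1)) := fun x a =>
    ⟨(Finset.univ.filter fun i => x i = a).card, Nat.lt_succ_of_le
      ((Finset.card_filter_le _ _).trans (by simp))⟩
  have h : pn p n = (fun k : A → Fin (n + 1) => ∏ a, p a ^ (k a : ℕ)) ∘ cnt := by
    funext x
    simp only [pn, Function.comp, cnt]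
    rw [← Finset.prod_fiberwise Finset.univ x]
    refine Finset.prod_congr rfl fun a _ => ?_
    rw [Finset.prod_congr rfl (g := fun _ => p a) fun i hi => by rw [(Finset.mem_filter.mp hi).2]]
    simp
  rw [h, ← Finset.image_image]
  refine Finset.card_image_le.trans ((Finset.card_le_univ _).trans ?_)
  simp

/-- Sequences whose level set has fewer than `2^{n(H - 2d)}` elements have small total mass: either
they are more likely than `2^{-n(H - d)}`, or their level has mass at most `2^{-nd}`, and there are
only polynomially many levels. -/
lemma tail_lev {p : A → ℝ} (hp : ∀ x, 0 ≤ p x) (hp1 : ∑ x, p x = 1) {d : ℝ} (hd : 0 < d) :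
    ∃ r : ℝ, 0 ≤ r ∧ r < 1 ∧ ∀ n : ℕ,
      ∑ x ∈ Finset.univ.filter (fun x : Fin n → A =>
        x ∉ bigLev (pn p n) ((2:ℝ) ^ ((n:ℝ) * (ent p - 2 * d)))),
        pn p n x ≤ r ^ n + (n + 1 : ℝ) ^ Fintype.card A * (2:ℝ) ^ (-(n * d)) := by
  obtain ⟨r, h0, h1, h⟩ := tail_hi hp hp1 hd
  refine ⟨r, h0, h1, fun n => ?_⟩
  rw [← Finset.sum_filter_add_sum_filter_not _
    (fun x : Fin n → A => (2:ℝ) ^ (-(n * (ent p - d))) < pn p n x)]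
  refine add_le_add (le_trans (Finset.sum_le_sum_of_subset_of_nonneg ?_
    fun x _ _ => pn_nonneg hp _ _) (h n)) ?_
  · intro x hx; simp only [Finset.mem_filter, Finset.mem_univ, true_and] at hx ⊢; exact hx.2
  rw [← Finset.sum_fiberwise_of_maps_to (t := Finset.univ.image (pn p n)) (g := pn p n)
    (fun x _ => Finset.mem_image_of_mem _ (Finset.mem_univ x))]
  have key : ∀ v ∈ Finset.univ.image (pn p n), ∑ x ∈ Finset.filter (fun x => pn p n x = v)
      (Finset.filter (fun x => ¬ (2:ℝ) ^ (-(n * (ent p - d))) < pn p n x)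
        (Finset.filter (fun x : Fin n → A => x ∉ bigLev (pn p n) ((2:ℝ) ^ ((n:ℝ) * (ent p - 2 * d))))
          Finset.univ)), pn p n x ≤ (2:ℝ) ^ (-(n * d)) := by
    intro v _
    by_cases hne : (Finset.filter (fun x => pn p n x = v)
      (Finset.filter (fun x => ¬ (2:ℝ) ^ (-(n * (ent p - d))) < pn p n x)
        (Finset.filter (fun x : Fin n → A => x ∉ bigLev (pn p n) ((2:ℝ) ^ ((n:ℝ) * (ent p - 2 * d))))
          Finset.univ))).Nonempty
    · obtain ⟨y, hy⟩ := hne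
      simp only [Finset.mem_filter, Finset.mem_univ, true_and, bigLev, not_lt, not_le] at hy
      obtain ⟨⟨hy1, hy2⟩, hy3⟩ := hy
      calc _ ≤ ∑ x ∈ lev (pn p n) y, pn p n x := by
            refine Finset.sum_le_sum_of_subset_of_nonneg ?_ fun x _ _ => pn_nonneg hp _ _
            intro x hx
            rw [mem_lev, (Finset.mem_filter.mp hx).2, hy3]
        _ = (lev (pn p n) y).card * pn p n y := by
            rw [Finset.sum_congr rfl (g := fun _ => pn p n y) fun x hx => mem_lev.mp hx]
            simp
        _ ≤ (2:ℝ) ^ ((n:ℝ) * (ent p - 2 * d)) * (2:ℝ) ^ (-(n * (ent p - d))) :=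
            mul_le_mul hy1.le hy2 (pn_nonneg hp _ _) (Real.rpow_nonneg (by norm_num) _)
        _ = (2:ℝ) ^ (-(n * d)) := by
            rw [← Real.rpow_add (by norm_num)]; congr 1; ring
    · rw [Finset.not_nonempty_iff_eq_empty.mp hne, Finset.sum_empty]
      exact Real.rpow_nonneg (by norm_num) _
  refine (Finset.sum_le_sum key).trans ?_
  rw [Finset.sum_const, nsmul_eq_mul]
  refine mul_le_mul_of_nonneg_right ?_ (Real.rpow_nonneg (by norm_num) _)
  exact_mod_cast card_values p n

/-- Exponential decay beats polynomial growth. -/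
lemma tendsto_poly_exp (k : ℕ) {d : ℝ} (hd : 0 < d) :
    Filter.Tendsto (fun n : ℕ => (n + 1 : ℝ) ^ k * (2:ℝ) ^ (-(n * d))) Filter.atTop (nhds 0) := by
  set r : ℝ := (2:ℝ) ^ (-d)
  have hr0 : 0 < r := Real.rpow_pos_of_pos (by norm_num) _
  have hr : r < 1 := Real.rpow_lt_one_of_one_lt_of_neg (by norm_num) (by linarith)
  have h := tendsto_pow_const_mul_const_pow_of_abs_lt_one k (r := r) (by rw [abs_of_pos hr0]; exact hr)
  have h2 := ((Filter.tendsto_add_atTop_iff_nat 1).mpr h).mul_const r⁻¹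
  rw [zero_mul] at h2
  refine h2.congr fun n => ?_
  rw [show -((n:ℝ) * d) = (-d) * n by ring, Real.rpow_mul (by norm_num), Real.rpow_natCast, pow_succ]
  push_cast
  field_simp
  rfl

/-- Typicality: all atypical masses become negligible. -/
lemma typical {p : A → ℝ} (hp : ∀ x, 0 ≤ p x) (hp1 : ∑ x, p x = 1) {d e : ℝ} (hd : 0 < d)
    (he : 0 < e) : ∀ᶠ n : ℕ in Filter.atTop,
      ∑ x ∈ Finset.univ.filter (fun x : Fin n → A => (2:ℝ) ^ (-(n * (ent p - d))) < pn p n x),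
        pn p n x ≤ e ∧
      ∑ x ∈ Finset.univ.filter (fun x : Fin n → A => pn p n x < (2:ℝ) ^ (-(n * (ent p + d)))),
        pn p n x ≤ e ∧
      ∑ x ∈ Finset.univ.filter (fun x : Fin n → A =>
        x ∉ bigLev (pn p n) ((2:ℝ) ^ ((n:ℝ) * (ent p - 2 * d)))), pn p n x ≤ e := by
  obtain ⟨r₁, a0, a1, a⟩ := tail_hi hp hp1 hd
  obtain ⟨r₂, b0, b1, b⟩ := tail_lo hp hp1 hd
  obtain ⟨r₃, c0, c1, c⟩ := tail_lev hp hp1 hd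
  have ha := (tendsto_pow_atTop_nhds_zero_of_lt_one a0 a1).eventually (gt_mem_nhds he)
  have hb := (tendsto_pow_atTop_nhds_zero_of_lt_one b0 b1).eventually (gt_mem_nhds he)
  have hc := (((tendsto_pow_atTop_nhds_zero_of_lt_one c0 c1).add
    (tendsto_poly_exp (Fintype.card A) hd))).eventually (gt_mem_nhds (by simpa using he))
  filter_upwards [ha, hb, hc] with n h1 h2 h3
  exact ⟨(a n).trans h1.le, (b n).trans h2.le, (c n).trans h3.le⟩

end Typical

/-! ### Spectral form, tensor powers and entropy -/

section Spectral
open scoped MatrixOrder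

variable {A B : Type} [Fintype A] [DecidableEq A] [Fintype B] [DecidableEq B]

/-- The Hermitian matrix `U diag(p) Uᴴ`: for unitary `U`, the matrix with eigenvalues `p` in the
basis given by the columns of `U`. -/
def spec (U : Matrix A A ℂ) (p : A → ℝ) : Matrix A A ℂ :=
  U * diagonal (fun x => (p x : ℂ)) * Uᴴ

/-- The spectral projection `U 1_T Uᴴ` onto the span of the columns of `U` indexed by `T`. -/
def eproj (U : Matrix A A ℂ) (T : Finset A) : Matrix A A ℂ := U * dproj T * Uᴴ

lemma spec_eq_eproj (U : Matrix A A ℂ) (T : Finset A) :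
    eproj U T = spec U (fun x => if x ∈ T then 1 else 0) := by
  rw [eproj, spec, dproj]; congr 3; ext x; split_ifs <;> simp

lemma spec_mul {U : Matrix A A ℂ} (hU : Uᴴ * U = 1) (p q : A → ℝ) :
    spec U p * spec U q = spec U (fun x => p x * q x) := by
  simp only [spec]
  rw [show U * diagonal (fun x => (p x : ℂ)) * Uᴴ * (U * diagonal (fun x => (q x : ℂ)) * Uᴴ) =
    U * diagonal (fun x => (p x : ℂ)) * (Uᴴ * U) * diagonal (fun x => (q x : ℂ)) * Uᴴ by
      simp only [Matrix.mul_assoc], hU, Matrix.mul_one, Matrix.mul_assoc U, diagonal_mul_diagonal]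
  simp

lemma spec_mono (U : Matrix A A ℂ) {p q : A → ℝ} (h : ∀ x, p x ≤ q x) : spec U p ≤ spec U q := by
  simp only [spec]
  refine conj_mono ?_ U
  rw [← sub_nonneg, diagonal_sub]
  refine (Matrix.PosSemidef.diagonal fun x => ?_).nonneg
  rw [← Complex.ofReal_sub]
  exact Complex.zero_le_real.mpr (sub_nonneg.mpr (h x))

lemma spec_const {U : Matrix A A ℂ} (hU : Uᴴ * U = 1) (c : ℝ) : spec U (fun _ => c) = c • 1 := by
  have : diagonal (fun _ : A => (c : ℂ)) = c • (1 : Matrix A A ℂ) := by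
    ext i j; by_cases h : i = j <;> simp [h]
  rw [spec, this, Matrix.mul_smul, Matrix.smul_mul, Matrix.mul_one, mul_eq_one_comm.mp hU]

lemma spec_smul (U : Matrix A A ℂ) (c : ℝ) (p : A → ℝ) :
    spec U (fun x => c * p x) = c • spec U p := by
  have : diagonal (fun x : A => ((c * p x : ℝ) : ℂ)) = c • diagonal (fun x => (p x : ℂ)) := by
    ext i j; by_cases h : i = j <;> simp [h]
  rw [spec, this, Matrix.mul_smul, Matrix.smul_mul, spec]

lemma spec_star (U : Matrix A A ℂ) (p : A → ℝ) : (spec U p)ᴴ = spec U p := by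
  have : (diagonal (fun x => (p x : ℂ)))ᴴ = diagonal (fun x : A => (p x : ℂ)) := by
    rw [diagonal_conjTranspose]; congr 1; ext x; simp
  simp only [spec, conjTranspose_mul, conjTranspose_conjTranspose, this, Matrix.mul_assoc]

lemma rtr_spec {U : Matrix A A ℂ} (hU : Uᴴ * U = 1) (p : A → ℝ) : rtr (spec U p) = ∑ x, p x := by
  rw [spec, rtr_mul_comm, ← Matrix.mul_assoc, hU, Matrix.one_mul]
  simp [rtr, trace_diagonal]

lemma eproj_prop {U : Matrix A A ℂ} (hU : Uᴴ * U = 1) (T : Finset A) :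
    (eproj U T)ᴴ = eproj U T ∧ eproj U T * eproj U T = eproj U T := by
  constructor
  · rw [spec_eq_eproj, spec_star]
  · rw [spec_eq_eproj, spec_mul hU]; congr 1; ext x; split_ifs <;> simp

/-- The weight of a state outside a spectral projection is the mass of its spectrum outside `T`. -/
lemma eproj_err {U : Matrix A A ℂ} (hU : Uᴴ * U = 1) (T : Finset A) (p : A → ℝ) :
    rtr ((1 - eproj U T) * spec U p) = ∑ x ∈ Finset.univ.filter (· ∉ T), p x := by
  rw [Matrix.sub_mul, Matrix.one_mul, rtr_sub, spec_eq_eproj, spec_mul hU, rtr_spec hU, rtr_spec hU,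
    ← Finset.sum_sub_distrib, Finset.sum_filter]
  refine Finset.sum_congr rfl fun x _ => ?_
  by_cases h : x ∈ T <;> simp [h]

/-- On a set where `p ≥ D⁻¹`, the spectral projection is dominated by `D` times the state. -/
lemma eproj_le {U : Matrix A A ℂ} {T : Finset A} {p : A → ℝ} {D : ℝ}
    (hp : ∀ x, 0 ≤ p x) (hD : 0 ≤ D) (h : ∀ x ∈ T, 1 ≤ D * p x) : eproj U T ≤ D • spec U p := by
  rw [spec_eq_eproj, ← spec_smul]
  refine spec_mono U fun x => ?_
  split_ifs with hx
  · exact h x hx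
  · exact mul_nonneg hD (hp x)

lemma eproj_conj_le {U : Matrix A A ℂ} (hU : Uᴴ * U = 1) {T : Finset A} {p : A → ℝ} {a : ℝ}
    (ha : 0 ≤ a) (h : ∀ x ∈ T, p x ≤ a) : eproj U T * spec U p * eproj U T ≤ a • 1 := by
  rw [spec_eq_eproj, spec_mul hU, spec_mul hU, ← spec_const hU]
  refine spec_mono U fun x => ?_
  split_ifs with hx
  · simpa using h x hx
  · simpa using ha

lemma eproj_conj_le_self {U : Matrix A A ℂ} (hU : Uᴴ * U = 1) {T : Finset A} {p : A → ℝ}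
    (hp : ∀ x, 0 ≤ p x) : eproj U T * spec U p * eproj U T ≤ spec U p := by
  rw [spec_eq_eproj, spec_mul hU, spec_mul hU]
  refine spec_mono U fun x => ?_
  split_ifs with hx
  · simp
  · simpa using hp x

/-- The `n`-fold tensor power, with rows and columns indexed by sequences. -/
def tpow (n : ℕ) (M : Matrix A B ℂ) : Matrix (Fin n → A) (Fin n → B) ℂ :=
  Matrix.of fun x y => ∏ i, M (x i) (y i)

lemma tpow_mul {C : Type} (n : ℕ) (M : Matrix A B ℂ) (N : Matrix B C ℂ) :
    tpow n (M * N) = tpow n M * tpow n N := by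
  ext x y
  simp only [tpow, of_apply, Matrix.mul_apply, Fintype.prod_sum, Finset.prod_mul_distrib]

lemma tpow_star (n : ℕ) (M : Matrix A B ℂ) : tpow n Mᴴ = (tpow n M)ᴴ := by
  ext x y; simp [tpow]

lemma tpow_diagonal (n : ℕ) (f : A → ℂ) :
    tpow n (diagonal f) = diagonal (fun x => ∏ i, f (x i)) := by
  ext x y
  simp only [tpow, of_apply, diagonal_apply]
  split_ifs with h
  · subst h; simp
  · obtain ⟨i, hi⟩ := Function.ne_iff.mp h
    exact Finset.prod_eq_zero (Finset.mem_univ i) (by simp [hi])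

lemma tpow_one (n : ℕ) : tpow n (1 : Matrix A A ℂ) = 1 := by
  rw [← diagonal_one, tpow_diagonal]; simp

lemma tpow_iso {U : Matrix A B ℂ} (hU : Uᴴ * U = 1) (n : ℕ) : (tpow n U)ᴴ * tpow n U = 1 := by
  rw [← tpow_star, ← tpow_mul, hU, tpow_one]

lemma tpow_spec (n : ℕ) (U : Matrix A A ℂ) (p : A → ℝ) :
    tpow n (spec U p) = spec (tpow n U) (pn p n) := by
  simp only [spec, tpow_mul, tpow_diagonal, tpow_star]
  congr 3; ext x; simp [pn]

/-- The spectral theorem in terms of `spec`. -/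
lemma exists_spec {M : Matrix A A ℂ} (hM : M.PosSemidef) :
    ∃ (U : Matrix A A ℂ) (p : A → ℝ), Uᴴ * U = 1 ∧ (∀ x, 0 ≤ p x) ∧ M = spec U p := by
  refine ⟨hM.1.eigenvectorUnitary, hM.1.eigenvalues, ?_, hM.eigenvalues_nonneg, ?_⟩
  · exact (Matrix.mem_unitaryGroup_iff'.mp hM.1.eigenvectorUnitary.2)
  · have h := hM.1.spectral_theorem
    rw [Unitary.conjStarAlgAut_apply] at h
    exact h

lemma charpoly_spec {U : Matrix A A ℂ} (hU : Uᴴ * U = 1) (p : A → ℝ) :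
    (spec U p).charpoly.roots = Finset.univ.val.map (fun x => (p x : ℂ)) := by
  rw [spec, Matrix.charpoly_mul_comm, ← Matrix.mul_assoc, hU, Matrix.one_mul,
    Matrix.charpoly_diagonal]
  exact Eq.trans (by rw [Multiset.map_map]; rfl) (Polynomial.roots_multiset_prod_X_sub_C _)

/-- The von Neumann entropy is the Shannon entropy of the spectrum, whichever diagonalization is used:
the eigenvalues with multiplicity are the roots of the characteristic polynomial. -/
lemma vnEntropy_spec {U : Matrix A A ℂ} (hU : Uᴴ * U = 1) (p : A → ℝ) :
    vnEntropy (spec U p) = ent p := by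
  have h : (spec U p).IsHermitian := spec_star U p
  rw [vnEntropy, dif_pos h, ent]
  have h1 := h.roots_charpoly_eq_eigenvalues
  rw [charpoly_spec hU] at h1
  have h2 := congrArg (fun s => (Multiset.map (fun z : ℂ => z.re * Real.logb 2 z.re) s).sum) h1
  simp only [Multiset.map_map, Function.comp] at h2
  simp only [Finset.sum]
  simpa using h2.symm

/-- Entropy does not depend on the labelling of the basis. -/
lemma vnEntropy_reindex (e : B ≃ A) {M : Matrix A A ℂ} (hM : M.PosSemidef) :
    vnEntropy (M.submatrix e e) = vnEntropy M := by
  obtain ⟨U, p, hU, -, rfl⟩ := exists_spec hM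
  have : (spec U p).submatrix e e = spec (U.submatrix e e) (p ∘ e) := by
    simp only [spec, conjTranspose_submatrix]
    rw [← submatrix_mul_equiv _ _ _ e, ← submatrix_mul_equiv _ _ _ e, submatrix_diagonal_equiv]
    rfl
  rw [this, vnEntropy_spec, vnEntropy_spec hU]
  · simp only [ent, Function.comp]
    congr 1
    exact Equiv.sum_comp e (fun x => p x * Real.logb 2 (p x))
  · rw [conjTranspose_submatrix, submatrix_mul_equiv, hU, submatrix_one_equiv]

/-- Entropy is additive on product states. -/
lemma vnEntropy_kronecker {M : Matrix A A ℂ} {N : Matrix B B ℂ} (hM : M.PosSemidef)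
    (hN : N.PosSemidef) (hM1 : M.trace = 1) (hN1 : N.trace = 1) :
    vnEntropy (M ⊗ₖ N) = vnEntropy M + vnEntropy N := by
  obtain ⟨U, p, hU, hp, rfl⟩ := exists_spec hM
  obtain ⟨V, q, hV, hq, rfl⟩ := exists_spec hN
  have hp1 : ∑ x, p x = 1 := by rw [← rtr_spec hU, rtr, hM1]; simp
  have hq1 : ∑ x, q x = 1 := by rw [← rtr_spec hV, rtr, hN1]; simp
  have : spec U p ⊗ₖ spec V q = spec (U ⊗ₖ V) (fun x => p x.1 * q x.2) := by
    simp only [spec, mul_kronecker_mul, conjTranspose_kronecker]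
    congr 2
    rw [diagonal_kronecker_diagonal]
    congr 1; ext x; simp
  rw [this, vnEntropy_spec, vnEntropy_spec hU, vnEntropy_spec hV]
  · simp only [ent, Fintype.sum_prod_type]
    have : ∀ x y, p x * q y * Real.logb 2 (p x * q y) =
        (p x * Real.logb 2 (p x)) * q y + p x * (q y * Real.logb 2 (q y)) := by
      intro x y
      by_cases h1 : p x = 0
      · simp [h1]
      by_cases h2 : q y = 0
      · simp [h2]
      rw [Real.logb_mul h1 h2]; ring
    simp only [this, Finset.sum_add_distrib, ← Finset.mul_sum, ← Finset.sum_mul, hp1, hq1]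
    ring
  · rw [conjTranspose_kronecker, ← mul_kronecker_mul, hU, hV, one_kronecker_one]

end Spectral

/-! ### Typical projections and the transpose trick -/

section Packages
open scoped MatrixOrder

variable {A B C ι κ R : Type} [Fintype A] [DecidableEq A] [Fintype B] [DecidableEq B]
  [Fintype C] [DecidableEq C] [Fintype ι] [DecidableEq ι] [Fintype κ] [DecidableEq κ]
  [Fintype R] [DecidableEq R]

lemma rtr_submatrix (e : ι ≃ κ) (X : Matrix κ κ ℂ) : rtr (X.submatrix e e) = rtr X := by
  simp only [rtr, trace, diag_apply, submatrix_apply]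
  rw [Equiv.sum_comp e (fun x => X x x)]

lemma submatrix_proj_prop (e : ι ≃ κ) {Q : Matrix κ κ ℂ} (h : Qᴴ = Q ∧ Q * Q = Q) :
    (Q.submatrix e e)ᴴ = Q.submatrix e e ∧ Q.submatrix e e * Q.submatrix e e = Q.submatrix e e := by
  rw [conjTranspose_submatrix, h.1, submatrix_mul_equiv, h.2]; simp

lemma submatrix_err (e : ι ≃ κ) (Q X : Matrix κ κ ℂ) :
    rtr ((1 - Q.submatrix e e) * X.submatrix e e) = rtr ((1 - Q) * X) := by
  rw [← rtr_submatrix e, ← submatrix_mul_equiv _ _ _ e, submatrix_sub]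
  simp

/-- Projections on which an i.i.d. state has almost full weight and small eigenvalues, along any
labelling `e` of the basis by sequences. -/
lemma exists_typ_hi {σ : Matrix A A ℂ} (hσ : 0 ≤ σ) (hσ1 : rtr σ = 1) {d e₀ : ℝ} (hd : 0 < d)
    (he : 0 < e₀) : ∀ᶠ n : ℕ in Filter.atTop, ∀ {ι : Type} [Fintype ι] [DecidableEq ι]
      (e : ι ≃ (Fin n → A)), ∃ Q : Matrix ι ι ℂ, (Qᴴ = Q ∧ Q * Q = Q) ∧
        rtr ((1 - Q) * (tpow n σ).submatrix e e) ≤ e₀ ∧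
        Q * (tpow n σ).submatrix e e * Q ≤ ((2:ℝ) ^ (-(n * (vnEntropy σ - d)))) • (1 : Matrix ι ι ℂ) ∧
        Q * (tpow n σ).submatrix e e * Q ≤ (tpow n σ).submatrix e e := by
  obtain ⟨U, p, hU, hp, rfl⟩ := exists_spec hσ.posSemidef
  rw [rtr_spec hU] at hσ1
  rw [vnEntropy_spec hU]
  filter_upwards [typical hp hσ1 hd he] with n hn ι _ _ e
  set T : Finset (Fin n → A) := Finset.univ.filter fun x => pn p n x ≤ (2:ℝ) ^ (-(n * (ent p - d)))
  have hUn := tpow_iso hU n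
  refine ⟨(eproj (tpow n U) T).submatrix e e, submatrix_proj_prop e (eproj_prop hUn T), ?_, ?_, ?_⟩
  · rw [submatrix_err, tpow_spec, eproj_err hUn]
    refine le_trans (le_of_eq (Finset.sum_congr ?_ fun _ _ => rfl)) hn.1
    ext x; simp [T]
  · have := submatrix_mono (eproj_conj_le hUn (T := T) (p := pn p n)
      (Real.rpow_nonneg (by norm_num) (-(n * (ent p - d)))) fun x hx => (Finset.mem_filter.mp hx).2) e
    rw [tpow_spec, submatrix_mul_equiv, submatrix_mul_equiv]
    refine this.trans (le_of_eq ?_)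
    rw [submatrix_smul]; simp
  · rw [tpow_spec, submatrix_mul_equiv, submatrix_mul_equiv]
    exact submatrix_mono (eproj_conj_le_self hUn (pn_nonneg hp n)) e

/-- Projections on which an i.i.d. state has almost full weight and eigenvalues bounded below, along
any labelling `e` of the basis by sequences. -/
lemma exists_typ_lo {σ : Matrix A A ℂ} (hσ : 0 ≤ σ) (hσ1 : rtr σ = 1) {d e₀ : ℝ} (hd : 0 < d)
    (he : 0 < e₀) : ∀ᶠ n : ℕ in Filter.atTop, ∀ {ι : Type} [Fintype ι] [DecidableEq ι]
      (e : ι ≃ (Fin n → A)), ∃ Q : Matrix ι ι ℂ, (Qᴴ = Q ∧ Q * Q = Q) ∧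
        rtr ((1 - Q) * (tpow n σ).submatrix e e) ≤ e₀ ∧
        Q ≤ ((2:ℝ) ^ (n * (vnEntropy σ + d))) • (tpow n σ).submatrix e e := by
  obtain ⟨U, p, hU, hp, rfl⟩ := exists_spec hσ.posSemidef
  rw [rtr_spec hU] at hσ1
  rw [vnEntropy_spec hU]
  filter_upwards [typical hp hσ1 hd he] with n hn ι _ _ e
  set T : Finset (Fin n → A) := Finset.univ.filter fun x => (2:ℝ) ^ (-(n * (ent p + d))) ≤ pn p n x
  have hUn := tpow_iso hU n
  refine ⟨(eproj (tpow n U) T).submatrix e e, submatrix_proj_prop e (eproj_prop hUn T), ?_, ?_⟩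
  · rw [submatrix_err, tpow_spec, eproj_err hUn]
    refine le_trans (le_of_eq (Finset.sum_congr ?_ fun _ _ => rfl)) hn.2.1
    ext x; simp [T]
  · have h := submatrix_mono (eproj_le (U := tpow n U) (T := T) (p := pn p n)
      (D := (2:ℝ) ^ (n * (ent p + d))) (pn_nonneg hp n)
      (Real.rpow_nonneg (by norm_num) (n * (ent p + d))) fun x hx => ?_) e
    · rw [submatrix_smul] at h
      rwa [tpow_spec]
    · have := mul_le_mul_of_nonneg_left (Finset.mem_filter.mp hx).2
        (Real.rpow_nonneg (by norm_num : (0:ℝ) ≤ 2) (n * (ent p + d)))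
      rwa [← Real.rpow_add (by norm_num), add_neg_cancel, Real.rpow_zero] at this

/-- The twirling unitaries of an i.i.d. state: signed permutations of its product eigenbasis that
preserve the eigenvalue. They twirl the span of the large eigenspaces, which has almost full weight,
with constant about `2^{-nH}`. -/
lemma twirl_typ {F : Matrix A A ℂ} (hF : Fᴴ * F = 1) {p : A → ℝ} (hp : ∀ x, 0 ≤ p x)
    (hp1 : ∑ x, p x = 1) {d e₀ : ℝ} (hd : 0 < d) (he : 0 < e₀) :
    ∀ᶠ n : ℕ in Filter.atTop, ∃ Q : Matrix (Fin n → A) (Fin n → A) ℂ, (Qᴴ = Q ∧ Q * Q = Q) ∧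
      rtr ((1 - Q) * tpow n (spec F p)) ≤ e₀ ∧
      Twirls (fun g : SPerm (pn p n) => tpow n F * sgnPerm g * (tpow n F)ᴴ) Q
        (((2:ℝ) ^ ((n:ℝ) * (ent p - 2 * d)))⁻¹) := by
  filter_upwards [typical hp hp1 hd he] with n hn
  have hFn := tpow_iso hF n
  refine ⟨eproj (tpow n F) (bigLev (pn p n) ((2:ℝ) ^ ((n:ℝ) * (ent p - 2 * d)))),
    eproj_prop hFn _, ?_, ?_⟩
  · rw [tpow_spec, eproj_err hFn]
    exact hn.2.2
  · exact (twirl_basis (pn p n) (Real.rpow_pos_of_pos (by norm_num) _)).conj hFn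

lemma sgn_conj_iso {p : A → ℝ} {F : Matrix A A ℂ} (hF : Fᴴ * F = 1) (g : SPerm p) :
    (F * sgnPerm g * Fᴴ)ᴴ * (F * sgnPerm g * Fᴴ) = 1 := by
  simp only [conjTranspose_mul, conjTranspose_conjTranspose]
  rw [show F * ((sgnPerm g)ᴴ * Fᴴ) * (F * sgnPerm g * Fᴴ) =
    F * ((sgnPerm g)ᴴ * ((Fᴴ * F) * sgnPerm g)) * Fᴴ by simp only [Matrix.mul_assoc], hF,
    Matrix.one_mul, sgnPerm_star_mul, Matrix.mul_one, mul_eq_one_comm.mp hF]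

/-- The marginal determines the expectation of operators on the kept factor. -/
lemma rtr_rgt (e : ι ≃ κ × R) (Y : Matrix R R ℂ) (X : Matrix ι ι ℂ) :
    rtr (rgt e Y * X) = rtr (Y * marg e X) := by
  rw [← rtr_submatrix e.symm, ← submatrix_mul_equiv _ _ _ e.symm]
  simp only [rgt, marg, submatrix_submatrix, Equiv.self_comp_symm, submatrix_id_id]
  simp only [rtr, trace, diag_apply, Matrix.mul_apply, Fintype.sum_prod_type, ptraceLeft, of_apply,
    submatrix_apply, kroneckerMap_apply, Matrix.one_apply, ite_mul, one_mul, zero_mul,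
    Finset.mul_sum]
  congr 1
  have h : ∀ (k : κ) (r : R), (∑ k' : κ, ∑ r' : R, if k = k' then
      Y r r' * X (e.symm (k', r')) (e.symm (k, r)) else 0) =
      ∑ r' : R, Y r r' * X (e.symm (k, r')) (e.symm (k, r)) := fun k r => by
    rw [Finset.sum_comm]; simp
  simp only [h]
  rw [Finset.sum_comm]
  exact Finset.sum_congr rfl fun r _ => Finset.sum_comm

lemma lft_eq_rgt (e : ι ≃ κ × R) (Y : Matrix κ κ ℂ) :
    lft e Y = rgt (e.trans (Equiv.prodComm _ _)) Y := by
  ext i j; simp [lft, rgt, mul_comm]; left; rfl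

lemma err_rgt (e : ι ≃ κ × R) (Y : Matrix R R ℂ) (X : Matrix ι ι ℂ) :
    rtr ((1 - rgt e Y) * X) = rtr ((1 - Y) * marg e X) := by
  rw [← rtr_rgt, rgt_sub, rgt_one]

lemma err_lft (e : ι ≃ κ × R) (Y : Matrix κ κ ℂ) (X : Matrix ι ι ℂ) :
    rtr ((1 - lft e Y) * X) = rtr ((1 - Y) * marg (e.trans (Equiv.prodComm _ _)) X) := by
  rw [lft_eq_rgt, err_rgt]

lemma rtr_marg (e : ι ≃ κ × R) (X : Matrix ι ι ℂ) : rtr (marg e X) = rtr X := by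
  rw [← Matrix.one_mul (marg e X), ← rtr_rgt, rgt_one, Matrix.one_mul]

/-- Marginals of tensor powers are tensor powers of marginals. -/
lemma marg_tpow {ι' κ' R' : Type} [Fintype ι'] [DecidableEq ι'] [Fintype κ'] [DecidableEq κ']
    [Fintype R'] [DecidableEq R'] {n : ℕ} (e' : ι' ≃ κ' × R') (X : Matrix ι' ι' ℂ)
    (e : ι ≃ κ × R) (zι : ι ≃ (Fin n → ι')) (zκ : κ ≃ (Fin n → κ')) (zR : R ≃ (Fin n → R'))
    (h : ∀ k r i, zι (e.symm (k, r)) i = e'.symm (zκ k i, zR r i)) :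
    marg e ((tpow n X).submatrix zι zι) = (tpow n (marg e' X)).submatrix zR zR := by
  ext r r'
  simp only [marg, ptraceLeft, of_apply, submatrix_apply, tpow, h]
  rw [Equiv.sum_comp zκ (fun k => ∏ i, X (e'.symm (k i, zR r i)) (e'.symm (k i, zR r' i))),
    Fintype.prod_sum]

/-- Singular value decomposition of a square matrix `M`, with `p` the spectrum of `M * Mᴴ`. -/
lemma exists_svd (M : Matrix A A ℂ) : ∃ (F W : Matrix A A ℂ) (p : A → ℝ), Fᴴ * F = 1 ∧ Wᴴ * W = 1 ∧
    (∀ x, 0 ≤ p x) ∧ M * Mᴴ = spec F p ∧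
    M = F * diagonal (fun x => ((Real.sqrt (p x) : ℝ) : ℂ)) * W := by
  obtain ⟨F, p, hF, hp, hM⟩ := exists_spec (Matrix.posSemidef_self_mul_conjTranspose M)
  set N := Fᴴ * M with hN
  have hNN : N * Nᴴ = diagonal (fun x => (p x : ℂ)) := by
    rw [hN, conjTranspose_mul, conjTranspose_conjTranspose,
      show Fᴴ * M * (Mᴴ * F) = Fᴴ * (M * Mᴴ) * F by simp only [Matrix.mul_assoc], hM, spec,
      show Fᴴ * (F * diagonal (fun x => (p x : ℂ)) * Fᴴ) * F =
        (Fᴴ * F) * diagonal (fun x => (p x : ℂ)) * (Fᴴ * F) by simp only [Matrix.mul_assoc], hF,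
      Matrix.one_mul, Matrix.mul_one]
  have hrow : ∀ x x', ∑ y, N x y * star (N x' y) = if x = x' then (p x : ℂ) else 0 := by
    intro x x'
    have := congrFun (congrFun hNN x) x'
    rwa [Matrix.mul_apply, diagonal_apply] at this
  -- the nonzero rows of `N`, normalized, are orthonormal and extend to a basis
  let v : A → EuclideanSpace ℂ A := fun x =>
    WithLp.toLp 2 fun y => N x y / ((Real.sqrt (p x) : ℝ) : ℂ)
  let s : Set A := {x | p x ≠ 0}
  have hv : Orthonormal ℂ (s.domRestrict v) := by
    rw [orthonormal_iff_ite]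
    rintro ⟨x, hx⟩ ⟨x', hx'⟩
    have hx : p x ≠ 0 := hx
    have h1 : inner ℂ (s.domRestrict v ⟨x, ‹_›⟩) (s.domRestrict v ⟨x', hx'⟩) =
        (∑ y, N x' y * star (N x y)) / (((Real.sqrt (p x') : ℝ) : ℂ) * ((Real.sqrt (p x) : ℝ) : ℂ)) := by
      change inner ℂ (v x) (v x') = _
      simp only [PiLp.inner_apply, RCLike.inner_apply, Finset.sum_div]
      refine Finset.sum_congr rfl fun y _ => ?_
      simp only [v, map_div₀, Complex.conj_ofReal, Complex.star_def]
      rw [div_mul_div_comm]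
    rw [h1, hrow]
    by_cases hxx : x = x'
    · subst hxx
      rw [if_pos rfl, if_pos rfl, ← Complex.ofReal_mul, Real.mul_self_sqrt (hp x), div_self]
      exact_mod_cast hx
    · rw [if_neg (Ne.symm hxx), if_neg (by simpa using hxx), zero_div]
  obtain ⟨b, hb⟩ := hv.exists_orthonormalBasis_extension_of_card_eq (by simp)
  let W : Matrix A A ℂ := Matrix.of fun x y => b x y
  have hW : W * Wᴴ = 1 := by
    ext x x'
    have := orthonormal_iff_ite.mp b.orthonormal x' x
    simp only [PiLp.inner_apply, RCLike.inner_apply] at this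
    rw [Matrix.mul_apply, Matrix.one_apply]
    simp only [W, of_apply, conjTranspose_apply]
    rw [show (if x = x' then (1:ℂ) else 0) = if x' = x then 1 else 0 by simp [eq_comm], ← this]
    rfl
  refine ⟨F, W, p, hF, mul_eq_one_comm.mp hW, hp, hM, ?_⟩
  have hNW : N = diagonal (fun x => ((Real.sqrt (p x) : ℝ) : ℂ)) * W := by
    ext x y
    rw [diagonal_mul]
    simp only [W, of_apply]
    by_cases hx : p x = 0
    · rw [hx, Real.sqrt_zero, Complex.ofReal_zero, zero_mul]
      have h0 := hrow x x
      rw [if_pos rfl, hx, Complex.ofReal_zero] at h0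
      have h2 : ∑ y, Complex.normSq (N x y) = 0 := by
        have := congrArg Complex.re h0
        simpa [Complex.mul_conj] using this
      rw [Finset.sum_eq_zero_iff_of_nonneg fun _ _ => Complex.normSq_nonneg _] at h2
      exact Complex.normSq_eq_zero.mp (h2 y (Finset.mem_univ y))
    · rw [hb x hx]
      have : ((Real.sqrt (p x) : ℝ) : ℂ) ≠ 0 := by
        exact_mod_cast (Real.sqrt_ne_zero (hp x)).mpr hx
      simp only [v]
      field_simp
  rw [Matrix.mul_assoc, ← hNW, hN, ← Matrix.mul_assoc, mul_eq_one_comm.mp hF, Matrix.one_mul]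

/-- The transpose trick. With `M = F √p W`, a signed permutation `S` of the eigenbasis that preserves
the eigenvalue commutes with `√p`, so applied to the rows of `M^{⊗n}` it acts as `Wᴴ S W` on the
columns. A twirling unitary on the purifying system can thus be replaced by a unitary on the other
half of the purification. -/
lemma exists_transpose_unitary {n : ℕ} {M F W : Matrix A A ℂ} {p : A → ℝ} (hp : ∀ x, 0 ≤ p x)
    (hF : Fᴴ * F = 1) (hW : Wᴴ * W = 1)
    (hM : M = F * diagonal (fun x => ((Real.sqrt (p x) : ℝ) : ℂ)) * W) (g : SPerm (pn p n)) :
    ∃ X : Matrix (Fin n → A) (Fin n → A) ℂ, Xᴴ * X = 1 ∧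
      (tpow n F * sgnPerm g * (tpow n F)ᴴ) * tpow n M = tpow n M * Xᵀ := by
  have hMn : tpow n M = tpow n F * diagonal (fun x => ((Real.sqrt (pn p n x) : ℝ) : ℂ)) * tpow n W := by
    rw [hM, tpow_mul, tpow_mul, tpow_diagonal]
    congr 3; ext x
    rw [pn, Real.sqrt_prod _ fun i _ => hp _]
    simp
  have hFn := tpow_iso hF n
  have hWn := mul_eq_one_comm.mp (tpow_iso hW n)
  set Fn := tpow n F
  set Wn := tpow n W
  set D := diagonal (fun x => ((Real.sqrt (pn p n x) : ℝ) : ℂ)) with hD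
  have hc : sgnPerm g * D = D * sgnPerm g := sgnPerm_comm g (fun r => ((Real.sqrt r : ℝ) : ℂ))
  set S := sgnPerm g with hS
  have hSS : S * Sᴴ = 1 := sgnPerm_mul_star g
  refine ⟨(Wnᴴ * S * Wn)ᵀ, ?_, ?_⟩
  · have h1 : (Wnᴴ * S * Wn) * (Wnᴴ * S * Wn)ᴴ = 1 := by
      simp only [conjTranspose_mul, conjTranspose_conjTranspose]
      rw [show Wnᴴ * S * Wn * (Wnᴴ * (Sᴴ * Wn)) = Wnᴴ * (S * ((Wn * Wnᴴ) * Sᴴ)) * Wn by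
        simp only [Matrix.mul_assoc], hWn, Matrix.one_mul, hSS, Matrix.mul_one, mul_eq_one_comm.mp hWn]
    have := congrArg transpose h1
    rw [transpose_mul, transpose_one] at this
    exact this
  · rw [hMn, transpose_transpose,
      show Fn * S * Fnᴴ * (Fn * D * Wn) = Fn * S * (Fnᴴ * Fn) * D * Wn by
        simp only [Matrix.mul_assoc], hFn, Matrix.mul_one, Matrix.mul_assoc Fn S D, hc,
      show Fn * D * Wn * (Wnᴴ * S * Wn) = Fn * D * (Wn * Wnᴴ) * S * Wn by
        simp only [Matrix.mul_assoc], hWn, Matrix.mul_one]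
    simp only [Matrix.mul_assoc]

end Packages

/-! ### Coding for i.i.d. tripartite states -/

section Asymptotic
open scoped MatrixOrder

variable {A B C : Type} [Fintype A] [DecidableEq A] [Fintype B] [DecidableEq B]
  [Fintype C] [DecidableEq C]

/-- Pairs of sequences as sequences of pairs. -/
def zip2 (X Y : Type) (n : ℕ) : (Fin n → X) × (Fin n → Y) ≃ (Fin n → X × Y) :=
  (Equiv.arrowProdEquivProdArrow (Fin n) (fun _ => X) (fun _ => Y)).symm

/-- Triples of sequences as sequences of triples. -/
def zip3 (A C B : Type) (n : ℕ) :
    ((Fin n → A) × (Fin n → C)) × (Fin n → B) ≃ (Fin n → (A × C) × B) :=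
  (Equiv.prodCongr (zip2 A C n) (Equiv.refl _)).trans (zip2 (A × C) B n)

/-- The `n`-fold tensor power of a tripartite state, as a tripartite state. -/
def tri (n : ℕ) (τ : Matrix ((A × C) × B) ((A × C) × B) ℂ) :
    Matrix (((Fin n → A) × (Fin n → C)) × (Fin n → B))
      (((Fin n → A) × (Fin n → C)) × (Fin n → B)) ℂ :=
  (tpow n τ).submatrix (zip3 A C B n) (zip3 A C B n)

lemma tpow_nonneg (n : ℕ) {σ : Matrix A A ℂ} (h : 0 ≤ σ) : 0 ≤ tpow n σ := by
  obtain ⟨U, p, hU, hp, rfl⟩ := exists_spec h.posSemidef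
  rw [tpow_spec, spec]
  refine conj_nonneg ?_ _
  exact (Matrix.PosSemidef.diagonal fun x => Complex.zero_le_real.mpr (pn_nonneg hp n x)).nonneg

lemma rtr_tpow (n : ℕ) {σ : Matrix A A ℂ} (h : 0 ≤ σ) : rtr (tpow n σ) = rtr σ ^ n := by
  obtain ⟨U, p, hU, hp, rfl⟩ := exists_spec h.posSemidef
  rw [tpow_spec, rtr_spec (tpow_iso hU n), rtr_spec hU, sum_pn]

/-- A number of messages times a collision probability, compared by exponents. -/
lemma rate_bound {x y D a r : ℝ} {n : ℕ} (h : x ≤ (2:ℝ) ^ ((n:ℝ) * a)) (hy : y = (2:ℝ) ^ ((n:ℝ) * D))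
    (hr : a + D ≤ -r) : x * y ≤ (2:ℝ) ^ (-((n:ℝ) * r)) := by
  subst hy
  refine (mul_le_mul_of_nonneg_right h (Real.rpow_nonneg (by norm_num) _)).trans ?_
  rw [← Real.rpow_add (by norm_num)]
  refine Real.rpow_le_rpow_of_exponent_le (by norm_num) ?_
  have : (0:ℝ) ≤ n := Nat.cast_nonneg n
  nlinarith

/-- The error terms of the one-shot code, with all quantities replaced by their asymptotics. Each of
the three collision terms has exponent at most `-n δ / 2`: the rate conditions leave a margin of `δ`,
of which the typicality tolerances `δ / 8` use at most half for the first two; the third has a margin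
of `2δ`. The constants `4464 = 8 · 558`, `64` and `160` make the parts add up to at most `β / 2`. -/
lemma error_budget {n : ℕ} {M J R₁ R₂ δ HA HB HT HAC HBC HC β : ℝ} (hδ : 0 < δ)
    (hJ : 0 ≤ J) (h1 : R₁ ≤ HA + HBC - HT) (h2 : R₂ ≤ HB + HAC - HT)
    (h12 : R₁ + R₂ ≤ HA + HB + HC - HT)
    (hMb : M ≤ (2:ℝ) ^ ((n:ℝ) * (R₁ - δ))) (hJb : J ≤ (2:ℝ) ^ ((n:ℝ) * (R₂ - δ)))
    (hlim : ((n:ℝ) + 1) ^ 2 * (2:ℝ) ^ (-((n:ℝ) * (δ / 2))) < β / 160) :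
    558 * (β / 4464) + 8 * (β / 64) + 8 * (2 * M * (((2:ℝ) ^ ((n:ℝ) * (HA - 2 * (δ / 8))))⁻¹ *
      (2:ℝ) ^ (-((n:ℝ) * (HBC - δ / 8))) * (2:ℝ) ^ ((n:ℝ) * (HT + δ / 8))) +
      J * ((n:ℝ) + 1) ^ 2 * (((2:ℝ) ^ ((n:ℝ) * (HB - 2 * (δ / 8))))⁻¹ *
      (2:ℝ) ^ ((n:ℝ) * (HT + δ / 8)) * (2:ℝ) ^ (-((n:ℝ) * (HAC - δ / 8)))) +
      2 * M * (J * ((n:ℝ) + 1) ^ 2) * (((2:ℝ) ^ ((n:ℝ) * (HB - 2 * (δ / 8))))⁻¹ *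
      (2:ℝ) ^ ((n:ℝ) * (HT + δ / 8)) * (((2:ℝ) ^ ((n:ℝ) * (HA - 2 * (δ / 8))))⁻¹ *
      (2:ℝ) ^ (-((n:ℝ) * (HC - δ / 8)))))) ≤ β / 2 := by
  have pos : ∀ x : ℝ, (0:ℝ) ≤ (2:ℝ) ^ x := fun x => Real.rpow_nonneg (by norm_num) x
  have k1 := rate_bound hMb (y := ((2:ℝ) ^ ((n:ℝ) * (HA - 2 * (δ / 8))))⁻¹ *
      (2:ℝ) ^ (-((n:ℝ) * (HBC - δ / 8))) * (2:ℝ) ^ ((n:ℝ) * (HT + δ / 8))) (r := δ / 2)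
    (D := -(HA - 2 * (δ / 8)) - (HBC - δ / 8) + (HT + δ / 8))
    (by rw [← Real.rpow_neg (by norm_num), ← Real.rpow_add (by norm_num),
          ← Real.rpow_add (by norm_num)]; congr 1; ring)
    (by linarith)
  have k2 := rate_bound hJb (y := ((2:ℝ) ^ ((n:ℝ) * (HB - 2 * (δ / 8))))⁻¹ *
      (2:ℝ) ^ ((n:ℝ) * (HT + δ / 8)) * (2:ℝ) ^ (-((n:ℝ) * (HAC - δ / 8)))) (r := δ / 2)
    (D := -(HB - 2 * (δ / 8)) - (HAC - δ / 8) + (HT + δ / 8))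
    (by rw [← Real.rpow_neg (by norm_num), ← Real.rpow_add (by norm_num),
          ← Real.rpow_add (by norm_num)]; congr 1; ring)
    (by linarith)
  have hMJ : M * J ≤ (2:ℝ) ^ ((n:ℝ) * (R₁ - δ + (R₂ - δ))) := by
    refine (mul_le_mul hMb hJb hJ (pos _)).trans (le_of_eq ?_)
    rw [← Real.rpow_add (by norm_num)]; congr 1; ring
  have k3 := rate_bound hMJ (y := ((2:ℝ) ^ ((n:ℝ) * (HB - 2 * (δ / 8))))⁻¹ *
      (2:ℝ) ^ ((n:ℝ) * (HT + δ / 8)) * (((2:ℝ) ^ ((n:ℝ) * (HA - 2 * (δ / 8))))⁻¹ *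
      (2:ℝ) ^ (-((n:ℝ) * (HC - δ / 8))))) (r := δ / 2)
    (D := -(HB - 2 * (δ / 8)) - (HC - δ / 8) + (HT + δ / 8) - (HA - 2 * (δ / 8)))
    (by rw [← Real.rpow_neg (by norm_num), ← Real.rpow_neg (by norm_num),
          ← Real.rpow_add (by norm_num), ← Real.rpow_add (by norm_num),
          ← Real.rpow_add (by norm_num)]; congr 1; ring)
    (by linarith)
  have hx0 := pos (-((n:ℝ) * (δ / 2)))
  have hL : (1:ℝ) ≤ ((n:ℝ) + 1) ^ 2 := by
    have : (0:ℝ) ≤ n := Nat.cast_nonneg n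
    nlinarith
  generalize ((n:ℝ) + 1) ^ 2 = L at *
  generalize (2:ℝ) ^ (-((n:ℝ) * (δ / 2))) = x at *
  generalize ((2:ℝ) ^ ((n:ℝ) * (HB - 2 * (δ / 8))))⁻¹ *
      (2:ℝ) ^ ((n:ℝ) * (HT + δ / 8)) * (((2:ℝ) ^ ((n:ℝ) * (HA - 2 * (δ / 8))))⁻¹ *
      (2:ℝ) ^ (-((n:ℝ) * (HC - δ / 8)))) = y₃ at *
  generalize ((2:ℝ) ^ ((n:ℝ) * (HB - 2 * (δ / 8))))⁻¹ *
      (2:ℝ) ^ ((n:ℝ) * (HT + δ / 8)) * (2:ℝ) ^ (-((n:ℝ) * (HAC - δ / 8))) = y₂ at *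
  generalize ((2:ℝ) ^ ((n:ℝ) * (HA - 2 * (δ / 8))))⁻¹ *
      (2:ℝ) ^ (-((n:ℝ) * (HBC - δ / 8))) * (2:ℝ) ^ ((n:ℝ) * (HT + δ / 8)) = y₁ at *
  have hL0 : 0 ≤ L := by linarith
  have j1 := k1.trans (le_mul_of_one_le_left hx0 hL)
  have j2 := mul_le_mul_of_nonneg_left k2 hL0
  have j3 := mul_le_mul_of_nonneg_left k3 hL0
  have e : 8 * (2 * M * y₁ + J * L * y₂ + 2 * M * (J * L) * y₃) =
    8 * (2 * (M * y₁) + L * (J * y₂) + 2 * (L * (M * J * y₃))) := by ring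
  rw [e]
  linarith

/-- Coding for i.i.d. tripartite states, in which the senders act on `A` and `B` by signed
permutations of the eigenbases of the marginals. The typicality lemmas supply the projections of
`tripartite_code`, and the randomization of the second sender uses `L = (n + 1)²` words: polynomial,
so that it costs no rate, but larger than the `log (M J) = O(n)` needed for the union bound in
`binning`. -/
lemma asymptotic {τ : Matrix ((A × C) × B) ((A × C) × B) ℂ} (hτ : 0 ≤ τ) (hτ1 : rtr τ = 1)
    {F : Matrix A A ℂ} {p : A → ℝ} (hF : Fᴴ * F = 1) (hp : ∀ x, 0 ≤ p x)
    (hFp : marg ((eA : (A × C) × B ≃ _).trans (Equiv.prodComm _ _)) τ = spec F p)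
    {G : Matrix B B ℂ} {q : B → ℝ} (hG : Gᴴ * G = 1) (hq : ∀ x, 0 ≤ q x)
    (hGq : marg ((eB : (A × C) × B ≃ _).trans (Equiv.prodComm _ _)) τ = spec G q)
    {R₁ R₂ ε δ : ℝ} (hε : 0 < ε) (hδ : 0 < δ)
    (h1 : R₁ ≤ ent p + vnEntropy (marg (eA : (A × C) × B ≃ _) τ) - vnEntropy τ)
    (h2 : R₂ ≤ ent q + vnEntropy (marg (eB : (A × C) × B ≃ _) τ) - vnEntropy τ)
    (h12 : R₁ + R₂ ≤ ent p + ent q +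
      vnEntropy (marg (Equiv.refl _) (marg (eB : (A × C) × B ≃ _) τ)) - vnEntropy τ) :
    ∀ᶠ n : ℕ in Filter.atTop, ∀ M J : ℕ, 0 < M → 0 < J → (M : ℝ) ≤ (2:ℝ) ^ ((n:ℝ) * (R₁ - δ)) →
      (J : ℝ) ≤ (2:ℝ) ^ ((n:ℝ) * (R₂ - δ)) →
      ∃ (L : ℕ) (_ : 0 < L) (c : Fin M → SPerm (pn p n)) (d : Fin J → Fin L → SPerm (pn q n))
        (Λ : Fin M → Fin J → Matrix (((Fin n → A) × (Fin n → C)) × (Fin n → B))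
          (((Fin n → A) × (Fin n → C)) × (Fin n → B)) ℂ),
        (∀ k j, 0 ≤ Λ k j) ∧ (∑ k, ∑ j, Λ k j ≤ 1) ∧
        ∀ k j, L * (1 - ε) ≤ ∑ s, rtr (Λ k j *
          ((lft eA (tpow n F * sgnPerm (c k) * (tpow n F)ᴴ) *
            lft eB (tpow n G * sgnPerm (d j s) * (tpow n G)ᴴ)) * tri n τ *
          (lft eA (tpow n F * sgnPerm (c k) * (tpow n F)ᴴ) *
            lft eB (tpow n G * sgnPerm (d j s) * (tpow n G)ᴴ))ᴴ)) := by
  set β : ℝ := ε / 3 with hβ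
  have hβ0 : 0 < β := by positivity
  set d : ℝ := δ / 8 with hd
  have hd0 : 0 < d := by positivity
  set e₀ : ℝ := β / 4464 with he
  have he0 : 0 < e₀ := by positivity
  have hp1 : ∑ x, p x = 1 := by rw [← rtr_spec hF, ← hFp, rtr_marg, hτ1]
  have hq1 : ∑ x, q x = 1 := by rw [← rtr_spec hG, ← hGq, rtr_marg, hτ1]
  have tA := twirl_typ hF hp hp1 hd0 he0
  have tB := twirl_typ hG hq hq1 hd0 he0
  have tBC := exists_typ_hi (marg_nonneg (eA : (A × C) × B ≃ _) hτ) (by rw [rtr_marg, hτ1]) hd0 he0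
  have tAC := exists_typ_hi (marg_nonneg (eB : (A × C) × B ≃ _) hτ) (by rw [rtr_marg, hτ1]) hd0 he0
  have tC := exists_typ_hi (marg_nonneg (Equiv.refl _) (marg_nonneg (eB : (A × C) × B ≃ _) hτ))
    (by rw [rtr_marg, rtr_marg, hτ1]) hd0 he0
  have tP := exists_typ_lo hτ hτ1 hd0 he0
  have hlim := (tendsto_poly_exp 2 (d := δ / 2) (by positivity)).eventually
    (gt_mem_nhds (show (0:ℝ) < β / 160 by positivity))
  have hbig := (tendsto_natCast_atTop_atTop (R := ℝ)).eventually_ge_atTop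
    ((R₁ + R₂) * Real.log 2 / β)
  filter_upwards [tA, tB, tBC, tAC, tC, tP, hlim, hbig] with n tA tB tBC tAC tC tP hlim hbig
    M J hM hJ hMb hJb
  obtain ⟨QA, pA, eQA, twA⟩ := tA
  obtain ⟨QB, pB, eQB, twB⟩ := tB
  obtain ⟨QBC, pBC, eQBC, bBC, -⟩ := tBC (zip2 C B n)
  obtain ⟨QAC, pAC, eQAC, bAC, bAC'⟩ := tAC (zip2 A C n)
  obtain ⟨QC, pC, eQC, bC, -⟩ := tC (Equiv.refl _)
  obtain ⟨P, pP, eP, bP⟩ := tP (zip3 A C B n)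
  -- the marginals of the tensor power are the tensor powers of the marginals
  have mBC : marg eA (tri n τ) = (tpow n (marg eA τ)).submatrix (zip2 C B n) (zip2 C B n) :=
    marg_tpow eA τ eA _ (Equiv.refl _) _ fun k r i => rfl
  have mAC : marg eB (tri n τ) = (tpow n (marg eB τ)).submatrix (zip2 A C n) (zip2 A C n) :=
    marg_tpow eB τ eB _ (Equiv.refl _) _ fun k r i => rfl
  have mC : marg (Equiv.refl _) (marg eB (tri n τ)) =
      (tpow n (marg (Equiv.refl _) (marg eB τ))).submatrix (Equiv.refl _) (Equiv.refl _) := by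
    rw [mAC]
    exact marg_tpow (Equiv.refl _) _ (Equiv.refl _) _ (Equiv.refl _) _ fun k r i => rfl
  have mA : marg (eA.trans (Equiv.prodComm _ _)) (tri n τ) = tpow n (spec F p) := by
    rw [← hFp]
    exact marg_tpow _ τ _ _ (zip2 C B n) (Equiv.refl _) fun k r i => rfl
  have mB : marg (eB.trans (Equiv.prodComm _ _)) (tri n τ) = tpow n (spec G q) := by
    rw [← hGq]
    exact marg_tpow _ τ _ _ (zip2 A C n) (Equiv.refl _) fun k r i => rfl
  have pos : ∀ x : ℝ, (0:ℝ) ≤ (2:ℝ) ^ x := fun x => Real.rpow_nonneg (by norm_num) x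
  have hM1 : (1:ℝ) ≤ M := by exact_mod_cast hM
  have hJ1 : (1:ℝ) ≤ J := by exact_mod_cast hJ
  have key := tripartite_code (U := fun g : SPerm (pn p n) => tpow n F * sgnPerm g * (tpow n F)ᴴ)
    (V := fun g : SPerm (pn q n) => tpow n G * sgnPerm g * (tpow n G)ᴴ)
    (sgn_conj_iso (tpow_iso hF n)) (sgn_conj_iso (tpow_iso hG n))
    pA pB pC pAC pBC pP (Θ := tri n τ) (submatrix_nonneg (tpow_nonneg n hτ) _)
    (by rw [tri, rtr_submatrix, rtr_tpow n hτ, hτ1, one_pow])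
    (δA := ((2:ℝ) ^ ((n:ℝ) * (ent p - 2 * d)))⁻¹) (δB := ((2:ℝ) ^ ((n:ℝ) * (ent q - 2 * d)))⁻¹)
    (ε₀ := e₀) (β := β) (η := β / 64)
    (inv_nonneg.mpr (pos _)) (inv_nonneg.mpr (pos _)) (pos _) (pos _) (pos _) (pos _)
    twA twB bP (by rw [mBC]; exact bBC) (by rw [mAC]; exact bAC) (by rw [mAC]; exact bAC')
    (by rw [mC]; exact bC) eP (by rw [err_lft, mA]; exact eQA) (by rw [err_lft, mB]; exact eQB)
    (by rw [err_rgt, mAC]; exact eQAC) (by rw [err_rgt, mBC]; exact eQBC)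
    (by rw [err_rgt, err_rgt, mC]; exact eQC)
    M J ((n + 1) ^ 2) hJ hM hβ0 (by positivity) ?_ ?_
  · obtain ⟨c, dd, Λ, a1, a2, a3⟩ := key
    refine ⟨(n + 1) ^ 2, by positivity, c, dd, Λ, a1, a2, fun k j => ?_⟩
    have := a3 k j
    rwa [show (1 - 3 * β) = 1 - ε by rw [hβ]; ring] at this
  · have hMJ : (M * J : ℝ) ≤ (2:ℝ) ^ ((n:ℝ) * (R₁ + R₂)) := by
      refine (mul_le_mul hMb hJb (by positivity) (pos _)).trans ?_
      rw [← Real.rpow_add (by norm_num)]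
      refine Real.rpow_le_rpow_of_exponent_le (by norm_num) ?_
      have : (0:ℝ) ≤ n := Nat.cast_nonneg n
      nlinarith
    have h := Real.log_le_log (by positivity) hMJ
    rw [Real.log_rpow (by norm_num)] at h
    rw [div_le_iff₀ hβ0] at hbig
    push_cast
    have hn : (0:ℝ) ≤ n := Nat.cast_nonneg n
    nlinarith [mul_le_mul_of_nonneg_left hbig hn]
  · push_cast
    exact error_budget hδ (by linarith) h1 h2 h12 hMb hJb hlim

end Asymptotic

/-! ### Purifications and the channel output -/

section Final
open scoped MatrixOrder

variable {A B C I P : Type} [Fintype A] [DecidableEq A] [Fintype B] [DecidableEq B]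
  [Fintype C] [DecidableEq C] [Fintype I] [DecidableEq I] [Fintype P] [DecidableEq P]

/-- Conjugating a rank-one operator applies the matrix to its vector. -/
lemma conj_proj (X : Matrix C I ℂ) (v : I → ℂ) : X * proj v * Xᴴ = proj (X *ᵥ v) := by
  have h : ∀ {κ : Type} (w : κ → ℂ), proj w = vecMulVec w (star w) := fun w => rfl
  rw [h, h, mul_vecMulVec, vecMulVec_mul, star_mulVec]

lemma proj_vec_nonneg (v : I → ℂ) : 0 ≤ proj v :=
  (posSemidef_vecMulVec_self_star v).nonneg

lemma proj_smul (c : ℂ) (v : I → ℂ) : proj (c • v) = (c * star c) • proj v := by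
  ext i j; simp [proj]; ring

/-- The vector on `(A × C) × B` encoded by a matrix from `C` to `A × B`. -/
def vect (N : Matrix (A × B) C ℂ) : (A × C) × B → ℂ := fun x => N (x.1.1, x.2) x.1.2

lemma lft_mulVec_vect (U : Matrix A A ℂ) (V : Matrix B B ℂ) (N : Matrix (A × B) C ℂ) :
    (lft eA U * lft eB V) *ᵥ vect N = vect ((U ⊗ₖ V) * N) := by
  rw [← Matrix.mulVec_mulVec]
  ext ⟨⟨a, c⟩, b⟩
  simp only [mulVec, dotProduct, lft, vect, submatrix_apply, kroneckerMap_apply, Matrix.mul_apply,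
    Fintype.sum_prod_type, Matrix.one_apply]
  simp only [Equiv.prodAssoc_apply, Equiv.prodComm_apply, Prod.swap_prod_mk, Prod.mk.injEq,
    mul_ite, mul_one, mul_zero, ite_mul, zero_mul, Finset.sum_ite_eq, Finset.mem_univ, if_true,
    ite_and, Finset.sum_ite_irrel, Finset.sum_const_zero, Finset.mul_sum, mul_assoc]

/-- The output vector of a Kraus operator `K` after an encoding `E`, written through the matrix of
`Ψ`, whose rows are indexed by the purifying system: operators on the input act on its columns. -/
lemma channel_out (K : Matrix C I ℂ) (E : Matrix I I ℂ) (Ψ : I × P → ℂ) :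
    (K ⊗ₖ (1 : Matrix P P ℂ)) * ((E ⊗ₖ (1 : Matrix P P ℂ)) * proj Ψ * (E ⊗ₖ (1 : Matrix P P ℂ))ᴴ) *
      (K ⊗ₖ (1 : Matrix P P ℂ))ᴴ =
      proj (fun x : C × P => ((Matrix.of fun p i => Ψ (i, p)) * Eᵀ * Kᵀ) x.2 x.1) := by
  rw [conj_proj, conj_proj, Matrix.mulVec_mulVec, ← mul_kronecker_mul, Matrix.one_mul,
    Matrix.mul_assoc, ← transpose_mul]
  congr 1
  ext ⟨c, p⟩
  simp only [mulVec, dotProduct, kroneckerMap_apply, Fintype.sum_prod_type, Matrix.one_apply,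
    mul_ite, mul_one, mul_zero, ite_mul, zero_mul, Finset.sum_ite_eq, Finset.mem_univ, if_true]
  rw [Matrix.mul_apply]
  simp [mul_comm]

/-- The contribution of one Kraus operator to the output state, as a rank-one operator. -/
lemma theta_eq (K : Matrix C I ℂ) (ψ : P × I → ℂ) :
    ((1 : Matrix P P ℂ) ⊗ₖ K) * proj ψ * ((1 : Matrix P P ℂ) ⊗ₖ K)ᴴ =
      proj (fun x : P × C => ((Matrix.of fun p i => ψ (p, i)) * Kᵀ) x.1 x.2) := by
  rw [conj_proj]
  congr 1
  ext ⟨p, c⟩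
  simp only [mulVec, dotProduct, kroneckerMap_apply, Fintype.sum_prod_type, Matrix.one_apply,
    one_mul, ite_mul, zero_mul, Finset.sum_ite_irrel, Finset.sum_const_zero, Finset.sum_ite_eq,
    Finset.mem_univ, if_true]
  rw [Matrix.mul_apply]
  simp [mul_comm]

/-- Reordering of the systems from `C, (A, B)` to `(A, C), B`. -/
def ordC (A B C : Type) : C × (A × B) ≃ (A × C) × B where
  toFun x := ((x.2.1, x.1), x.2.2)
  invFun y := (y.1.2, (y.1.1, y.2))
  left_inv _ := rfl
  right_inv _ := rfl

/-- Reordering of the systems from `(A, C), B` to `(A, B), C`. -/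
def ordT (A B C : Type) : (A × C) × B ≃ (A × B) × C where
  toFun x := ((x.1.1, x.2), x.1.2)
  invFun y := ((y.1.1, y.2), y.1.2)
  left_inv _ := rfl
  right_inv _ := rfl

/-- The tensor power of a mixture of vector states is the mixture of the product vectors. -/
lemma tri_sum_proj {J : Type} [Fintype J] [DecidableEq J] (n : ℕ) (N : J → Matrix (A × B) C ℂ) :
    tri n (∑ j, proj (vect (N j))) = ∑ j : Fin n → J,
      proj (vect (Matrix.of fun (ab : (Fin n → A) × (Fin n → B)) (c : Fin n → C) =>
        ∏ i, N (j i) (ab.1 i, ab.2 i) (c i))) := by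
  ext x y
  simp only [tri, tpow, submatrix_apply, of_apply, Matrix.sum_apply, proj, vect, Fintype.prod_sum,
    Finset.prod_mul_distrib, star_prod]
  rfl

lemma marg_C_refl (τ : Matrix ((A × C) × B) ((A × C) × B) ℂ) (c c' : C) :
    marg (Equiv.refl _) (marg (eB : (A × C) × B ≃ _) τ) c c' =
      ∑ ab : A × B, τ ((ab.1, c), ab.2) ((ab.1, c'), ab.2) := by
  rw [Fintype.sum_prod_type]; rfl

/-- A trace-preserving channel leaves the purifying marginal `N * Nᴴ` unchanged. -/
lemma sum_kraus_out {J : Type} [Fintype J] {K : J → Matrix C I ℂ}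
    (hK : ∑ j, (K j)ᴴ * K j = 1) (N : Matrix P I ℂ) :
    ∑ j, (N * (K j)ᵀ) * (N * (K j)ᵀ)ᴴ = N * Nᴴ := by
  have h : ∀ j, (N * (K j)ᵀ) * (N * (K j)ᵀ)ᴴ = N * ((K j)ᴴ * K j)ᵀ * Nᴴ := by
    intro j
    rw [conjTranspose_mul, transpose_mul]
    simp only [Matrix.mul_assoc]
    rfl
  simp only [h]
  rw [← Matrix.sum_mul, ← Matrix.mul_sum, ← transpose_sum, hK, transpose_one, Matrix.mul_one]

lemma trace_mul_star_self (φ : A × A → ℂ) (h : ∑ x, Complex.normSq (φ x) = 1) :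
    ((Matrix.of fun a a' => φ (a, a')) * (Matrix.of fun a a' => φ (a, a'))ᴴ : Matrix A A ℂ).trace = 1 := by
  simp only [trace, diag_apply, Matrix.mul_apply, conjTranspose_apply, of_apply, Complex.star_def,
    Complex.mul_conj]
  rw [← Fintype.sum_prod_type (f := fun x => ((Complex.normSq (φ x) : ℝ) : ℂ)), ← Complex.ofReal_sum, h]
  simp

/-- A Kraus operator of the tensor-power channel, applied to the tensor power of the purifications, is
the product of the single-letter outputs. -/
lemma tensor_kraus {J : Type} (n : ℕ) (M₁ : Matrix A A ℂ) (M₂ : Matrix B B ℂ)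
    (K : J → Matrix C (A × B) ℂ) (j : Fin n → J) :
    (tpow n M₁ ⊗ₖ tpow n M₂) * (Matrix.of fun (c : Fin n → C) (xy : (Fin n → A) × (Fin n → B)) =>
      ∏ i, K (j i) (c i) (xy.1 i, xy.2 i))ᵀ =
    Matrix.of fun (ab : (Fin n → A) × (Fin n → B)) (c : Fin n → C) =>
      ∏ i, ((M₁ ⊗ₖ M₂) * (K (j i))ᵀ) (ab.1 i, ab.2 i) (c i) := by
  ext ab c
  rw [of_apply]
  simp only [Matrix.mul_apply, Fintype.prod_sum, kroneckerMap_apply, transpose_apply, of_apply, tpow]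
  rw [← Equiv.sum_comp (zip2 A B n)]
  refine Finset.sum_congr rfl fun xy _ => ?_
  rw [← Finset.prod_mul_distrib, ← Finset.prod_mul_distrib]
  rfl

/-- Success probability of one message pair: the transpose trick moves the encoders, with the
normalization `r`, from the channel inputs to the purifying systems. -/
lemma output_state
    (Mm : Matrix (A × B) (A × B) ℂ) (K : Matrix C (A × B) ℂ) {X U : Matrix A A ℂ}
    {Y V : Matrix B B ℂ} (r : ℂ) (Ψ : (A × B) × (A × B) → ℂ)
    (hΨ : (Matrix.of fun p i => Ψ (i, p)) = Mm)
    (h : (U ⊗ₖ V) * Mm = Mm * (Xᵀ ⊗ₖ Yᵀ)) :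
    (K ⊗ₖ (1 : Matrix (A × B) (A × B) ℂ)) *
      (((X ⊗ₖ (r • Y)) ⊗ₖ (1 : Matrix (A × B) (A × B) ℂ)) * proj Ψ *
        ((X ⊗ₖ (r • Y)) ⊗ₖ (1 : Matrix (A × B) (A × B) ℂ))ᴴ) *
      (K ⊗ₖ (1 : Matrix (A × B) (A × B) ℂ))ᴴ =
      (r * star r) • ((lft eA U * lft eB V) * proj (vect (Mm * Kᵀ)) *
        (lft eA U * lft eB V)ᴴ).submatrix (ordC A B C) (ordC A B C) := by
  rw [channel_out, hΨ, conj_proj, lft_mulVec_vect, ← Matrix.mul_assoc, h, kronecker_smul,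
    transpose_smul, show (X ⊗ₖ Y)ᵀ = Xᵀ ⊗ₖ Yᵀ from rfl, Matrix.mul_smul, Matrix.smul_mul]
  exact proj_smul r _

end Final

/-! ### The coding theorem -/

open scoped MatrixOrder

/-- **Direct coding theorem for the entanglement-assisted quantum multiple access
channel.**  `K` is a Kraus family for the QMAC `M : ℂ^{dA} ⊗ ℂ^{dB} → ℂ^{dC}`;
`φ₁, φ₂` purify the input states `ρ₁, ρ₂` (first factor purifying, second factor the
channel input) and `θ^{ABC} = (id_{AB} ⊗ M)(|φ₁⟩⟨φ₁| ⊗ |φ₂⟩⟨φ₂|)`.  Any rate pair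
`(R₁, R₂)` satisfying `R₁ ≤ I(A;C|B)`, `R₂ ≤ I(B;C|A)`, `R₁+R₂ ≤ I(AB;C)` is
achievable: for all `ε, δ > 0` and large `n` there are CPTP encoders (given by Kraus
families) for `⌊2^{n(R₁−δ)}⌋` resp. `⌊2^{n(R₂−δ)}⌋` messages and a decoding sub-POVM
identifying each message pair with probability `≥ 1 − ε`. -/
theorem qmac_ea_direct_coding
    {dA dB dC μ : ℕ}
    (K : Fin μ → Matrix (Fin dC) (Fin dA × Fin dB) ℂ)
    (hK : ∑ j, (K j)ᴴ * K j = 1)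
    (ρ₁ : Matrix (Fin dA) (Fin dA) ℂ) (hρ₁ : ρ₁.PosSemidef) (hρ₁tr : ρ₁.trace = 1)
    (ρ₂ : Matrix (Fin dB) (Fin dB) ℂ) (hρ₂ : ρ₂.PosSemidef) (hρ₂tr : ρ₂.trace = 1)
    (φ₁ : Fin dA × Fin dA → ℂ) (hφ₁unit : ∑ x, Complex.normSq (φ₁ x) = 1)
    (hφ₁pur : ptraceLeft (proj φ₁) = ρ₁)
    (φ₂ : Fin dB × Fin dB → ℂ) (hφ₂unit : ∑ x, Complex.normSq (φ₂ x) = 1)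
    (hφ₂pur : ptraceLeft (proj φ₂) = ρ₂)
    (R₁ R₂ : ℝ) (hR₁0 : 0 ≤ R₁) (hR₂0 : 0 ≤ R₂) :
    -- |φ₁⟩ ⊗ |φ₂⟩ arranged as (A × B) × (A' × B'), purifying factors first
    let ψ : (Fin dA × Fin dB) × (Fin dA × Fin dB) → ℂ :=
      fun q => φ₁ (q.1.1, q.2.1) * φ₂ (q.1.2, q.2.2)
    -- θ^{ABC} = (id_{AB} ⊗ M)(|ψ⟩⟨ψ|), on (A × B) × C
    let θ : Matrix ((Fin dA × Fin dB) × Fin dC) ((Fin dA × Fin dB) × Fin dC) ℂ :=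
      ∑ j, ((1 : Matrix (Fin dA × Fin dB) (Fin dA × Fin dB) ℂ) ⊗ₖ K j) * proj ψ *
        ((1 : Matrix (Fin dA × Fin dB) (Fin dA × Fin dB) ℂ) ⊗ₖ K j)ᴴ
    let θA : Matrix (Fin dA) (Fin dA) ℂ :=
      Matrix.of fun a a' => ∑ b, ∑ c, θ ((a, b), c) ((a', b), c)
    let θB : Matrix (Fin dB) (Fin dB) ℂ :=
      Matrix.of fun b b' => ∑ a, ∑ c, θ ((a, b), c) ((a, b'), c)
    let θC : Matrix (Fin dC) (Fin dC) ℂ :=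
      Matrix.of fun c c' => ∑ ab, θ (ab, c) (ab, c')
    let θAB : Matrix (Fin dA × Fin dB) (Fin dA × Fin dB) ℂ :=
      Matrix.of fun q q' => ∑ c, θ (q, c) (q', c)
    let θAC : Matrix (Fin dA × Fin dC) (Fin dA × Fin dC) ℂ :=
      Matrix.of fun q q' => ∑ b, θ ((q.1, b), q.2) ((q'.1, b), q'.2)
    let θBC : Matrix (Fin dB × Fin dC) (Fin dB × Fin dC) ℂ :=
      Matrix.of fun q q' => ∑ a, θ ((a, q.1), q.2) ((a, q'.1), q'.2)
    R₁ ≤ vnEntropy θAB + vnEntropy θBC - vnEntropy θ - vnEntropy θB →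
    R₂ ≤ vnEntropy θAB + vnEntropy θAC - vnEntropy θ - vnEntropy θA →
    R₁ + R₂ ≤ vnEntropy θAB + vnEntropy θC - vnEntropy θ →
    ∀ ε > (0 : ℝ), ∀ δ > (0 : ℝ), ∃ n₀ : ℕ, ∀ n, n₀ ≤ n →
    -- |φ₁⟩^{⊗n} ⊗ |φ₂⟩^{⊗n}, arranged as (channel inputs A'^n × B'^n) × (purifiers A^n × B^n)
    let Ψ : ((Fin n → Fin dA) × (Fin n → Fin dB)) ×
        ((Fin n → Fin dA) × (Fin n → Fin dB)) → ℂ :=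
      fun q => (∏ i, φ₁ (q.2.1 i, q.1.1 i)) * ∏ i, φ₂ (q.2.2 i, q.1.2 i)
    -- Kraus operators of M^{⊗n}
    let Kn : (Fin n → Fin μ) →
        Matrix (Fin n → Fin dC) ((Fin n → Fin dA) × (Fin n → Fin dB)) ℂ :=
      fun j => Matrix.of fun c xy => ∏ i, K (j i) (c i) (xy.1 i, xy.2 i)
    ∃ (T₁ T₂ : ℕ)
      (F₁ : Fin (Nat.floor ((2 : ℝ) ^ ((n : ℝ) * (R₁ - δ)))) → Fin T₁ →
        Matrix (Fin n → Fin dA) (Fin n → Fin dA) ℂ)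
      (F₂ : Fin (Nat.floor ((2 : ℝ) ^ ((n : ℝ) * (R₂ - δ)))) → Fin T₂ →
        Matrix (Fin n → Fin dB) (Fin n → Fin dB) ℂ)
      (Λ : Fin (Nat.floor ((2 : ℝ) ^ ((n : ℝ) * (R₁ - δ)))) →
        Fin (Nat.floor ((2 : ℝ) ^ ((n : ℝ) * (R₂ - δ)))) →
        Matrix ((Fin n → Fin dC) × ((Fin n → Fin dA) × (Fin n → Fin dB)))
          ((Fin n → Fin dC) × ((Fin n → Fin dA) × (Fin n → Fin dB))) ℂ),
      (∀ k, ∑ t, (F₁ k t)ᴴ * F₁ k t = 1) ∧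
      (∀ l, ∑ t, (F₂ l t)ᴴ * F₂ l t = 1) ∧
      (∀ k l, (Λ k l).PosSemidef) ∧
      ((1 : Matrix ((Fin n → Fin dC) × ((Fin n → Fin dA) × (Fin n → Fin dB)))
          ((Fin n → Fin dC) × ((Fin n → Fin dA) × (Fin n → Fin dB))) ℂ)
        - ∑ k, ∑ l, Λ k l).PosSemidef ∧
      ∀ k l, 1 - ε ≤
        ((Λ k l * (∑ j : Fin n → Fin μ, ∑ t, ∑ s,
          (Kn j ⊗ₖ (1 : Matrix ((Fin n → Fin dA) × (Fin n → Fin dB))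
              ((Fin n → Fin dA) × (Fin n → Fin dB)) ℂ)) *
            (((F₁ k t ⊗ₖ F₂ l s) ⊗ₖ (1 : Matrix ((Fin n → Fin dA) × (Fin n → Fin dB))
                ((Fin n → Fin dA) × (Fin n → Fin dB)) ℂ)) * proj Ψ *
              ((F₁ k t ⊗ₖ F₂ l s) ⊗ₖ (1 : Matrix ((Fin n → Fin dA) × (Fin n → Fin dB))
                ((Fin n → Fin dA) × (Fin n → Fin dB)) ℂ))ᴴ) *
            (Kn j ⊗ₖ (1 : Matrix ((Fin n → Fin dA) × (Fin n → Fin dB))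
              ((Fin n → Fin dA) × (Fin n → Fin dB)) ℂ))ᴴ)).trace).re := by
  intro ψ θ θA θB θC θAB θAC θBC hI1 hI2 hI12 ε hε δ hδ
  -- singular value decompositions of the two purifications
  set M₁ : Matrix (Fin dA) (Fin dA) ℂ := Matrix.of fun a a' => φ₁ (a, a') with hM₁
  set M₂ : Matrix (Fin dB) (Fin dB) ℂ := Matrix.of fun b b' => φ₂ (b, b') with hM₂
  obtain ⟨F, W, p, hF, hW, hp, hFp, hFM⟩ := exists_svd M₁
  obtain ⟨G, V, q, hG, hV, hq, hGq, hGM⟩ := exists_svd M₂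
  have tr1 : (spec F p).trace = 1 := by rw [← hFp]; exact trace_mul_star_self φ₁ hφ₁unit
  have tr2 : (spec G q).trace = 1 := by rw [← hGq]; exact trace_mul_star_self φ₂ hφ₂unit
  set N : Fin μ → Matrix (Fin dA × Fin dB) (Fin dC) ℂ := fun j => (M₁ ⊗ₖ M₂) * (K j)ᵀ with hN
  have hθ : θ = ∑ j, proj (fun x : (Fin dA × Fin dB) × Fin dC => N j x.1 x.2) :=
    Finset.sum_congr rfl fun j _ => theta_eq (K j) ψ
  set τ := θ.submatrix (ordT (Fin dA) (Fin dB) (Fin dC)) (ordT (Fin dA) (Fin dB) (Fin dC)) with hτd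
  have hτs : τ = ∑ j, proj (vect (N j)) := by
    rw [hτd, hθ]; ext x y
    simp only [submatrix_apply, Matrix.sum_apply]; rfl
  have hθ0 : 0 ≤ θ := by
    rw [hθ]; exact Finset.sum_nonneg fun j _ => proj_vec_nonneg _
  have hτ0 : 0 ≤ τ := by
    rw [hτs]; exact Finset.sum_nonneg fun j _ => proj_vec_nonneg _
  -- trace preservation: the purifying systems stay in their initial product state
  have hAB : θAB = spec F p ⊗ₖ spec G q := by
    have h := sum_kraus_out hK (M₁ ⊗ₖ M₂)
    rw [conjTranspose_kronecker, ← mul_kronecker_mul, hFp, hGq] at h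
    rw [← h]
    ext x y
    simp only [θAB, of_apply, hθ, Matrix.sum_apply, proj]
    rw [Finset.sum_comm]
    refine Finset.sum_congr rfl fun j _ => ?_
    rw [Matrix.mul_apply]; rfl
  have hA : θA = spec F p := by
    ext a a'
    have : θA a a' = ∑ b, θAB (a, b) (a', b) := rfl
    rw [this, hAB]
    simp only [kroneckerMap_apply]
    rw [← Finset.mul_sum, show ∑ b, spec G q b b = 1 from tr2, mul_one]
  have hB : θB = spec G q := by
    ext b b'
    have : θB b b' = ∑ a, θAB (a, b) (a, b') := rfl
    rw [this, hAB]
    simp only [kroneckerMap_apply]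
    rw [← Finset.sum_mul, show ∑ a, spec F p a a = 1 from tr1, one_mul]
  have mA : marg ((eA : (Fin dA × Fin dC) × Fin dB ≃ _).trans (Equiv.prodComm _ _)) τ = spec F p := by
    rw [← hA]
    ext a a'
    simp only [marg, ptraceLeft, of_apply, Fintype.sum_prod_type]
    rw [Finset.sum_comm]; rfl
  have mB : marg ((eB : (Fin dA × Fin dC) × Fin dB ≃ _).trans (Equiv.prodComm _ _)) τ = spec G q := by
    rw [← hB]
    ext b b'
    simp only [marg, ptraceLeft, of_apply, Fintype.sum_prod_type]
    rfl
  have hτ1 : rtr τ = 1 := by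
    rw [← rtr_marg ((eA : (Fin dA × Fin dC) × Fin dB ≃ _).trans (Equiv.prodComm _ _)), mA, rtr, tr1]
    simp
  have pF : (spec F p).PosSemidef := by
    rw [← mA]; exact (marg_nonneg _ hτ0).posSemidef
  have pG : (spec G q).PosSemidef := by
    rw [← mB]; exact (marg_nonneg _ hτ0).posSemidef
  have mBC : vnEntropy (marg (eA : (Fin dA × Fin dC) × Fin dB ≃ _) τ) = vnEntropy θBC := by
    have h' : θBC = (marg (eA : (Fin dA × Fin dC) × Fin dB ≃ _) τ).submatrix
      (Equiv.prodComm _ _) (Equiv.prodComm _ _) := rfl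
    rw [h', vnEntropy_reindex (Equiv.prodComm _ _) (marg_nonneg _ hτ0).posSemidef]
  have mAC : marg (eB : (Fin dA × Fin dC) × Fin dB ≃ _) τ = θAC := rfl
  have mC : marg (Equiv.refl _) (marg (eB : (Fin dA × Fin dC) × Fin dB ≃ _) τ) = θC := by
    ext c c'
    rw [marg_C_refl]; rfl
  have mT : vnEntropy τ = vnEntropy θ := vnEntropy_reindex _ hθ0.posSemidef
  have eAB : vnEntropy θAB = ent p + ent q := by
    rw [hAB, vnEntropy_kronecker pF pG tr1 tr2, vnEntropy_spec hF, vnEntropy_spec hG]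
  have eA' : vnEntropy θA = ent p := by rw [hA, vnEntropy_spec hF]
  have eB' : vnEntropy θB = ent q := by rw [hB, vnEntropy_spec hG]
  have main := asymptotic hτ0 hτ1 hF hp mA hG hq mB hε hδ (R₁ := R₁) (R₂ := R₂)
    (by rw [mBC, mT]; linarith) (by rw [mAC, mT]; linarith) (by rw [mC, mT]; linarith)
  obtain ⟨n₀, hn₀⟩ := Filter.eventually_atTop.mp main
  refine ⟨n₀, fun n hn => ?_⟩
  intro Ψ Kn
  -- with no message pair to send, any encoder works
  by_cases hz : Nat.floor ((2 : ℝ) ^ ((n : ℝ) * (R₁ - δ))) = 0 ∨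
      Nat.floor ((2 : ℝ) ^ ((n : ℝ) * (R₂ - δ))) = 0
  · refine ⟨1, 1, fun _ _ => 1, fun _ _ => 1, fun _ _ => 0, by simp, by simp,
      fun _ _ => Matrix.PosSemidef.zero, by simpa using Matrix.PosSemidef.one, fun k l => ?_⟩
    rcases hz with hz | hz
    · exact absurd k.2 (by omega)
    · exact absurd l.2 (by omega)
  push Not at hz
  have fl : ∀ r : ℝ, ((Nat.floor ((2 : ℝ) ^ r) : ℕ) : ℝ) ≤ (2 : ℝ) ^ r := fun r =>
    Nat.floor_le (Real.rpow_nonneg (by norm_num) _)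
  obtain ⟨L, hL, c, d, Λ, hΛ0, hΛ1, hΛ⟩ := hn₀ n hn _ _ (Nat.pos_of_ne_zero hz.1)
    (Nat.pos_of_ne_zero hz.2) (fl _) (fl _)
  choose X hX1 hX2 using fun g : SPerm (pn p n) => exists_transpose_unitary hp hF hW hFM g
  choose Y hY1 hY2 using fun g : SPerm (pn q n) => exists_transpose_unitary hq hG hV hGM g
  have hLpos : (0:ℝ) < L := by exact_mod_cast hL
  -- weight `1 / √L` makes `r • Y (d l s)`, `s < L`, the Kraus operators of a uniform mixture of unitaries
  set r : ℂ := (((Real.sqrt L)⁻¹ : ℝ) : ℂ) with hr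
  have hrr : r * star r = ((L:ℝ)⁻¹ : ℝ) := by
    rw [hr, Complex.star_def, Complex.conj_ofReal, ← Complex.ofReal_mul, ← mul_inv,
      Real.mul_self_sqrt hLpos.le]
  set o := ordC (Fin n → Fin dA) (Fin n → Fin dB) (Fin n → Fin dC) with ho
  have hsum : ((1 : Matrix ((Fin n → Fin dC) × ((Fin n → Fin dA) × (Fin n → Fin dB)))
          ((Fin n → Fin dC) × ((Fin n → Fin dA) × (Fin n → Fin dB))) ℂ)
        - ∑ k, ∑ l, (Λ k l).submatrix o o) = (1 - ∑ k, ∑ l, Λ k l).submatrix o o := by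
    ext x y
    simp [Matrix.sub_apply, Matrix.sum_apply, Matrix.one_apply]
  refine ⟨1, L, fun k _ => X (c k), fun l s => r • Y (d l s), fun k l => (Λ k l).submatrix o o,
    fun k => by simp [hX1], fun l => ?_, fun k l => (submatrix_nonneg (hΛ0 k l) o).posSemidef, ?_,
    fun k l => ?_⟩
  · have : ∀ s, (r • Y (d l s))ᴴ * (r • Y (d l s)) = (r * star r) • (1 : Matrix _ _ ℂ) := by
      intro s
      rw [conjTranspose_smul, Matrix.smul_mul, Matrix.mul_smul, hY1, smul_smul, mul_comm]
    simp only [this, hrr, Finset.sum_const, Finset.card_univ, Fintype.card_fin]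
    rw [← Nat.cast_smul_eq_nsmul ℂ, smul_smul]
    have : ((L:ℕ):ℂ) * (((L:ℝ)⁻¹ : ℝ) : ℂ) = 1 := by
      push_cast
      exact mul_inv_cancel₀ (by exact_mod_cast hL.ne')
    rw [this, one_smul]
  · rw [hsum]
    exact (submatrix_nonneg (sub_nonneg.mpr hΛ1) o).posSemidef
  · set T : Matrix (((Fin n → Fin dA) × (Fin n → Fin dC)) × (Fin n → Fin dB))
        (((Fin n → Fin dA) × (Fin n → Fin dC)) × (Fin n → Fin dB)) ℂ :=
      lft eA (tpow n F * sgnPerm (c k) * (tpow n F)ᴴ) with hT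
    set S : Fin L → Matrix (((Fin n → Fin dA) × (Fin n → Fin dC)) × (Fin n → Fin dB))
        (((Fin n → Fin dA) × (Fin n → Fin dC)) × (Fin n → Fin dB)) ℂ :=
      fun s => lft eB (tpow n G * sgnPerm (d l s) * (tpow n G)ᴴ) with hS
    have hterm : ∀ j s, (Kn j ⊗ₖ (1 : Matrix ((Fin n → Fin dA) × (Fin n → Fin dB))
              ((Fin n → Fin dA) × (Fin n → Fin dB)) ℂ)) *
            (((X (c k) ⊗ₖ (r • Y (d l s))) ⊗ₖ (1 : Matrix ((Fin n → Fin dA) × (Fin n → Fin dB))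
                ((Fin n → Fin dA) × (Fin n → Fin dB)) ℂ)) * proj Ψ *
              ((X (c k) ⊗ₖ (r • Y (d l s))) ⊗ₖ (1 : Matrix ((Fin n → Fin dA) × (Fin n → Fin dB))
                ((Fin n → Fin dA) × (Fin n → Fin dB)) ℂ))ᴴ) *
            (Kn j ⊗ₖ (1 : Matrix ((Fin n → Fin dA) × (Fin n → Fin dB))
              ((Fin n → Fin dA) × (Fin n → Fin dB)) ℂ))ᴴ =
        (r * star r) • ((T * S s) * proj (vect (Matrix.of
          fun (ab : (Fin n → Fin dA) × (Fin n → Fin dB)) (c : Fin n → Fin dC) =>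
            ∏ i, N (j i) (ab.1 i, ab.2 i) (c i))) * (T * S s)ᴴ).submatrix o o := by
      intro j s
      rw [output_state (tpow n M₁ ⊗ₖ tpow n M₂) (Kn j) r Ψ rfl
        (by rw [← mul_kronecker_mul, hX2 (c k), hY2 (d l s), mul_kronecker_mul]),
        tensor_kraus n M₁ M₂ K j]
    -- summing over the Kraus operators of the channel restores the tensor power of the output state
    have hstate : ∀ s, ∑ j : Fin n → Fin μ, (r * star r) • ((T * S s) * proj (vect (Matrix.of
          fun (ab : (Fin n → Fin dA) × (Fin n → Fin dB)) (c : Fin n → Fin dC) =>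
            ∏ i, N (j i) (ab.1 i, ab.2 i) (c i))) * (T * S s)ᴴ).submatrix o o =
        (L:ℝ)⁻¹ • ((T * S s) * tri n τ * (T * S s)ᴴ).submatrix o o := by
      intro s
      rw [hτs, tri_sum_proj, Matrix.mul_sum, Matrix.sum_mul, ← Finset.smul_sum, hrr]
      ext x y
      simp [Matrix.sum_apply, Matrix.smul_apply]
    have hswap : (∑ j : Fin n → Fin μ, ∑ _t : Fin 1, ∑ s,
        (Kn j ⊗ₖ (1 : Matrix ((Fin n → Fin dA) × (Fin n → Fin dB))
              ((Fin n → Fin dA) × (Fin n → Fin dB)) ℂ)) *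
            (((X (c k) ⊗ₖ (r • Y (d l s))) ⊗ₖ (1 : Matrix ((Fin n → Fin dA) × (Fin n → Fin dB))
                ((Fin n → Fin dA) × (Fin n → Fin dB)) ℂ)) * proj Ψ *
              ((X (c k) ⊗ₖ (r • Y (d l s))) ⊗ₖ (1 : Matrix ((Fin n → Fin dA) × (Fin n → Fin dB))
                ((Fin n → Fin dA) × (Fin n → Fin dB)) ℂ))ᴴ) *
            (Kn j ⊗ₖ (1 : Matrix ((Fin n → Fin dA) × (Fin n → Fin dB))
              ((Fin n → Fin dA) × (Fin n → Fin dB)) ℂ))ᴴ) =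
        ∑ s, (L:ℝ)⁻¹ • ((T * S s) * tri n τ * (T * S s)ᴴ).submatrix o o := by
      simp only [← hstate, Fin.sum_univ_one, hterm]
      exact Finset.sum_comm
    have hfin := hΛ k l
    change _ ≤ ((Λ k l).submatrix o o * _).trace.re
    rw [hswap, Matrix.mul_sum]
    change _ ≤ rtr _
    rw [rtr_sum]
    have : ∀ s, rtr ((Λ k l).submatrix o o *
        ((L:ℝ)⁻¹ • ((T * S s) * tri n τ * (T * S s)ᴴ).submatrix o o)) =
        (L:ℝ)⁻¹ * rtr (Λ k l * ((T * S s) * tri n τ * (T * S s)ᴴ)) := by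
      intro s
      rw [Matrix.mul_smul, rtr_smul, submatrix_mul_equiv, rtr_submatrix]
    simp only [this]
    rw [← Finset.mul_sum, inv_mul_eq_div, le_div_iff₀ hLpos, mul_comm]
    exact hfin
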